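/- arXiv:2505.00166 — 2 statements merged into one kernel-verified Lean document; each statement's English description precedes it below -/
import Mathlib

section
/- Let {f_t}_{t∈[0,1]} be a family of germs of C^∞ functions (ℝ^n,0) → (ℝ,0) that is R-bi-Lipschitz trivial, and suppose that for every t ∈ [0,1] the germ f_t has finite order and μ(in(f_t)) < +∞. Then μ(f_t) = μ(f_0) for all t ∈ [0,1]. -/
open Filter Set Metric Topology Asymptotics

noncomputable section

set_option synthInstance.maxHeartbeats 1000000

/-- `ℝ^n` with the Euclidean structure. -/
abbrev Eucl (n : ℕ) : Type := EuclideanSpace ℝ (Fin n)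

variable {V W : Type*} [NormedAddCommGroup V] [NormedSpace ℝ V]
  [NormedAddCommGroup W] [NormedSpace ℝ W]

/-- `F` admits the `α`-derivative `H` at `x`:  `H` is continuous and for every direction `v`,
`F (x + t v) - F x = t ^ α • H v + o(t ^ α)` as `t → 0⁺`. -/
def HasAlphaDerivAt (F : V → W) (x : V) (α : ℝ) (H : V → W) : Prop :=
  Continuous H ∧ ∀ v : V,
    Tendsto (fun t : ℝ => (t ^ α)⁻¹ • (F (x + t • v) - F x - t ^ α • H v))
      (𝓝[>] (0 : ℝ)) (𝓝 0)

/-- `F` has order `α` at `x`: for every nonzero direction `v` the limit of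
`F (x + t v) / t ^ α` as `t → 0⁺` exists, and for at least one `v` it is nonzero. -/
def HasOrderAt (F : V → W) (x : V) (α : ℝ) : Prop :=
  (∀ v : V, v ≠ 0 → ∃ L : W,
      Tendsto (fun t : ℝ => (t ^ α)⁻¹ • F (x + t • v)) (𝓝[>] (0 : ℝ)) (𝓝 L)) ∧
  ∃ v : V, v ≠ 0 ∧ ∃ L : W, L ≠ 0 ∧
      Tendsto (fun t : ℝ => (t ^ α)⁻¹ • F (x + t • v)) (𝓝[>] (0 : ℝ)) (𝓝 L)

/-- `φ` is a lipeomorphism from `U` onto `V'`. -/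
def IsLipeoOn (φ : V → W) (U : Set V) (V' : Set W) : Prop :=
  Set.BijOn φ U V' ∧ ∃ c : ℝ, 1 ≤ c ∧ ∀ x ∈ U, ∀ y ∈ U,
    (1 / c) * ‖x - y‖ ≤ ‖φ x - φ y‖ ∧ ‖φ x - φ y‖ ≤ c * ‖x - y‖

/-- `d` is a pseudo-Lipschitz derivative of `φ` at `x`: along some sequence `t_j → 0⁺`,
`(φ (x + t_j v) - φ x) / t_j → d v` uniformly on compact sets. -/
def IsPseudoLipDerivAt (φ : V → V) (x : V) (d : V → V) : Prop :=
  ∃ t : ℕ → ℝ, (∀ j, 0 < t j) ∧ Tendsto t atTop (𝓝 (0 : ℝ)) ∧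
    ∀ K : Set V, IsCompact K →
      TendstoUniformlyOn (fun j v => (t j)⁻¹ • (φ (x + t j • v) - φ x)) d atTop K

/-- `F ∼ G` at `x₀`: asymptotic equivalence of `F` and `G` at `x₀`. -/
def AsympEquivAt (F G : V → W) (x₀ : V) : Prop :=
  ∃ c₁ c₂ : ℝ, 0 < c₁ ∧ 0 < c₂ ∧
    ∀ᶠ x in 𝓝 x₀, c₂ * ‖F x‖ ≤ ‖G x‖ ∧ ‖G x‖ ≤ c₁ * ‖F x‖

/-- `F ≈ G` at `x₀` via the lipeomorphism `φ`. -/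
def AsympLipEquivAtVia {V' : Type*} [NormedAddCommGroup V'] [NormedSpace ℝ V']
    (F : V → W) (G : V' → W) (φ : V → V') (x₀ : V) : Prop :=
  ∃ c : ℝ, 1 ≤ c ∧ ∀ᶠ x in 𝓝 x₀,
    (1 / c) * ‖F x - F x₀‖ ≤ ‖G (φ x) - G (φ x₀)‖ ∧
      ‖G (φ x) - G (φ x₀)‖ ≤ c * ‖F x - F x₀‖

/-- The degree-`m` term of the Taylor series of `F` at `0`; for a `C^∞` germ of
finite order `m` this is its initial part `in(F)`. -/
def inPart (F : V → ℝ) (m : ℕ) : V → ℝ :=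
  fun x => (m.factorial : ℝ)⁻¹ • iteratedFDeriv ℝ m F 0 (fun _ => x)

instance {α : Type*} (l : Filter α) {R : Type*} [CommSemiring R] :
    Algebra R (Filter.Germ l R) :=
  Algebra.ofModule
    (fun r x y => Filter.Germ.inductionOn₂ x y fun f g => by
      rw [← Filter.Germ.coe_smul, ← Filter.Germ.coe_mul, ← Filter.Germ.coe_mul,
        ← Filter.Germ.coe_smul, smul_mul_assoc])
    (fun r x y => Filter.Germ.inductionOn₂ x y fun f g => by
      rw [← Filter.Germ.coe_smul, ← Filter.Germ.coe_mul, ← Filter.Germ.coe_mul,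
        ← Filter.Germ.coe_smul, mul_smul_comm])

/-- `E_n`: the ℝ-algebra of germs at `0` of `C^∞` functions `ℝ^n → ℝ`, realized as a
subalgebra of the algebra of germs at `0` of functions `ℝ^n → ℝ`. -/
def smoothGerms (n : ℕ) : Subalgebra ℝ (Filter.Germ (𝓝 (0 : Eucl n)) ℝ) where
  carrier := {γ | ∃ f : Eucl n → ℝ, ContDiff ℝ (⊤ : ℕ∞) f ∧ γ = ↑f}
  add_mem' := by
    rintro a b ⟨f, hf, rfl⟩ ⟨g, hg, rfl⟩
    exact ⟨f + g, hf.add hg, rfl⟩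
  mul_mem' := by
    rintro a b ⟨f, hf, rfl⟩ ⟨g, hg, rfl⟩
    exact ⟨f * g, hf.mul hg, rfl⟩
  algebraMap_mem' := fun r => ⟨fun _ => r, contDiff_const, by
    rw [Algebra.algebraMap_eq_smul_one, ← Filter.Germ.coe_one, ← Filter.Germ.coe_smul]
    congr 1
    funext x
    simp⟩

/-- The Jacobian ideal `J(f) ⊆ E_n`, generated by the germs at `0` of the partial
derivatives `∂f/∂x_1, …, ∂f/∂x_n`. -/
def jacobianIdeal (n : ℕ) (f : Eucl n → ℝ) : Ideal (smoothGerms n) :=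
  Ideal.span {γ | ∃ i : Fin n,
    (γ : Filter.Germ (𝓝 (0 : Eucl n)) ℝ) =
      ↑(fun x => fderiv ℝ f x (EuclideanSpace.single i 1))}

/-- The real Milnor number `μ(f) = dim_ℝ E_n / J(f)`, as a cardinal. -/
def milnor (n : ℕ) (f : Eucl n → ℝ) : Cardinal :=
  Module.rank ℝ (smoothGerms n ⧸ jacobianIdeal n f)

/-- `φ` is a germ at `0` of a lipeomorphism `(ℝ^n, 0) → (ℝ^n, 0)`. -/
def IsLipeoGermAt {n : ℕ} (φ : Eucl n → Eucl n) : Prop :=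
  φ 0 = 0 ∧ ∃ U V : Set (Eucl n), U ∈ 𝓝 (0 : Eucl n) ∧ V ∈ 𝓝 (0 : Eucl n) ∧
    IsLipeoOn φ U V

/-!
Let `m` be the order of `f`. The Milnor number turns out to depend on `m` and `n` only:
`μ(f) = (m - 1) ^ n`. The partial derivatives of `f` agree modulo `𝔪 ^ m` with those of `in(f)`,
which are `n` forms of degree `m - 1` generating an ideal of finite codimension. By prime avoidance
such forms can be traded for a regular sequence of forms of the same degree, so the Hilbert series
of the quotient is at most `(1 + X + ⋯ + X ^ (m - 2)) ^ n`; filtering `E_n / J(f)` by powers of `𝔪`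
gives `μ(f) ≤ (m - 1) ^ n`. Conversely `J(f) ^ (j + 1) ⊆ 𝔪 ^ ((m - 1) * (j + 1))` and
`dim E_n / J(f) ^ (j + 1) ≤ μ(f) * (j + n).choose n`, and letting `j → ∞` yields the lower bound.
Finally a lipeomorphism preserves the order, since `f = O(‖x‖ ^ k)` if and only if `k ≤ m`.
-/

section RegularSequence

open RingTheory.Sequence Submodule

variable {R M : Type*} [CommRing R] [AddCommGroup M] [Module R M]

theorem isSMulRegular_quotSMulTop_swap {a b : R} (ha : IsSMulRegular M a)
    (hb : IsSMulRegular (QuotSMulTop a M) b) : IsSMulRegular (QuotSMulTop b M) a := by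
  simp only [QuotSMulTop, isSMulRegular_quotient_iff_mem_of_smul_mem,
    mem_smul_pointwise_iff_exists] at hb ⊢
  rintro x ⟨y, -, hy⟩
  obtain ⟨u, -, rfl⟩ := hb y ⟨x, mem_top, hy.symm⟩
  exact ⟨u, mem_top, ha (by simpa only [smul_comm a b] using hy)⟩

theorem isWeaklyRegular_cons_of_forall_take {y : R} {rs : List R} (hrs : IsWeaklyRegular M rs)
    (hy : ∀ i ≤ rs.length, IsSMulRegular (M ⧸ (Ideal.ofList (rs.take i) • ⊤ : Submodule R M)) y) :
    IsWeaklyRegular M (y :: rs) := by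
  refine ⟨fun i hi => ?_⟩
  rcases i with _ | i
  · exact hy 0 (Nat.zero_le _)
  have hi : i < rs.length := by simpa using hi
  have hnext : Ideal.ofList (rs.take (i + 1)) = Ideal.ofList (rs[i] :: rs.take i) := by
    rw [List.take_add_one, List.getElem?_eq_getElem hi, Option.toList_some, Ideal.ofList_append,
      Ideal.ofList_cons, Ideal.ofList_cons, Ideal.ofList_nil, sup_bot_eq, sup_comm]
  have hy' := hy (i + 1) hi
  rw [hnext, (quotOfListConsSMulTopEquivQuotSMulTopOuter M rs[i] (rs.take i)).isSMulRegular_congr]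
    at hy'
  exact ((quotOfListConsSMulTopEquivQuotSMulTopOuter M y (rs.take i)).isSMulRegular_congr _).2
    (isSMulRegular_quotSMulTop_swap (hrs.regular_mod_prev i hi) hy')

variable {k : Type*} [Field k] [Infinite k] [IsNoetherianRing R] [Algebra k R]

theorem exists_mem_forall_isSMulRegular {ι : Type*} [Finite ι] {N : ι → Type*}
    [∀ i, AddCommGroup (N i)] [∀ i, Module R (N i)] [∀ i, Module.Finite R (N i)]
    (S : Submodule k R)
    (h : ∀ i, ∃ z ∈ (Ideal.span (S : Set R)).radical, IsSMulRegular (N i) z) :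
    ∃ y ∈ S, ∀ i, IsSMulRegular (N i) y := by
  by_contra! hS
  let T : Set (Ideal R) := ⋃ i, associatedPrimes R (N i)
  have hT : T.Finite := Set.finite_iUnion fun i => associatedPrimes.finite R (N i)
  let restrict (P : Ideal R) : Subspace k S := (P.restrictScalars k).comap S.subtype
  have htop : ⊤ ∈ hT.toFinset.image restrict := by
    by_contra hne
    refine Subspace.biUnion_ne_univ_of_top_notMem hne (Set.eq_univ_of_forall fun y => ?_)
    obtain ⟨i, hi⟩ := hS y y.2
    have : (y : R) ∈ ⋃ P ∈ associatedPrimes R (N i), (P : Set R) := by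
      rwa [biUnion_associatedPrimes_eq_compl_regular]
    obtain ⟨P, hP, hyP⟩ := Set.mem_iUnion₂.1 this
    exact Set.mem_iUnion₂.2 ⟨restrict P,
      Finset.mem_image_of_mem _ (hT.mem_toFinset.2 (Set.mem_iUnion.2 ⟨i, hP⟩)), hyP⟩
  obtain ⟨P, hPT, hP⟩ := Finset.mem_image.1 htop
  obtain ⟨i, hPi⟩ := Set.mem_iUnion.1 (hT.mem_toFinset.1 hPT)
  have hle : (Ideal.span (S : Set R)).radical ≤ P := by
    refine hPi.isPrime.radical_le_iff.2 (Ideal.span_le.2 fun y hy => ?_)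
    exact hP.ge (mem_top (x := (⟨y, hy⟩ : S)))
  obtain ⟨z, hz, hreg⟩ := h i
  have : z ∈ ⋃ P ∈ associatedPrimes R (N i), (P : Set R) := Set.mem_iUnion₂.2 ⟨P, hPi, hle hz⟩
  rw [biUnion_associatedPrimes_eq_compl_regular] at this
  exact this hreg

variable [Module.Finite R M]

theorem exists_mem_isWeaklyRegular_cons (S : Submodule k R) {rs : List R} {w : R}
    (h : IsWeaklyRegular M (rs ++ [w]))
    (hrad : ∀ z ∈ rs ++ [w], z ∈ (Ideal.span (S : Set R)).radical) :
    ∃ y ∈ S, IsWeaklyRegular M (y :: rs) := by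
  obtain ⟨y, hyS, hy⟩ := exists_mem_forall_isSMulRegular
    (N := fun i : Fin (rs.length + 1) => M ⧸ (Ideal.ofList (rs.take i) • ⊤ : Submodule R M)) S
    fun i => by
      have hi : (i : ℕ) < (rs ++ [w]).length := by simp; lia
      refine ⟨(rs ++ [w])[i], hrad _ (List.getElem_mem hi), ?_⟩
      have := h.regular_mod_prev i hi
      rwa [List.take_append_of_le_length (Nat.le_of_lt_succ i.2)] at this
  exact ⟨y, hyS, isWeaklyRegular_cons_of_forall_take ((isWeaklyRegular_append_iff M _ _).1 h).1
    fun i hi => hy ⟨i, Nat.lt_succ_of_le hi⟩⟩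

-- Exchange argument: drop the last element of `xs` and put an element of `S` in front of `ys`.
theorem exists_isWeaklyRegular_of_append (S : Submodule k R) {xs ys : List R}
    (h : IsWeaklyRegular M (ys ++ xs)) (hys : ∀ y ∈ ys, y ∈ S)
    (hxs : ∀ x ∈ xs, x ∈ (Ideal.span (S : Set R)).radical) :
    ∃ zs : List R, zs.length = ys.length + xs.length ∧ (∀ z ∈ zs, z ∈ S) ∧
      IsWeaklyRegular M zs := by
  induction xs using List.reverseRecOn generalizing ys with
  | nil => exact ⟨ys, by simp, hys, by simpa using h⟩
  | append_singleton xs w ih =>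
    rw [← List.append_assoc] at h
    obtain ⟨y, hyS, hy⟩ := exists_mem_isWeaklyRegular_cons S h fun z hz => by
      rw [List.append_assoc, List.mem_append] at hz
      exact hz.elim (fun hz => Ideal.le_radical (Ideal.subset_span (hys z hz))) (hxs z)
    obtain ⟨zs, hlen, hzs, hreg⟩ := ih (ys := y :: ys) hy
      (List.forall_mem_cons.2 ⟨hyS, hys⟩) fun x hx => hxs x (List.mem_append_left _ hx)
    exact ⟨zs, by simp [hlen]; omega, hzs, hreg⟩

theorem exists_isWeaklyRegular_of_mem_radical (S : Submodule k R) {xs : List R}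
    (h : IsWeaklyRegular M xs) (hxs : ∀ x ∈ xs, x ∈ (Ideal.span (S : Set R)).radical) :
    ∃ ys : List R, ys.length = xs.length ∧ (∀ y ∈ ys, y ∈ S) ∧ IsWeaklyRegular M ys := by
  simpa using exists_isWeaklyRegular_of_append S (ys := []) h (by simp) hxs

end RegularSequence

theorem finrank_map_add_finrank_inf_ker {k E F : Type*} [Field k] [AddCommGroup E] [Module k E]
    [AddCommGroup F] [Module k F] (f : E →ₗ[k] F) (p : Submodule k E) [FiniteDimensional k p] :
    Module.finrank k (p.map f) + Module.finrank k ↥(p ⊓ f.ker) = Module.finrank k p := by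
  rw [← (f.domRestrict p).finrank_range_add_finrank_ker, LinearMap.range_domRestrict,
    LinearMap.ker_domRestrict, ← Submodule.map_comap_subtype,
    (Submodule.equivMapOfInjective _ p.injective_subtype _).finrank_eq]

theorem finrank_map_le_finrank_map {k E F G : Type*} [Field k] [AddCommGroup E] [Module k E]
    [AddCommGroup F] [Module k F] [AddCommGroup G] [Module k G] {f : E →ₗ[k] F} {g : E →ₗ[k] G}
    {p : Submodule k E} [FiniteDimensional k p] (h : p ⊓ f.ker ≤ g.ker) :
    Module.finrank k (p.map g) ≤ Module.finrank k (p.map f) := by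
  have hf := finrank_map_add_finrank_inf_ker f p
  have hg := finrank_map_add_finrank_inf_ker g p
  have : Module.Finite k ↥(p ⊓ g.ker) := Submodule.finiteDimensional_inf_left p g.ker
  have hle := Submodule.finrank_mono (le_inf inf_le_left h : p ⊓ f.ker ≤ p ⊓ g.ker)
  omega

theorem rank_quotient_eq_rank_quotient_sup_add_rank_map {k E : Type*} [Field k] [AddCommGroup E]
    [Module k E] (S U : Submodule k E) :
    Module.rank k (E ⧸ S) = Module.rank k (E ⧸ S ⊔ U) + Module.rank k (U.map S.mkQ) := by
  rw [← (Submodule.quotientQuotientEquivQuotientSup S U).rank_eq,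
    Submodule.rank_quotient_add_rank]

section HilbertFunction

open DirectSum RingTheory.Sequence Submodule

variable {k A : Type*} [Field k] [CommRing A] [Algebra k A] (𝒜 : ℕ → Submodule k A)

/-- The degree-`t` piece of the quotient of the graded algebra `A = ⨁ 𝒜 t` by `I`, as a subspace
of `A ⧸ I`. -/
def gradedQuotientPiece (I : Ideal A) (t : ℕ) : Submodule k (A ⧸ I) :=
  (𝒜 t).map (Ideal.Quotient.mkₐ k I).toLinearMap

/-- The Hilbert function `t ↦ dim_k (A ⧸ I)_t` of the quotient of a graded algebra by `I`. -/
def hilbertFunction (I : Ideal A) (t : ℕ) : ℕ :=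
  Module.finrank k (gradedQuotientPiece 𝒜 I t)

/-- The Hilbert series `∑ t, dim_k (A ⧸ I)_t X ^ t`. It has integer coefficients, so that it can be
multiplied by `1 - X ^ d`. -/
def hilbertSeries (I : Ideal A) : PowerSeries ℤ :=
  PowerSeries.mk fun t => (hilbertFunction 𝒜 I t : ℤ)

theorem map_factorₐ_gradedQuotientPiece {I J : Ideal A} (h : I ≤ J) (t : ℕ) :
    (gradedQuotientPiece 𝒜 I t).map (Ideal.Quotient.factorₐ k h).toLinearMap =
      gradedQuotientPiece 𝒜 J t := by
  rw [gradedQuotientPiece, ← Submodule.map_comp, ← AlgHom.comp_toLinearMap,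
    Ideal.Quotient.factorₐ_comp_mk, gradedQuotientPiece]

instance [∀ t, Module.Finite k (𝒜 t)] (I : Ideal A) (t : ℕ) :
    Module.Finite k (gradedQuotientPiece 𝒜 I t) :=
  Module.Finite.map _ _

theorem hilbertFunction_anti [∀ t, Module.Finite k (𝒜 t)] {I J : Ideal A} (h : I ≤ J) (t : ℕ) :
    hilbertFunction 𝒜 J t ≤ hilbertFunction 𝒜 I t := by
  rw [hilbertFunction, ← map_factorₐ_gradedQuotientPiece 𝒜 h]
  exact Submodule.finrank_map_le _ _

variable [GradedAlgebra 𝒜] {I : Ideal A} {z : A} {d : ℕ}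

theorem sub_mul_decompose_mem (hI : I.IsHomogeneous 𝒜) (hz : z ∈ 𝒜 d) {a b : A} {t : ℕ}
    (ha : a ∈ 𝒜 t) (hab : a - z * b ∈ I) :
    a - (if d ≤ t then z * decompose 𝒜 b (t - d) else 0) ∈ I := by
  have := hI t hab
  rwa [decompose_sub, DirectSum.sub_apply, AddSubgroupClass.coe_sub, decompose_of_mem_same 𝒜 ha,
    coe_decompose_mul_of_left_mem 𝒜 t hz] at this

theorem exists_of_mem_gradedQuotientPiece_of_mem_ker_factorₐ (hI : I.IsHomogeneous 𝒜)
    (hz : z ∈ 𝒜 d) {t : ℕ} {x : A ⧸ I} (hx : x ∈ gradedQuotientPiece 𝒜 I t)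
    (hker : Ideal.Quotient.factorₐ k (le_sup_left : I ≤ I ⊔ Ideal.span {z}) x = 0) :
    ∃ b, x = Ideal.Quotient.mk I (if d ≤ t then z * decompose 𝒜 b (t - d) else 0) := by
  obtain ⟨a, ha, rfl⟩ := hx
  have hmem : a ∈ Ideal.span {z} ⊔ I := by
    rwa [sup_comm, ← Ideal.Quotient.eq_zero_iff_mem]
  obtain ⟨b, i, hi, rfl⟩ := Ideal.mem_span_singleton_sup.1 hmem
  refine ⟨b, Ideal.Quotient.eq.2 (sub_mul_decompose_mem 𝒜 hI hz ha ?_)⟩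
  rwa [mul_comm z, add_sub_cancel_left]

theorem gradedQuotientPiece_inf_ker_factorₐ_of_lt (hI : I.IsHomogeneous 𝒜) (hz : z ∈ 𝒜 d)
    {t : ℕ} (ht : t < d) : gradedQuotientPiece 𝒜 I t ⊓
      (Ideal.Quotient.factorₐ k (le_sup_left : I ≤ I ⊔ Ideal.span {z})).toLinearMap.ker = ⊥ := by
  rw [eq_bot_iff]
  rintro x ⟨hx, hker⟩
  obtain ⟨b, rfl⟩ := exists_of_mem_gradedQuotientPiece_of_mem_ker_factorₐ 𝒜 hI hz hx hker
  rw [if_neg ht.not_ge, map_zero]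
  exact zero_mem _

theorem gradedQuotientPiece_inf_ker_factorₐ (hI : I.IsHomogeneous 𝒜) (hz : z ∈ 𝒜 d) (t : ℕ) :
    gradedQuotientPiece 𝒜 I (t + d) ⊓
        (Ideal.Quotient.factorₐ k (le_sup_left : I ≤ I ⊔ Ideal.span {z})).toLinearMap.ker =
      (gradedQuotientPiece 𝒜 I t).map (LinearMap.mulLeft k (Ideal.Quotient.mk I z)) := by
  apply le_antisymm
  · rintro x ⟨hx, hker⟩
    obtain ⟨b, rfl⟩ := exists_of_mem_gradedQuotientPiece_of_mem_ker_factorₐ 𝒜 hI hz hx hker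
    rw [if_pos le_add_self, Nat.add_sub_cancel, map_mul]
    exact Submodule.mem_map_of_mem (f := LinearMap.mulLeft k _)
      (Submodule.mem_map_of_mem (decompose 𝒜 b t).2)
  · rintro _ ⟨_, ⟨a, ha, rfl⟩, rfl⟩
    refine ⟨⟨z * a, add_comm d t ▸ SetLike.mul_mem_graded hz ha,
      map_mul (Ideal.Quotient.mk I) z a⟩, ?_⟩
    have : z * a ∈ I ⊔ Ideal.span {z} :=
      Ideal.mul_mem_right _ _ (Ideal.mem_sup_right (Ideal.mem_span_singleton_self z))
    exact Ideal.Quotient.eq_zero_iff_mem.2 this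

variable [∀ t, Module.Finite k (𝒜 t)]

theorem hilbertFunction_sup_span_singleton_of_lt (hI : I.IsHomogeneous 𝒜) (hz : z ∈ 𝒜 d)
    {t : ℕ} (ht : t < d) : hilbertFunction 𝒜 (I ⊔ Ideal.span {z}) t = hilbertFunction 𝒜 I t := by
  have := finrank_map_add_finrank_inf_ker
    (Ideal.Quotient.factorₐ k (le_sup_left : I ≤ I ⊔ Ideal.span {z})).toLinearMap
    (gradedQuotientPiece 𝒜 I t)
  rwa [gradedQuotientPiece_inf_ker_factorₐ_of_lt 𝒜 hI hz ht, finrank_bot, add_zero,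
    map_factorₐ_gradedQuotientPiece] at this

theorem hilbertFunction_sup_span_singleton (hI : I.IsHomogeneous 𝒜) (hz : z ∈ 𝒜 d)
    (hreg : IsSMulRegular (A ⧸ I) z) (t : ℕ) :
    hilbertFunction 𝒜 (I ⊔ Ideal.span {z}) (t + d) + hilbertFunction 𝒜 I t =
      hilbertFunction 𝒜 I (t + d) := by
  have := finrank_map_add_finrank_inf_ker
    (Ideal.Quotient.factorₐ k (le_sup_left : I ≤ I ⊔ Ideal.span {z})).toLinearMap
    (gradedQuotientPiece 𝒜 I (t + d))
  rwa [gradedQuotientPiece_inf_ker_factorₐ 𝒜 hI hz, map_factorₐ_gradedQuotientPiece,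
    ← (Submodule.equivMapOfInjective _ (by exact hreg) _).finrank_eq] at this

theorem hilbertSeries_sup_span_singleton (hI : I.IsHomogeneous 𝒜) (hz : z ∈ 𝒜 d)
    (hreg : IsSMulRegular (A ⧸ I) z) :
    hilbertSeries 𝒜 (I ⊔ Ideal.span {z}) = (1 - PowerSeries.X ^ d) * hilbertSeries 𝒜 I := by
  ext t
  rw [sub_mul, one_mul, map_sub, PowerSeries.coeff_X_pow_mul']
  simp only [hilbertSeries, PowerSeries.coeff_mk]
  split_ifs with h
  · obtain ⟨s, rfl⟩ := Nat.exists_eq_add_of_le' h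
    rw [Nat.add_sub_cancel, ← hilbertFunction_sup_span_singleton 𝒜 hI hz hreg, Nat.cast_add,
      add_sub_cancel_right]
  · rw [sub_zero, hilbertFunction_sup_span_singleton_of_lt 𝒜 hI hz (not_le.1 h)]

theorem hilbertSeries_ofList {rs : List A} (hd : ∀ r ∈ rs, r ∈ 𝒜 d) (hreg : IsWeaklyRegular A rs) :
    hilbertSeries 𝒜 (Ideal.ofList rs) =
      (1 - PowerSeries.X ^ d) ^ rs.length * hilbertSeries 𝒜 ⊥ := by
  induction rs using List.reverseRecOn with
  | nil => simp
  | append_singleton rs z ih =>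
    have hz : z ∈ 𝒜 d := hd z (by simp)
    have hd' : ∀ r ∈ rs, r ∈ 𝒜 d := fun r hr => hd r (List.mem_append_left _ hr)
    obtain ⟨hrs, hzreg⟩ := (isWeaklyRegular_append_iff A rs [z]).1 hreg
    rw [isWeaklyRegular_singleton_iff, smul_eq_mul, Ideal.mul_top] at hzreg
    have hhom : (Ideal.ofList rs).IsHomogeneous 𝒜 :=
      Ideal.homogeneous_span _ _ fun r hr => ⟨d, hd' r hr⟩
    rw [Ideal.ofList_append, Ideal.ofList_singleton,
      hilbertSeries_sup_span_singleton 𝒜 hhom hz hzreg, ih hd' hrs, List.length_append,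
      List.length_singleton, pow_succ', mul_assoc]

end HilbertFunction

section PolynomialRing

open MvPolynomial RingTheory.Sequence

attribute [local instance] MvPolynomial.gradedAlgebra

variable {σ k : Type*} [Field k]

instance [Finite σ] (t : ℕ) : Module.Finite k (homogeneousSubmodule σ k t) :=
  Module.Finite.iff_fg.2 (homogeneousSubmodule_fg σ k t)

theorem decompose_homogeneousSubmodule_apply (p : MvPolynomial σ k) (t : ℕ) :
    (DirectSum.decompose (homogeneousSubmodule σ k) p t : MvPolynomial σ k) =
      homogeneousComponent t p :=
  decomposition.decompose'_apply p t

theorem isSMulRegular_X_quotient_span_X_image {s : Set σ} {j : σ} (hj : j ∉ s) :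
    IsSMulRegular (MvPolynomial σ k ⧸ Ideal.span (X '' s : Set (MvPolynomial σ k)))
      (X j : MvPolynomial σ k) := by
  rw [isSMulRegular_quotient_iff_mem_of_smul_mem]
  intro a ha
  rw [smul_eq_mul] at ha
  rw [mem_ideal_span_X_image] at ha ⊢
  intro e he
  obtain ⟨i, hi, hne⟩ := ha (Finsupp.single j 1 + e) (by
    rwa [mem_support_iff, coeff_X_mul, ← mem_support_iff])
  have hji : j ≠ i := fun h => hj (h ▸ hi)
  exact ⟨i, hi, by simpa [Finsupp.single_apply, hji] using hne⟩

theorem ofList_map_X (l : List σ) :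
    Ideal.ofList (l.map (X : σ → MvPolynomial σ k)) = Ideal.span (X '' {i | i ∈ l}) := by
  simp only [Ideal.ofList, List.mem_map, Set.image, Set.mem_ofPred_eq]

theorem isWeaklyRegular_map_X {l : List σ} (hl : l.Nodup) :
    IsWeaklyRegular (MvPolynomial σ k) (l.map (X : σ → MvPolynomial σ k)) := by
  induction l using List.reverseRecOn with
  | nil => exact .nil _ _
  | append_singleton l j ih =>
    rw [List.nodup_append] at hl
    rw [List.map_append, isWeaklyRegular_append_iff, List.map_singleton,
      isWeaklyRegular_singleton_iff, smul_eq_mul, Ideal.mul_top, ofList_map_X]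
    exact ⟨ih hl.1, isSMulRegular_X_quotient_span_X_image fun hj =>
      hl.2.2 j hj j (List.mem_singleton_self j) rfl⟩

theorem hilbertFunction_idealOfVars_zero :
    hilbertFunction (homogeneousSubmodule σ k) (idealOfVars σ k) 0 = 1 := by
  rw [hilbertFunction, gradedQuotientPiece, homogeneousSubmodule_zero, Submodule.one_eq_span,
    Submodule.map_span, Set.image_singleton]
  refine finrank_span_singleton fun h => ?_
  have h1 : (1 : MvPolynomial σ k) ∈ idealOfVars σ k ^ 1 := by
    rw [pow_one]
    exact Ideal.Quotient.eq_zero_iff_mem.1 h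
  simpa using (C_mem_pow_idealOfVars_iff (σ := σ) (R := k) 1 1).1 h1

theorem mem_pow_idealOfVars_of_isHomogeneous {p : MvPolynomial σ k} {d : ℕ}
    (hp : p.IsHomogeneous d) : p ∈ idealOfVars σ k ^ d :=
  (mem_pow_idealOfVars_iff' _ _).2 fun _ hx => hp.coeff_eq_zero hx.ne

theorem hilbertFunction_idealOfVars_of_ne_zero {t : ℕ} (ht : t ≠ 0) :
    hilbertFunction (homogeneousSubmodule σ k) (idealOfVars σ k) t = 0 := by
  have : gradedQuotientPiece (homogeneousSubmodule σ k) (idealOfVars σ k) t = ⊥ := by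
    rw [eq_bot_iff]
    rintro _ ⟨p, hp, rfl⟩
    exact Ideal.Quotient.eq_zero_iff_mem.2
      (Ideal.pow_le_self ht (mem_pow_idealOfVars_of_isHomogeneous hp))
  rw [hilbertFunction, this, finrank_bot]

theorem hilbertSeries_idealOfVars :
    hilbertSeries (homogeneousSubmodule σ k) (idealOfVars σ k) = 1 := by
  ext t
  rw [hilbertSeries, PowerSeries.coeff_mk, PowerSeries.coeff_one]
  split_ifs with ht
  · rw [ht, hilbertFunction_idealOfVars_zero, Nat.cast_one]
  · rw [hilbertFunction_idealOfVars_of_ne_zero ht, Nat.cast_zero]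

variable [Fintype σ]

theorem one_sub_X_pow_card_mul_hilbertSeries_bot :
    (1 - PowerSeries.X) ^ Fintype.card σ * hilbertSeries (homogeneousSubmodule σ k) ⊥ = 1 := by
  have hX : Ideal.ofList (Finset.univ.toList.map (X : σ → MvPolynomial σ k)) = idealOfVars σ k := by
    simp [ofList_map_X]
  have := hilbertSeries_ofList (homogeneousSubmodule σ k) (d := 1) (by simp [isHomogeneous_X])
    (isWeaklyRegular_map_X (k := k) (Finset.nodup_toList (Finset.univ : Finset σ)))
  rwa [hX, hilbertSeries_idealOfVars, pow_one, List.length_map, Finset.length_toList,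
    Finset.card_univ, eq_comm] at this

theorem hilbertSeries_ofList_eq_geom_sum_pow {d : ℕ} {ys : List (MvPolynomial σ k)}
    (hlen : ys.length = Fintype.card σ) (hd : ∀ y ∈ ys, y ∈ homogeneousSubmodule σ k d)
    (hreg : IsWeaklyRegular (MvPolynomial σ k) ys) :
    hilbertSeries (homogeneousSubmodule σ k) (Ideal.ofList ys) =
      ((∑ i ∈ Finset.range d, Polynomial.X ^ i : Polynomial ℤ) ^ Fintype.card σ :
        Polynomial ℤ) := by
  have hgeom : (1 - PowerSeries.X ^ d : PowerSeries ℤ) =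
      ((∑ i ∈ Finset.range d, Polynomial.X ^ i : Polynomial ℤ) : PowerSeries ℤ) *
        (1 - PowerSeries.X) := by
    have := congrArg (fun p : Polynomial ℤ => (p : PowerSeries ℤ))
      (geom_sum_mul_neg (Polynomial.X : Polynomial ℤ) d)
    simpa using this.symm
  rw [hilbertSeries_ofList _ hd hreg, hlen, hgeom, mul_pow, mul_assoc,
    one_sub_X_pow_card_mul_hilbertSeries_bot, mul_one, Polynomial.coe_pow]

theorem sum_hilbertFunction_ofList_le {d : ℕ} {ys : List (MvPolynomial σ k)}
    (hlen : ys.length = Fintype.card σ) (hd : ∀ y ∈ ys, y ∈ homogeneousSubmodule σ k d)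
    (hreg : IsWeaklyRegular (MvPolynomial σ k) ys) (N : ℕ) :
    ∑ t ∈ Finset.range N, hilbertFunction (homogeneousSubmodule σ k) (Ideal.ofList ys) t ≤
      d ^ Fintype.card σ := by
  set Q : Polynomial ℤ := (∑ i ∈ Finset.range d, Polynomial.X ^ i) ^ Fintype.card σ with hQ
  have hcoeff (t : ℕ) :
      (hilbertFunction (homogeneousSubmodule σ k) (Ideal.ofList ys) t : ℤ) = Q.coeff t := by
    rw [← Polynomial.coeff_coe, hQ, ← hilbertSeries_ofList_eq_geom_sum_pow hlen hd hreg,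
      hilbertSeries, PowerSeries.coeff_mk]
  have heval : Q.eval 1 = (d ^ Fintype.card σ : ℕ) := by simp [hQ, Polynomial.eval_finsetSum]
  refine (Finset.sum_le_sum_of_subset (Finset.range_mono (le_max_left N (Q.natDegree + 1)))).trans
    (Nat.cast_le (α := ℤ).1 (Eq.le ?_))
  rw [← heval, Polynomial.eval_eq_sum_range' (n := max N (Q.natDegree + 1)) (by omega)]
  simp [hcoeff]

theorem sum_hilbertFunction_span_le [Infinite k] {d : ℕ} {S : Submodule k (MvPolynomial σ k)}
    (hS : S ≤ homogeneousSubmodule σ k d)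
    (hrad : idealOfVars σ k ≤ (Ideal.span (S : Set (MvPolynomial σ k))).radical) (N : ℕ) :
    ∑ t ∈ Finset.range N, hilbertFunction (homogeneousSubmodule σ k) (Ideal.span S) t ≤
      d ^ Fintype.card σ := by
  obtain ⟨ys, hlen, hyS, hreg⟩ := exists_isWeaklyRegular_of_mem_radical S
    (isWeaklyRegular_map_X (k := k) (Finset.nodup_toList (Finset.univ : Finset σ)))
    (by simpa [Ideal.span_le, Set.range_subset_iff] using hrad)
  rw [List.length_map, Finset.length_toList, Finset.card_univ] at hlen
  calc ∑ t ∈ Finset.range N, hilbertFunction (homogeneousSubmodule σ k) (Ideal.span S) t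
      ≤ ∑ t ∈ Finset.range N, hilbertFunction (homogeneousSubmodule σ k) (Ideal.ofList ys) t :=
        Finset.sum_le_sum fun t _ => hilbertFunction_anti _ (Ideal.span_mono hyS) t
    _ ≤ d ^ Fintype.card σ :=
        sum_hilbertFunction_ofList_le hlen (fun y hy => hS (hyS y hy)) hreg N

end PolynomialRing

section MonomialCount

open MvPolynomial

variable {σ k : Type*} [Fintype σ] [Field k]

theorem rank_restrictTotalDegree (j : ℕ) :
    Module.rank k (restrictTotalDegree σ k j) = (j + Fintype.card σ).choose (Fintype.card σ) := by
  classical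
  have hdisj : ((Finset.range (j + 1) : Finset ℕ) : Set ℕ).PairwiseDisjoint
      fun t => (Finset.univ : Finset σ).finsuppAntidiag t :=
    fun a _ b _ hab => Finset.disjoint_left.2 fun f hfa hfb =>
      hab ((Finset.mem_finsuppAntidiag.1 hfa).1.symm.trans (Finset.mem_finsuppAntidiag.1 hfb).1)
  have hs : {α : σ →₀ ℕ | (α.sum fun _ e => e) ≤ j} =
      ((Finset.range (j + 1)).biUnion fun t => Finset.univ.finsuppAntidiag t :
        Finset (σ →₀ ℕ)) := by
    ext α
    simp [Finsupp.sum_fintype]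
  rw [restrictTotalDegree, hs, rank_eq_card_basis (basisRestrictSupport k _),
    ← Nat.card_eq_fintype_card, Nat.card_coe_set_eq, Set.ncard_coe_finset,
    Finset.card_biUnion hdisj]
  simp only [Finset.card_finsuppAntidiag_nat_eq_multichoose, Finset.card_univ,
    Nat.sum_range_multichoose]

end MonomialCount

theorem pow_le_of_forall_choose_le {n d e : ℕ} (hd : d ≠ 0)
    (h : ∀ j : ℕ, (d * (j + 1) - 1 + n).choose n ≤ e * (j + n).choose n) : d ^ n ≤ e := by
  have hpow (j : ℕ) : d ^ n * (j + 1) ^ n ≤ e * (j + n) ^ n := by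
    calc d ^ n * (j + 1) ^ n = (d * (j + 1) - 1 + 1) ^ n := by
          rw [← mul_pow, Nat.sub_add_cancel (Nat.one_le_iff_ne_zero.2 (by positivity))]
      _ ≤ (d * (j + 1) - 1 + 1).ascFactorial n := Nat.pow_succ_le_ascFactorial _ _
      _ ≤ e * (j + 1).ascFactorial n := by
          rw [Nat.ascFactorial_eq_factorial_mul_choose, Nat.ascFactorial_eq_factorial_mul_choose,
            mul_left_comm]
          exact Nat.mul_le_mul_left _ (h j)
      _ ≤ e * (j + n) ^ n := Nat.mul_le_mul_left _ (Nat.ascFactorial_le_pow_add _ _)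
  have hlim : Tendsto (fun j : ℕ => (e : ℝ) * (((j : ℝ) + n) / (j + 1)) ^ n) atTop (𝓝 e) := by
    have : Tendsto (fun j : ℕ => ((j : ℝ) + n) / (j + 1)) atTop (𝓝 1) := by
      simpa [add_comm] using
        tendsto_add_mul_div_add_mul_atTop_nhds (n : ℝ) 1 1 (one_ne_zero (α := ℝ))
    simpa using (this.pow n).const_mul (e : ℝ)
  refine Nat.cast_le (α := ℝ).1 (ge_of_tendsto' hlim fun j => ?_)
  rw [div_pow, ← mul_div_assoc, le_div_iff₀ (by positivity)]
  exact_mod_cast hpow j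

section AdicApproximation

open MvPolynomial

variable {k E ι : Type*} [Field k] [CommRing E] [Algebra k E]

theorem rank_mul_le_rank_mul_rank (T P : Submodule k E) :
    Module.rank k (T * P : Submodule k E) ≤ Module.rank k T * Module.rank k P := by
  rw [← Submodule.mulMap_range]
  exact (rank_range_le _).trans (by simp [rank_tensorProduct])

theorem top_mul_top_eq_top : (⊤ * ⊤ : Submodule k E) = ⊤ :=
  top_le_iff.1 fun a _ => by
    simpa using Submodule.mul_mem_mul (Submodule.mem_top (x := a)) (Submodule.mem_top (x := 1))

theorem map_aeval_homogeneousSubmodule_mul (x : ι → E) (s t : ℕ) :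
    (homogeneousSubmodule ι k s).map (aeval x).toLinearMap *
        (homogeneousSubmodule ι k t).map (aeval x).toLinearMap =
      (homogeneousSubmodule ι k (s + t)).map (aeval x).toLinearMap := by
  rw [← Submodule.map_mul, ← homogeneousSubmodule_one_pow k s,
    ← homogeneousSubmodule_one_pow k t, ← pow_add, homogeneousSubmodule_one_pow]

variable (k) in
theorem restrictScalars_span_range (x : ι → E) :
    (Ideal.span (range x)).restrictScalars k =
      ⊤ * (homogeneousSubmodule ι k 1).map (aeval x).toLinearMap := by
  rw [Ideal.span, ← Submodule.span_smul_of_span_eq_top (R := k) Submodule.span_univ,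
    homogeneousSubmodule_one_eq_span_X, Submodule.map_span, ← Submodule.span_univ,
    Submodule.span_mul_span, ← Set.range_comp]
  congr 3
  ext i
  simp

variable (k) in
theorem restrictScalars_span_range_pow (x : ι → E) (t : ℕ) :
    (Ideal.span (range x) ^ t).restrictScalars k =
      ⊤ * (homogeneousSubmodule ι k t).map (aeval x).toLinearMap := by
  induction t with
  | zero => simp [homogeneousSubmodule_zero, Submodule.map_one]
  | succ t ih =>
    rw [pow_succ, Ideal.restrictScalars_mul, ih, restrictScalars_span_range, mul_mul_mul_comm,
      top_mul_top_eq_top, map_aeval_homogeneousSubmodule_mul]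

variable {x : ι → E} {T : Submodule k E}

theorem restrictScalars_span_range_pow_eq_sup
    (hT : T ⊔ (Ideal.span (range x)).restrictScalars k = ⊤) (t : ℕ) :
    (Ideal.span (range x) ^ t).restrictScalars k =
      T * (homogeneousSubmodule ι k t).map (aeval x).toLinearMap ⊔
        (Ideal.span (range x) ^ (t + 1)).restrictScalars k := by
  rw [restrictScalars_span_range_pow, ← hT, Submodule.sup_mul, restrictScalars_span_range,
    mul_assoc, map_aeval_homogeneousSubmodule_mul, restrictScalars_span_range_pow, add_comm 1]

theorem mul_map_restrictTotalDegree_sup_eq_top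
    (hT : T ⊔ (Ideal.span (range x)).restrictScalars k = ⊤) (j : ℕ) :
    T * (restrictTotalDegree ι k j).map (aeval x).toLinearMap ⊔
      (Ideal.span (range x) ^ (j + 1)).restrictScalars k = ⊤ := by
  have hle {s t : ℕ} (hst : s ≤ t) : homogeneousSubmodule ι k s ≤ restrictTotalDegree ι k t :=
    fun p hp => (mem_restrictTotalDegree _ _ _).2 ((IsHomogeneous.totalDegree_le hp).trans hst)
  induction j with
  | zero =>
    rw [eq_top_iff, ← hT, zero_add, pow_one]
    refine sup_le_sup_right ?_ _
    calc T = T * (homogeneousSubmodule ι k 0).map (aeval x).toLinearMap := by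
          rw [homogeneousSubmodule_zero, Submodule.map_one, mul_one]
      _ ≤ _ := mul_le_mul_right (Submodule.map_mono (hle le_rfl)) _
  | succ j ih =>
    rw [eq_top_iff, ← ih, restrictScalars_span_range_pow_eq_sup hT, ← sup_assoc]
    refine sup_le_sup_right (sup_le ?_ ?_) _ <;>
      refine mul_le_mul_right (Submodule.map_mono ?_) _
    · exact fun p hp => (mem_restrictTotalDegree _ _ _).2
        (((mem_restrictTotalDegree _ _ _).1 hp).trans j.le_succ)
    · exact hle le_rfl

theorem rank_quotient_span_pow_le [Fintype ι] {g : ι → E} {e : ℕ}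
    (he : Module.rank k (E ⧸ Ideal.span (range g)) = e) (j : ℕ) :
    Module.rank k (E ⧸ Ideal.span (range g) ^ (j + 1)) ≤
      (e * (j + Fintype.card ι).choose (Fintype.card ι) : ℕ) := by
  obtain ⟨T, hT⟩ := ((Ideal.span (range g)).restrictScalars k).exists_isCompl
  have hrankT : Module.rank k T = e := by
    rw [← (Submodule.quotientEquivOfIsCompl _ T hT).rank_eq,
      (Submodule.Quotient.restrictScalarsEquiv k _).rank_eq, he]
  set P := (restrictTotalDegree ι k j).map (aeval g).toLinearMap
  have hP : Module.rank k P ≤ ((j + Fintype.card ι).choose (Fintype.card ι) : ℕ) := by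
    have := lift_rank_map_le (aeval g).toLinearMap (restrictTotalDegree ι k j)
    rwa [rank_restrictTotalDegree, Cardinal.lift_natCast, Cardinal.lift_le_nat_iff] at this
  have htop := mul_map_restrictTotalDegree_sup_eq_top (x := g) (sup_comm T _ ▸ hT.sup_eq_top) j
  rw [← (Submodule.Quotient.restrictScalarsEquiv k _).rank_eq,
    rank_quotient_eq_rank_quotient_sup_add_rank_map _ (T * P), sup_comm, htop, rank_subsingleton',
    zero_add]
  calc _ ≤ Module.rank k (T * P : Submodule k E) := rank_map_le _ _
    _ ≤ Module.rank k T * Module.rank k P := rank_mul_le_rank_mul_rank T P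
    _ ≤ (e * (j + Fintype.card ι).choose (Fintype.card ι) : ℕ) := by
        rw [hrankT, Nat.cast_mul]
        gcongr

end AdicApproximation

theorem exists_pow_le_of_le_jacobson_bot {R : Type*} [CommRing R] {I : Ideal R}
    (hI : I ≤ Ideal.jacobson ⊥) (J : Ideal R) [IsArtinianRing (R ⧸ J)] : ∃ K, I ^ K ≤ J := by
  obtain ⟨K, hK⟩ := IsArtinianRing.isNilpotent_jacobson_bot (R := R ⧸ J)
  have hmap : I.map (Ideal.Quotient.mk J) ≤ Ideal.jacobson ⊥ := by
    rw [← Ideal.map_quotient_self J,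
      ← Ideal.map_jacobson_of_surjective Ideal.Quotient.mk_surjective Ideal.mk_ker.le]
    exact Ideal.map_mono (hI.trans (Ideal.jacobson_mono bot_le))
  refine ⟨K, ?_⟩
  rw [← Ideal.mk_ker (I := J), ← Ideal.map_eq_bot_iff_le_ker, Ideal.map_pow, eq_bot_iff]
  exact (Ideal.pow_right_mono hmap K).trans hK.le

section RegularParameterSystem

open MvPolynomial

attribute [local instance] MvPolynomial.gradedAlgebra

/-- `x` is a regular system of parameters of the local `k`-algebra `E` with residue field `k`.
`E` need not be Noetherian: the first two conditions say that `E` is local with maximal ideal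
`𝔪 = (x)` and residue field `k`, and the third one that the associated graded ring of `E` along
`𝔪` is the polynomial ring in the classes of the `x i`. -/
structure IsRegularParameterSystem (k : Type*) {E σ : Type*} [Field k] [CommRing E] [Algebra k E]
    (x : σ → E) : Prop where
  exists_sub_algebraMap_mem (a : E) : ∃ c : k, a - algebraMap k E c ∈ Ideal.span (range x)
  span_le_jacobson : Ideal.span (range x) ≤ Ideal.jacobson ⊥
  mem_pow_idealOfVars {q : MvPolynomial σ k} {N : ℕ} :
    aeval x q ∈ Ideal.span (range x) ^ N → q ∈ idealOfVars σ k ^ N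

namespace IsRegularParameterSystem

variable {k E σ : Type*} [Field k] [CommRing E] [Algebra k E] {x : σ → E}

theorem one_sup_eq_top (hx : IsRegularParameterSystem k x) :
    1 ⊔ (Ideal.span (range x)).restrictScalars k = ⊤ := by
  refine top_le_iff.1 fun a _ => ?_
  obtain ⟨c, hc⟩ := hx.exists_sub_algebraMap_mem a
  exact Submodule.mem_sup.2 ⟨_, Submodule.algebraMap_mem c, _, hc, by ring⟩

theorem exists_sub_aeval_mem_pow (hx : IsRegularParameterSystem k x) (a : E) (N : ℕ) :
    ∃ q : MvPolynomial σ k, a - aeval x q ∈ Ideal.span (range x) ^ (N + 1) := by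
  have ha := mul_map_restrictTotalDegree_sup_eq_top hx.one_sup_eq_top N ▸ Submodule.mem_top (x := a)
  rw [one_mul] at ha
  obtain ⟨_, ⟨q, -, rfl⟩, b, hb, rfl⟩ := Submodule.mem_sup.1 ha
  exact ⟨q, by simpa using hb⟩

theorem pow_eq_map_aeval_sup (hx : IsRegularParameterSystem k x) (t : ℕ) :
    (Ideal.span (range x) ^ t).restrictScalars k =
      (homogeneousSubmodule σ k t).map (aeval x).toLinearMap ⊔
        (Ideal.span (range x) ^ (t + 1)).restrictScalars k := by
  rw [restrictScalars_span_range_pow_eq_sup hx.one_sup_eq_top, one_mul]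

theorem aeval_mem_pow {q : MvPolynomial σ k} {N : ℕ} (hq : q ∈ idealOfVars σ k ^ N) :
    aeval x q ∈ Ideal.span (range x) ^ N := by
  have := Ideal.mem_map_of_mem (aeval x) hq
  rwa [Ideal.map_pow, Ideal.map_span, ← Set.range_comp, Function.comp_def, funext (aeval_X x)]
    at this

theorem aeval_mem_map_sup_pow_iff (hx : IsRegularParameterSystem k x)
    {I : Ideal (MvPolynomial σ k)} {q : MvPolynomial σ k} {N : ℕ} :
    aeval x q ∈ I.map (aeval x) ⊔ Ideal.span (range x) ^ N ↔ q ∈ I ⊔ idealOfVars σ k ^ N := by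
  refine ⟨fun hq => ?_, fun hq => ?_⟩
  · obtain ⟨a, ha, b, hb, hab⟩ := Submodule.mem_sup.1 hq
    obtain ⟨r, hr, har⟩ : ∃ r ∈ I, a - aeval x r ∈ Ideal.span (range x) ^ N := by
      refine Submodule.closure_induction (p := fun a _ => ∃ r ∈ I, a - aeval x r ∈ _)
        ⟨0, I.zero_mem, by simp⟩ ?_ ?_ ha
      · rintro a b - - ⟨r, hr, har⟩ ⟨s, hs, hbs⟩
        exact ⟨r + s, I.add_mem hr hs, by simpa [add_sub_add_comm] using add_mem har hbs⟩
      · rintro c _ ⟨r, hr, rfl⟩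
        obtain ⟨s, hs⟩ := hx.exists_sub_aeval_mem_pow c N
        refine ⟨s * r, I.mul_mem_left s hr, ?_⟩
        rw [map_mul, smul_eq_mul, ← sub_mul]
        exact Ideal.mul_mem_right _ _ (Ideal.pow_le_pow_right N.le_succ hs)
    have hqr : aeval x (q - r) ∈ Ideal.span (range x) ^ N := by
      rw [map_sub, ← hab, add_sub_right_comm]
      exact add_mem har hb
    exact Submodule.mem_sup.2 ⟨r, hr, q - r, hx.mem_pow_idealOfVars hqr, add_sub_cancel r q⟩
  · obtain ⟨r, hr, s, hs, rfl⟩ := Submodule.mem_sup.1 hq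
    rw [map_add]
    exact Submodule.add_mem_sup (Ideal.mem_map_of_mem _ hr) (aeval_mem_pow hs)

theorem idealOfVars_le_radical (hx : IsRegularParameterSystem k x) {I : Ideal (MvPolynomial σ k)}
    (hI : I.IsHomogeneous (homogeneousSubmodule σ k)) [Module.Finite k (E ⧸ I.map (aeval x))] :
    idealOfVars σ k ≤ I.radical := by
  have : IsArtinianRing (E ⧸ I.map (aeval x)) := IsArtinianRing.of_finite k _
  obtain ⟨K, hK⟩ := exists_pow_le_of_le_jacobson_bot hx.span_le_jacobson (I.map (aeval x))
  refine Ideal.span_le.2 ?_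
  rintro _ ⟨i, rfl⟩
  have hXi := Ideal.pow_mem_pow (Ideal.subset_span (mem_range_self i) : x i ∈ _) K
  refine ⟨K, ?_⟩
  have hmem : aeval x (X i ^ K : MvPolynomial σ k) ∈
      I.map (aeval x) ⊔ Ideal.span (range x) ^ (K + 1) := by
    rw [map_pow, aeval_X]
    exact Ideal.mem_sup_left (hK hXi)
  obtain ⟨r, hr, s, hs, hrs⟩ := Submodule.mem_sup.1 (hx.aeval_mem_map_sup_pow_iff.1 hmem)
  have hs0 : homogeneousComponent K s = 0 := by
    ext α
    rw [coeff_homogeneousComponent, coeff_zero, ite_eq_right_iff]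
    exact fun hα => (mem_pow_idealOfVars_iff' _ _).1 hs α (hα.trans_lt K.lt_succ_self)
  have := congrArg (homogeneousComponent K) hrs
  rw [map_add, hs0, add_zero, homogeneousComponent_of_mem (isHomogeneous_X_pow i K), if_pos rfl]
    at this
  rw [← this, ← decompose_homogeneousSubmodule_apply]
  exact hI K hr

section Bounds

variable {ι : Type*} {p : ι → MvPolynomial σ k} {g : ι → E} {d : ℕ}

theorem aeval_mem_span_sup_pow (hp : ∀ i, (p i).IsHomogeneous d)
    (hg : ∀ i, g i - aeval x (p i) ∈ Ideal.span (range x) ^ (d + 1))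
    {q : MvPolynomial σ k} {t : ℕ} (hq : q.IsHomogeneous t) (hqp : q ∈ Ideal.span (range p)) :
    aeval x q ∈ Ideal.span (range g) ⊔ Ideal.span (range x) ^ (t + 1) := by
  suffices h : aeval x (homogeneousComponent t q) ∈
      Ideal.span (range g) ⊔ Ideal.span (range x) ^ (t + 1) by
    rwa [homogeneousComponent_of_mem hq, if_pos rfl] at h
  clear hq
  refine Submodule.closure_induction
    (p := fun q _ => aeval x (homogeneousComponent t q) ∈ _ ⊔ _) (by simp) ?_ ?_ hqp
  · intro q r _ _ hq hr
    simpa using add_mem hq hr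
  rintro c _ ⟨i, rfl⟩
  have hcomp : homogeneousComponent t (c • p i) =
      if d ≤ t then homogeneousComponent (t - d) c * p i else 0 := by
    rw [smul_eq_mul, ← decompose_homogeneousSubmodule_apply,
      ← decompose_homogeneousSubmodule_apply]
    exact DirectSum.coe_decompose_mul_of_right_mem (homogeneousSubmodule σ k) t (hp i)
  rw [hcomp]
  split_ifs with hdt
  · obtain ⟨s, rfl⟩ := Nat.exists_eq_add_of_le' hdt
    rw [Nat.add_sub_cancel]
    set b := homogeneousComponent s c
    have hb : b ∈ idealOfVars σ k ^ s :=
      mem_pow_idealOfVars_of_isHomogeneous (homogeneousComponent_isHomogeneous s c)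
    rw [map_mul, ← sub_sub_cancel (aeval x b * g i) (aeval x b * _), ← mul_sub]
    refine sub_mem (Ideal.mem_sup_left (Ideal.mul_mem_left _ _ (Ideal.subset_span ⟨i, rfl⟩))) ?_
    refine Ideal.mem_sup_right ?_
    rw [add_assoc, pow_add]
    exact Ideal.mul_mem_mul (aeval_mem_pow hb) (hg i)
  · simp

variable [Finite σ]

theorem finrank_map_mkQ_le_hilbertFunction (hp : ∀ i, (p i).IsHomogeneous d)
    (hg : ∀ i, g i - aeval x (p i) ∈ Ideal.span (range x) ^ (d + 1)) (t : ℕ) :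
    Module.finrank k (((homogeneousSubmodule σ k t).map (aeval x).toLinearMap).map
        ((Ideal.span (range g) ⊔ Ideal.span (range x) ^ (t + 1)).restrictScalars k).mkQ) ≤
      hilbertFunction (homogeneousSubmodule σ k) (Ideal.span (range p)) t := by
  rw [← Submodule.map_comp]
  refine finrank_map_le_finrank_map fun q hq => ?_
  obtain ⟨hqt, hqp⟩ := Submodule.mem_inf.1 hq
  rw [LinearMap.mem_ker, LinearMap.comp_apply, Submodule.mkQ_apply, Submodule.Quotient.mk_eq_zero]
  exact aeval_mem_span_sup_pow hp hg hqt (Ideal.Quotient.eq_zero_iff_mem.1 hqp)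

theorem rank_quotient_span_sup_pow_le (hx : IsRegularParameterSystem k x)
    (hp : ∀ i, (p i).IsHomogeneous d)
    (hg : ∀ i, g i - aeval x (p i) ∈ Ideal.span (range x) ^ (d + 1)) (N : ℕ) :
    Module.rank k (E ⧸ (Ideal.span (range g) ⊔ Ideal.span (range x) ^ N)) ≤
      (∑ t ∈ Finset.range N,
        hilbertFunction (homogeneousSubmodule σ k) (Ideal.span (range p)) t : ℕ) := by
  induction N with
  | zero =>
    rw [pow_zero, Ideal.one_eq_top, sup_top_eq]
    simp
  | succ t ih =>
    set J := Ideal.span (range g)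
    set U := (homogeneousSubmodule σ k t).map (aeval x).toLinearMap
    have hsup : (J ⊔ Ideal.span (range x) ^ (t + 1)).restrictScalars k ⊔ U =
        (J ⊔ Ideal.span (range x) ^ t).restrictScalars k := by
      rw [Submodule.restrictScalars_sup, Submodule.restrictScalars_sup, hx.pow_eq_map_aeval_sup t,
        sup_assoc, sup_comm U]
    rw [← (Submodule.Quotient.restrictScalarsEquiv k _).rank_eq,
      rank_quotient_eq_rank_quotient_sup_add_rank_map _ U, hsup,
      (Submodule.Quotient.restrictScalarsEquiv k _).rank_eq, Finset.sum_range_succ, Nat.cast_add]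
    refine add_le_add ih ?_
    rw [← Module.finrank_eq_rank]
    exact Nat.cast_le.2 (finrank_map_mkQ_le_hilbertFunction hp hg t)

theorem exists_pow_le_span (hx : IsRegularParameterSystem k x) (hp : ∀ i, (p i).IsHomogeneous d)
    (hg : ∀ i, g i - aeval x (p i) ∈ Ideal.span (range x) ^ (d + 1))
    (hrad : idealOfVars σ k ≤ (Ideal.span (range p)).radical) :
    ∃ K, Ideal.span (range x) ^ K ≤ Ideal.span (range g) := by
  obtain ⟨K, hK⟩ := Ideal.exists_pow_le_of_le_radical_of_fg hrad (idealOfVars_fg σ k)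
  have hfg : (Ideal.span (range x) ^ K).FG := Ideal.FG.pow ⟨(finite_range x).toFinset, by simp⟩
  refine ⟨K, Submodule.le_of_le_smul_of_le_jacobson_bot hfg hx.span_le_jacobson ?_⟩
  rw [smul_eq_mul, ← pow_succ']
  intro a ha
  rw [← Submodule.restrictScalars_mem k, hx.pow_eq_map_aeval_sup] at ha
  obtain ⟨_, ⟨q, hq, rfl⟩, b, hb, rfl⟩ := Submodule.mem_sup.1 ha
  exact add_mem (aeval_mem_span_sup_pow hp hg hq (hK (mem_pow_idealOfVars_of_isHomogeneous hq)))
    (Ideal.mem_sup_right hb)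

end Bounds

section Multiplicity

variable [Fintype σ]

theorem rank_quotient_span_le [Infinite k] {ι : Type*} {p : ι → MvPolynomial σ k} {g : ι → E}
    {d : ℕ} (hx : IsRegularParameterSystem k x) (hp : ∀ i, (p i).IsHomogeneous d)
    (hg : ∀ i, g i - aeval x (p i) ∈ Ideal.span (range x) ^ (d + 1))
    (hrad : idealOfVars σ k ≤ (Ideal.span (range p)).radical) :
    Module.rank k (E ⧸ Ideal.span (range g)) ≤ (d ^ Fintype.card σ : ℕ) := by
  obtain ⟨K, hK⟩ := hx.exists_pow_le_span hp hg hrad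
  have hS : Submodule.span k (range p) ≤ homogeneousSubmodule σ k d :=
    Submodule.span_le.2 (by rintro _ ⟨i, rfl⟩; exact hp i)
  have hspan : Ideal.span (Submodule.span k (range p) : Set (MvPolynomial σ k)) =
      Ideal.span (range p) := Submodule.span_span_of_tower k _ _
  calc Module.rank k (E ⧸ Ideal.span (range g))
      = Module.rank k (E ⧸ (Ideal.span (range g) ⊔ Ideal.span (range x) ^ K)) := by
        rw [sup_eq_left.2 hK]
    _ ≤ _ := hx.rank_quotient_span_sup_pow_le hp hg K
    _ ≤ (d ^ Fintype.card σ : ℕ) := by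
        rw [← hspan] at hrad ⊢
        exact Nat.cast_le.2 (sum_hilbertFunction_span_le hS hrad K)

theorem choose_le_rank_quotient_pow (hx : IsRegularParameterSystem k x) (N : ℕ) :
    ((N + Fintype.card σ).choose (Fintype.card σ) : Cardinal) ≤
      Module.rank k (E ⧸ Ideal.span (range x) ^ (N + 1)) := by
  set φ := ((Ideal.Quotient.mkₐ k (Ideal.span (range x) ^ (N + 1))).comp
    (aeval x)).toLinearMap.domRestrict (restrictTotalDegree σ k N)
  have hφ : Function.Injective φ := by
    refine (injective_iff_map_eq_zero φ).2 fun ⟨q, hq⟩ hq0 => Subtype.ext (ext _ _ fun α => ?_)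
    have hqN := hx.mem_pow_idealOfVars (Ideal.Quotient.eq_zero_iff_mem.1 hq0)
    rcases le_or_gt α.degree N with hα | hα
    · exact (mem_pow_idealOfVars_iff' _ _).1 hqN α (Nat.lt_succ_of_le hα)
    · exact coeff_eq_zero_of_totalDegree_lt (((mem_restrictTotalDegree _ _ _).1 hq).trans_lt hα)
  have := LinearMap.lift_rank_le_of_injective φ hφ
  rwa [rank_restrictTotalDegree, Cardinal.lift_natCast, Cardinal.nat_le_lift_iff] at this

theorem pow_card_le_of_rank_quotient_span_eq (hx : IsRegularParameterSystem k x) {g : σ → E}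
    {d e : ℕ} (hg : ∀ i, g i ∈ Ideal.span (range x) ^ d)
    (he : Module.rank k (E ⧸ Ideal.span (range g)) = e) : d ^ Fintype.card σ ≤ e := by
  rcases eq_or_ne d 0 with rfl | hd
  · rcases isEmpty_or_nonempty σ
    · have := hx.choose_le_rank_quotient_pow 0
      rw [zero_add, pow_one, Subsingleton.elim x g, he] at this
      simpa using this
    · simp
  refine pow_le_of_forall_choose_le hd fun j => ?_
  have hle : Ideal.span (range g) ^ (j + 1) ≤ Ideal.span (range x) ^ (d * (j + 1) - 1 + 1) := by
    rw [Nat.sub_add_cancel (Nat.one_le_iff_ne_zero.2 (by positivity)), pow_mul]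
    exact Ideal.pow_right_mono (Ideal.span_le.2 (range_subset_iff.2 hg)) _
  have hsurj : Function.Surjective (Ideal.Quotient.factorₐ k hle) :=
    Ideal.Quotient.factor_surjective hle
  have := ((hx.choose_le_rank_quotient_pow (d * (j + 1) - 1)).trans
    (LinearMap.rank_le_of_surjective (Ideal.Quotient.factorₐ k hle).toLinearMap hsurj)).trans
    (rank_quotient_span_pow_le he j)
  exact_mod_cast this

theorem rank_quotient_span_eq [Infinite k] (hx : IsRegularParameterSystem k x)
    {p : σ → MvPolynomial σ k} {g : σ → E} {d : ℕ} (hp : ∀ i, (p i).IsHomogeneous d)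
    (hg : ∀ i, g i - aeval x (p i) ∈ Ideal.span (range x) ^ (d + 1))
    [Module.Finite k (E ⧸ Ideal.span (range fun i => aeval x (p i)))] :
    Module.rank k (E ⧸ Ideal.span (range g)) = (d ^ Fintype.card σ : ℕ) := by
  have hmap : (Ideal.span (range p)).map (aeval x) = Ideal.span (range fun i => aeval x (p i)) := by
    rw [Ideal.map_span, ← range_comp, Function.comp_def]
  have hhom : (Ideal.span (range p)).IsHomogeneous (homogeneousSubmodule σ k) :=
    Ideal.homogeneous_span _ _ (by rintro _ ⟨i, rfl⟩; exact ⟨d, hp i⟩)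
  have : Module.Finite k (E ⧸ (Ideal.span (range p)).map (aeval x)) := hmap ▸ inferInstance
  have hupper := hx.rank_quotient_span_le hp hg (hx.idealOfVars_le_radical hhom)
  obtain ⟨e, he⟩ := Cardinal.lt_aleph0.1 (hupper.trans_lt (Cardinal.natCast_lt_aleph0))
  refine le_antisymm hupper ?_
  rw [he, Nat.cast_le]
  refine hx.pow_card_le_of_rank_quotient_span_eq (fun i => ?_) he
  rw [← sub_add_cancel (g i)]
  exact add_mem (Ideal.pow_le_pow_right d.le_succ (hg i))
    (aeval_mem_pow (mem_pow_idealOfVars_of_isHomogeneous (hp i)))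

end Multiplicity

end IsRegularParameterSystem

end RegularParameterSystem

section Hadamard

open scoped ContDiff

universe u

theorem hasFDerivAt_intervalIntegral_of_contDiff {H F : Type u}
    [NormedAddCommGroup H] [NormedSpace ℝ H] [FiniteDimensional ℝ H]
    [NormedAddCommGroup F] [NormedSpace ℝ F] {G : H × ℝ → F} (hG : ContDiff ℝ 1 G) (x₀ : H) :
    HasFDerivAt (fun x => ∫ s in (0 : ℝ)..1, G (x, s))
      (∫ s in (0 : ℝ)..1, (fderiv ℝ G (x₀, s)).comp (ContinuousLinearMap.inl ℝ H ℝ)) x₀ := by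
  have : ProperSpace H := FiniteDimensional.proper ℝ H
  have hG' : Continuous fun y => (fderiv ℝ G y).comp (ContinuousLinearMap.inl ℝ H ℝ) :=
    (hG.continuous_fderiv one_ne_zero).clm_comp continuous_const
  obtain ⟨C, hC⟩ := ((isCompact_closedBall x₀ 1).prod
    (isCompact_Icc (a := (0 : ℝ)) (b := 1))).exists_bound_of_continuousOn hG'.continuousOn
  refine intervalIntegral.hasFDerivAt_integral_of_dominated_of_fderiv_le
    (F' := fun x s => (fderiv ℝ G (x, s)).comp (ContinuousLinearMap.inl ℝ H ℝ))
    (bound := fun _ => C) (closedBall_mem_nhds x₀ one_pos) ?_ ?_ ?_ ?_ ?_ ?_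
  · exact .of_forall fun x => (hG.continuous.comp (.prodMk_right x)).aestronglyMeasurable
  · exact (hG.continuous.comp (.prodMk_right x₀)).intervalIntegrable _ _
  · exact (hG'.comp (.prodMk_right x₀)).aestronglyMeasurable
  · refine .of_forall fun s hs x hx => hC (x, s) ⟨hx, ?_⟩
    rw [uIoc_of_le zero_le_one] at hs
    exact Ioc_subset_Icc_self hs
  · exact intervalIntegrable_const
  · exact .of_forall fun s _ x _ =>
      (hG.differentiable one_ne_zero (x, s)).hasFDerivAt.comp x (hasFDerivAt_prodMk_left x s)

theorem contDiff_intervalIntegral {H F : Type u}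
    [NormedAddCommGroup H] [NormedSpace ℝ H] [FiniteDimensional ℝ H]
    [NormedAddCommGroup F] [NormedSpace ℝ F] {G : H × ℝ → F} (hG : ContDiff ℝ ∞ G) :
    ContDiff ℝ ∞ fun x => ∫ s in (0 : ℝ)..1, G (x, s) := by
  refine contDiff_infty.2 fun k => ?_
  induction k generalizing F with
  | zero =>
    exact contDiff_zero.2 <| continuous_iff_continuousAt.2 fun x =>
      (hasFDerivAt_intervalIntegral_of_contDiff (hG.of_le (by simp)) x).continuousAt
  | succ k ih =>
    have hderiv := hasFDerivAt_intervalIntegral_of_contDiff (hG.of_le (by simp))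
    rw [Nat.cast_succ, contDiff_succ_iff_fderiv]
    refine ⟨fun x => (hderiv x).differentiableAt, by simp, ?_⟩
    rw [funext fun x => (hderiv x).fderiv]
    exact ih (G := fun y => (fderiv ℝ G y).comp (ContinuousLinearMap.inl ℝ H ℝ))
      ((hG.fderiv_right (by simp)).clm_comp contDiff_const)

/-- Hadamard's lemma. -/
theorem exists_contDiff_sub_apply_zero_eq {H F : Type u}
    [NormedAddCommGroup H] [NormedSpace ℝ H] [FiniteDimensional ℝ H]
    [NormedAddCommGroup F] [NormedSpace ℝ F] [CompleteSpace F] {f : H → F} (hf : ContDiff ℝ ∞ f) :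
    ∃ A : H → H →L[ℝ] F, ContDiff ℝ ∞ A ∧ ∀ x, f x - f 0 = A x x := by
  have hsmul : ContDiff ℝ ∞ fun y : H × ℝ => fderiv ℝ f (y.2 • y.1) :=
    (hf.fderiv_right (m := ∞) (by simp)).comp (contDiff_snd.smul contDiff_fst)
  refine ⟨fun x => ∫ s in (0 : ℝ)..1, fderiv ℝ f (s • x), contDiff_intervalIntegral hsmul,
    fun x => ?_⟩
  have hcont : Continuous fun s : ℝ => fderiv ℝ f (s • x) :=
    hsmul.continuous.comp (.prodMk_right x)
  have hderiv : ∀ s ∈ uIcc (0 : ℝ) 1,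
      HasDerivAt (fun s : ℝ => f (s • x)) (fderiv ℝ f (s • x) x) s := fun s _ => by
    simpa [Function.comp_def] using
      (hf.differentiable (by simp) (s • x)).hasFDerivAt.comp_hasDerivAt s
        ((hasDerivAt_id s).smul_const x)
  have hint := intervalIntegral.integral_eq_sub_of_hasDerivAt hderiv
    ((hcont.clm_apply continuous_const).intervalIntegrable _ _)
  rw [one_smul, zero_smul] at hint
  rw [← hint, ContinuousLinearMap.intervalIntegral_apply (hcont.intervalIntegrable _ _)]

end Hadamard

section LineAsymptotics

open scoped ContDiff

variable {E : Type*} [NormedAddCommGroup E] [NormedSpace ℝ E]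

theorem tendsto_smul_nhdsGT_zero (v : E) : Tendsto (fun t : ℝ => t • v) (𝓝[>] 0) (𝓝 0) := by
  have h : Tendsto (fun t : ℝ => t • v) (𝓝 0) (𝓝 ((0 : ℝ) • v)) :=
    (continuous_id.smul continuous_const).tendsto 0
  simpa using h.mono_left nhdsWithin_le_nhds

theorem isBigO_comp_smul {F : Type*} [NormedAddCommGroup F] {f : E → F} {N : ℕ}
    (hf : f =O[𝓝 0] fun x => ‖x‖ ^ N) (v : E) :
    (fun t : ℝ => f (t • v)) =O[𝓝[>] 0] (· ^ N) := by
  refine (hf.comp_tendsto (tendsto_smul_nhdsGT_zero v)).trans ?_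
  refine IsBigO.of_bound (‖v‖ ^ N) (.of_forall fun t => ?_)
  simp [norm_smul, mul_pow, mul_comm]

theorem isBigO_inv_pow_mul_iff {g : ℝ → ℝ} {j k : ℕ} :
    (fun t => (t ^ k)⁻¹ * g t) =O[𝓝[>] 0] (· ^ j) ↔ g =O[𝓝[>] 0] (· ^ (k + j)) := by
  constructor <;> intro h
  · refine ((isBigO_refl (fun t : ℝ => t ^ k) _).mul h).congr' ?_ (.of_forall fun t => ?_)
    · filter_upwards [self_mem_nhdsWithin] with t (ht : 0 < t)
      rw [mul_inv_cancel_left₀ (by positivity)]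
    · exact (pow_add t k j).symm
  · refine ((isBigO_refl (fun t : ℝ => (t ^ k)⁻¹) _).mul h).congr' .rfl ?_
    filter_upwards [self_mem_nhdsWithin] with t (ht : 0 < t)
    rw [pow_add, inv_mul_cancel_left₀ (by positivity)]

theorem tendsto_zero_of_isBigO_pow {g : ℝ → ℝ} {j : ℕ} (hj : j ≠ 0)
    (hg : g =O[𝓝[>] 0] (· ^ j)) : Tendsto g (𝓝[>] 0) (𝓝 0) := by
  refine hg.trans_tendsto ?_
  have h : Tendsto (fun t : ℝ => t ^ j) (𝓝 0) (𝓝 (0 ^ j)) := (continuous_pow j).tendsto 0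
  rw [zero_pow hj] at h
  exact h.mono_left nhdsWithin_le_nhds

theorem coeff_eq_zero_of_isBigO_pow {r : Polynomial ℝ} {N : ℕ}
    (hr : (fun t => r.eval t) =O[𝓝[>] 0] (· ^ N)) {k : ℕ} (hk : k < N) : r.coeff k = 0 := by
  suffices h : ∀ M ≤ N, Polynomial.X ^ M ∣ r from
    Polynomial.X_pow_dvd_iff.1 (h N le_rfl) k hk
  intro M
  induction M with
  | zero => simp
  | succ M ih =>
    intro hM
    obtain ⟨s, rfl⟩ := ih (by lia)
    obtain ⟨j, rfl⟩ := Nat.exists_eq_add_of_le (Nat.le_of_succ_le hM)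
    have hs : (fun t => s.eval t) =O[𝓝[>] 0] (· ^ j) := by
      refine (isBigO_inv_pow_mul_iff.2 hr).congr' ?_ .rfl
      filter_upwards [self_mem_nhdsWithin] with t (ht : 0 < t)
      simp [inv_mul_cancel_left₀ (pow_ne_zero M ht.ne')]
    have hs0 : s.eval 0 = 0 := tendsto_nhds_unique
      ((s.continuous.tendsto 0).mono_left nhdsWithin_le_nhds)
      (tendsto_zero_of_isBigO_pow (by lia) hs)
    rw [pow_succ]
    exact mul_dvd_mul_left _ (Polynomial.X_dvd_iff.2 (by
      rwa [Polynomial.coeff_zero_eq_eval_zero]))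

theorem iteratedDeriv_comp_smul_zero {f : E → ℝ} {k : ℕ} (hf : ContDiff ℝ k f) (v : E) :
    iteratedDeriv k (fun t : ℝ => f (t • v)) 0 = iteratedFDeriv ℝ k f 0 fun _ => v := by
  have h := (ContinuousLinearMap.toSpanSingleton ℝ v).iteratedFDeriv_comp_right hf 0 le_rfl
  rw [iteratedDeriv_eq_iteratedFDeriv]
  simpa [Function.comp_def] using DFunLike.congr_fun h fun _ => 1

theorem sub_sum_inPart_isLittleO {f : E → ℝ} {N : ℕ} (hf : ContDiff ℝ N f) (v : E) :
    (fun t : ℝ => f (t • v) - ∑ k ∈ Finset.range (N + 1), t ^ k * inPart f k v)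
      =o[𝓝 0] (· ^ N) := by
  have hline : ContDiff ℝ N fun t : ℝ => f (t • v) :=
    hf.comp (contDiff_id.smul contDiff_const)
  refine (taylor_isLittleO_univ (x₀ := 0) hline).congr (fun t => ?_) fun t => by rw [sub_zero]
  rw [taylor_within_apply]
  congr 1
  refine Finset.sum_congr rfl fun k hk => ?_
  have hkN : k ≤ N := Nat.lt_succ_iff.1 (Finset.mem_range.1 hk)
  rw [iteratedDerivWithin_univ, iteratedDeriv_comp_smul_zero (hf.of_le (by exact_mod_cast hkN)),
    inPart, sub_zero, smul_eq_mul, smul_eq_mul]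
  ring

theorem inPart_eq_coeff {f : E → ℝ} {N k : ℕ} {v : E} {r : Polynomial ℝ} (hf : ContDiff ℝ N f)
    (hr : (fun t : ℝ => f (t • v) - r.eval t) =O[𝓝[>] 0] (· ^ N)) (hk : k < N) :
    inPart f k v = r.coeff k := by
  set T : Polynomial ℝ :=
    ∑ j ∈ Finset.range (N + 1), Polynomial.monomial j (inPart f j v) with hT
  have hTeval : ∀ t, T.eval t = ∑ j ∈ Finset.range (N + 1), t ^ j * inPart f j v := fun t => by
    simp [hT, Polynomial.eval_finsetSum, mul_comm]
  have hTcoeff : T.coeff k = inPart f k v := by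
    simp [hT, Polynomial.finsetSum_coeff, Polynomial.coeff_monomial, hk.le]
  have hTaylor := ((sub_sum_inPart_isLittleO hf v).isBigO).mono
    (nhdsWithin_le_nhds (s := Ioi (0 : ℝ)))
  have hsub : (fun t => (T - r).eval t) =O[𝓝[>] 0] (· ^ N) :=
    (hr.sub hTaylor).congr_left fun t => by rw [Polynomial.eval_sub, hTeval]; ring
  rw [← hTcoeff, ← sub_eq_zero, ← Polynomial.coeff_sub]
  exact coeff_eq_zero_of_isBigO_pow hsub hk

end LineAsymptotics

section Order

variable {E : Type*} [NormedAddCommGroup E] [NormedSpace ℝ E] {f : E → ℝ} {m : ℕ}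

theorem HasOrderAt.isBigO_pow (hf : HasOrderAt f 0 m) (hf0 : f 0 = 0) (v : E) :
    (fun t : ℝ => f (t • v)) =O[𝓝[>] 0] (· ^ m) := by
  rcases eq_or_ne v 0 with rfl | hv
  · simpa [hf0] using isBigO_zero _ _
  obtain ⟨L, hL⟩ := hf.1 v hv
  simp only [zero_add, Real.rpow_natCast, smul_eq_mul] at hL
  exact (isBigO_inv_pow_mul_iff (j := 0)).1 (by simpa only [pow_zero] using hL.isBigO_one ℝ)

theorem HasOrderAt.inPart_eq_zero (hf : HasOrderAt f 0 m) (hf0 : f 0 = 0) (hfm : ContDiff ℝ m f)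
    {k : ℕ} (hk : k < m) (v : E) : inPart f k v = 0 := by
  simpa using inPart_eq_coeff (r := 0) hfm (by simpa using hf.isBigO_pow hf0 v) hk

theorem HasOrderAt.le_of_isBigO (hf : HasOrderAt f 0 m) {k : ℕ}
    (hfk : f =O[𝓝 0] fun x => ‖x‖ ^ k) : k ≤ m := by
  by_contra! hmk
  obtain ⟨j, rfl⟩ := Nat.exists_eq_add_of_lt hmk
  obtain ⟨v, -, L, hL0, hL⟩ := hf.2
  simp only [zero_add, Real.rpow_natCast, smul_eq_mul] at hL
  exact hL0 <| tendsto_nhds_unique hL <| tendsto_zero_of_isBigO_pow j.succ_ne_zero <|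
    isBigO_inv_pow_mul_iff.2 (isBigO_comp_smul hfk v)

theorem HasOrderAt.ne_zero (hf : HasOrderAt f 0 m) (hf0 : f 0 = 0) (hfc : ContinuousAt f 0) :
    m ≠ 0 := by
  rintro rfl
  obtain ⟨v, -, L, hL0, hL⟩ := hf.2
  have hlim : Tendsto (fun t : ℝ => f (t • v)) (𝓝[>] 0) (𝓝 (f 0)) :=
    hfc.tendsto.comp (tendsto_smul_nhdsGT_zero v)
  simp only [zero_add, Nat.cast_zero, Real.rpow_zero, inv_one, one_smul] at hL
  exact hL0 (hf0 ▸ tendsto_nhds_unique hL hlim)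

end Order

section SmoothGerms

open MvPolynomial
open scoped ContDiff

variable {n : ℕ} {f g : Eucl n → ℝ}

/-- The element of `E_n` represented by a globally defined smooth function. -/
def smoothGerm (hf : ContDiff ℝ ∞ f) : smoothGerms n := ⟨f, f, hf, rfl⟩

theorem exists_eq_smoothGerm (a : smoothGerms n) :
    ∃ (f : Eucl n → ℝ) (hf : ContDiff ℝ ∞ f), a = smoothGerm hf := by
  obtain ⟨_, f, hf, rfl⟩ := a
  exact ⟨f, hf, rfl⟩

theorem smoothGerm_eq_iff {hf : ContDiff ℝ ∞ f} {hg : ContDiff ℝ ∞ g} :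
    smoothGerm hf = smoothGerm hg ↔ f =ᶠ[𝓝 0] g :=
  Subtype.ext_iff.trans Germ.coe_eq

theorem smoothGerm_add (hf : ContDiff ℝ ∞ f) (hg : ContDiff ℝ ∞ g) :
    smoothGerm hf + smoothGerm hg = smoothGerm (hf.add hg) := rfl

theorem smoothGerm_sub (hf : ContDiff ℝ ∞ f) (hg : ContDiff ℝ ∞ g) :
    smoothGerm hf - smoothGerm hg = smoothGerm (hf.sub hg) := rfl

theorem smoothGerm_mul (hf : ContDiff ℝ ∞ f) (hg : ContDiff ℝ ∞ g) :
    smoothGerm hf * smoothGerm hg = smoothGerm (hf.mul hg) := rfl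

theorem algebraMap_eq_smoothGerm (c : ℝ) :
    algebraMap ℝ (smoothGerms n) c = smoothGerm (contDiff_const (c := c)) := by
  rw [Algebra.algebraMap_eq_smul_one]
  refine Subtype.ext (Germ.coe_eq.2 (.of_forall fun x => ?_))
  simp

theorem contDiff_apply_coord (i : Fin n) : ContDiff ℝ ∞ fun x : Eucl n => x i :=
  (EuclideanSpace.proj i : Eucl n →L[ℝ] ℝ).contDiff

/-- The germ of the `i`-th coordinate function on `ℝ^n`. -/
def coord (i : Fin n) : smoothGerms n := smoothGerm (contDiff_apply_coord i)

variable (n) in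
/-- The ideal `𝔪` of `E_n` generated by the coordinate germs. -/
abbrev coordIdeal : Ideal (smoothGerms n) := Ideal.span (range coord)

theorem contDiff_eval (q : MvPolynomial (Fin n) ℝ) :
    ContDiff ℝ ∞ fun x : Eucl n => eval x q := by
  induction q using MvPolynomial.induction_on with
  | C c => simpa using contDiff_const
  | add p q hp hq => simpa using hp.add hq
  | mul_X p i hp =>
    simpa using hp.mul (contDiff_apply_coord i)

theorem aeval_coord (q : MvPolynomial (Fin n) ℝ) :
    aeval coord q = smoothGerm (contDiff_eval q) := by
  induction q using MvPolynomial.induction_on with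
  | C c =>
    rw [aeval_C, algebraMap_eq_smoothGerm, smoothGerm_eq_iff]
    exact .of_forall fun x => by simp
  | add p q hp hq =>
    rw [map_add, hp, hq, smoothGerm_add, smoothGerm_eq_iff]
    exact .of_forall fun x => by simp
  | mul_X p i hp =>
    rw [map_mul, hp, aeval_X, coord, smoothGerm_mul, smoothGerm_eq_iff]
    exact .of_forall fun x => by simp

variable (n) in
/-- The ideal of germs in `E_n` that are `O(‖x‖ ^ N)` at the origin. -/
def growthIdeal (N : ℕ) : Ideal (smoothGerms n) where
  carrier := {a | ∃ (f : Eucl n → ℝ) (hf : ContDiff ℝ ∞ f),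
    a = smoothGerm hf ∧ f =O[𝓝 0] fun x => ‖x‖ ^ N}
  zero_mem' := ⟨0, contDiff_const, rfl, isBigO_zero _ _⟩
  add_mem' := by
    rintro _ _ ⟨f, hf, rfl, hfN⟩ ⟨g, hg, rfl, hgN⟩
    exact ⟨_, hf.add hg, rfl, hfN.add hgN⟩
  smul_mem' := by
    rintro c _ ⟨f, hf, rfl, hfN⟩
    obtain ⟨g, hg, rfl⟩ := exists_eq_smoothGerm c
    have hg1 : g =O[𝓝 0] fun _ => (1 : ℝ) := hg.continuous.continuousAt.isBigO_one ℝ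
    exact ⟨_, hg.mul hf, rfl, by simpa using hg1.mul hfN⟩

theorem smoothGerm_mem_growthIdeal {hf : ContDiff ℝ ∞ f} {N : ℕ} :
    smoothGerm hf ∈ growthIdeal n N ↔ f =O[𝓝 0] fun x => ‖x‖ ^ N := by
  refine ⟨?_, fun hfN => ⟨f, hf, rfl, hfN⟩⟩
  rintro ⟨g, hg, hfg, hgN⟩
  exact (smoothGerm_eq_iff.1 hfg).trans_isBigO hgN

theorem growthIdeal_mul_le (M N : ℕ) :
    growthIdeal n M * growthIdeal n N ≤ growthIdeal n (M + N) := by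
  rw [Ideal.mul_le]
  rintro _ ⟨f, hf, rfl, hfM⟩ _ ⟨g, hg, rfl, hgN⟩
  rw [smoothGerm_mul, smoothGerm_mem_growthIdeal]
  simpa only [pow_add] using hfM.mul hgN

theorem coordIdeal_le_growthIdeal : coordIdeal n ≤ growthIdeal n 1 := by
  rw [Ideal.span_le]
  rintro _ ⟨i, rfl⟩
  refine smoothGerm_mem_growthIdeal.2 (IsBigO.of_bound 1 (.of_forall fun x => ?_))
  simpa using PiLp.norm_apply_le x i

theorem coordIdeal_pow_le_growthIdeal (N : ℕ) :
    coordIdeal n ^ N ≤ growthIdeal n N := by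
  induction N with
  | zero =>
    intro a _
    obtain ⟨f, hf, rfl⟩ := exists_eq_smoothGerm a
    exact smoothGerm_mem_growthIdeal.2 (by simpa using hf.continuous.continuousAt.isBigO_one ℝ)
  | succ N ih =>
    rw [pow_succ]
    exact (Ideal.mul_mono ih coordIdeal_le_growthIdeal).trans (growthIdeal_mul_le N 1)

theorem isBigO_of_smoothGerm_mem_pow {hf : ContDiff ℝ ∞ f} {N : ℕ}
    (h : smoothGerm hf ∈ coordIdeal n ^ N) : f =O[𝓝 0] fun x => ‖x‖ ^ N :=
  smoothGerm_mem_growthIdeal.1 (coordIdeal_pow_le_growthIdeal N h)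

theorem smoothGerm_sub_algebraMap_mem_coordIdeal (hf : ContDiff ℝ ∞ f) :
    smoothGerm hf - algebraMap ℝ (smoothGerms n) (f 0) ∈ coordIdeal n := by
  obtain ⟨A, hA, hfA⟩ := exists_contDiff_sub_apply_zero_eq hf
  let h (i : Fin n) : smoothGerms n :=
    smoothGerm (hA.clm_apply (contDiff_const (c := EuclideanSpace.single i 1)))
  have hsum : smoothGerm hf - algebraMap ℝ (smoothGerms n) (f 0) = ∑ i, coord i * h i := by
    refine Subtype.ext ?_
    rw [algebraMap_eq_smoothGerm, AddSubmonoidClass.coe_finsetSum]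
    refine .trans ?_ (map_sum (Germ.coeRingHom (R := ℝ) (𝓝 (0 : Eucl n)))
      (fun i x => x i * A x (EuclideanSpace.single i 1)) Finset.univ)
    refine Germ.coe_eq.2 (.of_forall fun x => ?_)
    calc f x - f 0 = A x x := hfA x
      _ = A x (∑ i, x i • EuclideanSpace.single i 1) := by
        congr 1
        simpa using ((EuclideanSpace.basisFun (Fin n) ℝ).sum_repr x).symm
      _ = (∑ i, fun x : Eucl n => x i * A x (EuclideanSpace.single i 1)) x := by
        simp [Finset.sum_apply]
  rw [hsum]
  exact Ideal.sum_mem _ fun i _ => Ideal.mul_mem_right _ _ (Ideal.subset_span ⟨i, rfl⟩)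

end SmoothGerms

section LineRestriction

open MvPolynomial

variable {σ R : Type*} [CommSemiring R]

theorem eval_aeval_C_mul_X (q : MvPolynomial σ R) (v : σ → R) (t : R) :
    (aeval (fun i => Polynomial.C (v i) * Polynomial.X) q).eval t = eval (t • v) q := by
  induction q using MvPolynomial.induction_on with
  | C c => simp
  | add p q hp hq => simp [hp, hq]
  | mul_X p i hp => simp [hp, mul_comm t]

theorem coeff_aeval_C_mul_X (q : MvPolynomial σ R) (v : σ → R) (k : ℕ) :
    (aeval (fun i => Polynomial.C (v i) * Polynomial.X) q).coeff k =
      eval v (homogeneousComponent k q) := by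
  induction q using MvPolynomial.induction_on' with
  | monomial α c =>
    have haeval : aeval (fun i => Polynomial.C (v i) * Polynomial.X) (monomial α c) =
        Polynomial.C (eval v (monomial α c)) * Polynomial.X ^ α.degree := by
      simp only [aeval_monomial, eval_monomial, mul_pow, Finsupp.prod_mul, map_mul, map_finsuppProd,
        map_pow, Polynomial.algebraMap_eq, mul_assoc]
      simp [Finsupp.prod, Finset.prod_pow_eq_pow_sum, Finsupp.degree_apply]
    rw [haeval, Polynomial.coeff_C_mul_X_pow,
      homogeneousComponent_of_mem (isHomogeneous_monomial c rfl)]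
    split_ifs <;> simp
  | add p q hp hq => simp [hp, hq]

end LineRestriction

section TaylorApproximation

open MvPolynomial
open scoped ContDiff

variable {n : ℕ} {f : Eucl n → ℝ}

theorem isUnit_smoothGerm (hf : ContDiff ℝ ∞ f) (hf0 : f 0 ≠ 0) : IsUnit (smoothGerm hf) := by
  obtain ⟨r, hr, hball⟩ := nhds_basis_closedBall.eventually_iff.1
    (hf.continuous.continuousAt.eventually_ne hf0)
  let ρ : ContDiffBump (0 : Eucl n) := ⟨r / 2, r, half_pos hr, half_lt_self hr⟩
  have hinv : ContDiff ℝ ∞ fun x => ρ x * (f x)⁻¹ := by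
    refine contDiff_iff_contDiffAt.2 fun x => ?_
    by_cases hx : x ∈ closedBall 0 r
    · exact ρ.contDiffAt.mul (hf.contDiffAt.inv (hball hx))
    · rw [show closedBall 0 r = tsupport ρ from ρ.tsupport_eq.symm,
        notMem_tsupport_iff_eventuallyEq] at hx
      exact (contDiffAt_const (c := 0)).congr_of_eventuallyEq (hx.mono fun y hy => by simp [hy])
  refine IsUnit.of_mul_eq_one (smoothGerm hinv) ?_
  rw [smoothGerm_mul, ← map_one (algebraMap ℝ _), algebraMap_eq_smoothGerm, smoothGerm_eq_iff]
  filter_upwards [ρ.eventuallyEq_one, closedBall_mem_nhds 0 hr] with x hρx hxr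
  rw [hρx, Pi.one_apply, one_mul, mul_inv_cancel₀ (hball hxr)]

theorem coordIdeal_le_jacobson : coordIdeal n ≤ Ideal.jacobson ⊥ := by
  intro a ha
  refine Ideal.mem_jacobson_bot.2 fun b => ?_
  obtain ⟨f, hf, hfab⟩ := exists_eq_smoothGerm (a * b)
  have hfm : smoothGerm hf ∈ coordIdeal n ^ 1 := by
    rw [pow_one, ← hfab]
    exact Ideal.mul_mem_right b _ ha
  have hf0 : f 0 = 0 := (isBigO_of_smoothGerm_mem_pow hfm).eq_zero_imp.self_of_nhds (by simp)
  rw [hfab, ← map_one (algebraMap ℝ _), algebraMap_eq_smoothGerm, smoothGerm_add]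
  exact isUnit_smoothGerm _ (by simp [hf0])

theorem inPart_eq_eval_homogeneousComponent {hf : ContDiff ℝ ∞ f} {q : MvPolynomial (Fin n) ℝ}
    {N k : ℕ} (hq : smoothGerm hf - aeval coord q ∈ coordIdeal n ^ N) (hk : k < N) (v : Eucl n) :
    inPart f k v = eval v (homogeneousComponent k q) := by
  rw [← coeff_aeval_C_mul_X]
  rw [aeval_coord, smoothGerm_sub] at hq
  refine inPart_eq_coeff (hf.of_le (by exact_mod_cast le_top)) ?_ hk
  simpa only [eval_aeval_C_mul_X, WithLp.ofLp_smul] using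
    isBigO_comp_smul (isBigO_of_smoothGerm_mem_pow hq) v

theorem mem_pow_idealOfVars_of_inPart_eq_zero {hf : ContDiff ℝ ∞ f}
    {q : MvPolynomial (Fin n) ℝ} {N m : ℕ} (hq : smoothGerm hf - aeval coord q ∈ coordIdeal n ^ N)
    (hmN : m ≤ N) (hfm : ∀ k < m, ∀ v, inPart f k v = 0) : q ∈ idealOfVars (Fin n) ℝ ^ m := by
  refine (mem_pow_idealOfVars_iff' _ _).2 fun α hα => ?_
  have hzero : homogeneousComponent α.degree q = 0 := MvPolynomial.funext fun v => by
    simpa [hfm _ hα] using (inPart_eq_eval_homogeneousComponent hq (hα.trans_le hmN)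
      (WithLp.toLp 2 v)).symm
  simpa [coeff_homogeneousComponent] using congrArg (coeff α) hzero

theorem isRegularParameterSystem_coord : IsRegularParameterSystem ℝ (coord (n := n)) where
  exists_sub_algebraMap_mem a := by
    obtain ⟨f, hf, rfl⟩ := exists_eq_smoothGerm a
    exact ⟨f 0, smoothGerm_sub_algebraMap_mem_coordIdeal hf⟩
  span_le_jacobson := coordIdeal_le_jacobson
  mem_pow_idealOfVars {q N} hq := by
    have hzero : smoothGerm (contDiff_const (c := 0)) - aeval coord q ∈ coordIdeal n ^ N := by
      rw [← algebraMap_eq_smoothGerm, map_zero, zero_sub]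
      exact neg_mem hq
    refine mem_pow_idealOfVars_of_inPart_eq_zero hzero le_rfl fun k _ v => ?_
    cases k <;> simp [inPart]

theorem exists_isHomogeneous_sub_aeval_coord_mem (hf : ContDiff ℝ ∞ f) {m : ℕ}
    (hfm : ∀ k < m, ∀ v, inPart f k v = 0) :
    ∃ P : MvPolynomial (Fin n) ℝ, P.IsHomogeneous m ∧ (∀ v : Eucl n, inPart f m v = eval v P) ∧
      smoothGerm hf - aeval coord P ∈ coordIdeal n ^ (m + 1) := by
  obtain ⟨q, hq⟩ := isRegularParameterSystem_coord.exists_sub_aeval_mem_pow (smoothGerm hf) m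
  have hqm := mem_pow_idealOfVars_of_inPart_eq_zero hq m.le_succ hfm
  refine ⟨homogeneousComponent m q, homogeneousComponent_isHomogeneous m q,
    inPart_eq_eval_homogeneousComponent hq m.lt_succ_self, ?_⟩
  have htail : q - homogeneousComponent m q ∈ idealOfVars (Fin n) ℝ ^ (m + 1) := by
    refine (mem_pow_idealOfVars_iff' _ _).2 fun α hα => ?_
    rw [coeff_sub, coeff_homogeneousComponent]
    rcases (Nat.lt_succ_iff.1 hα).lt_or_eq with hlt | heq
    · rw [if_neg hlt.ne, sub_zero, (mem_pow_idealOfVars_iff' _ _).1 hqm α hlt]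
    · rw [if_pos heq, sub_self]
  simpa using add_mem hq (IsRegularParameterSystem.aeval_mem_pow (x := coord) htail)

theorem HasOrderAt.isBigO (hf : ContDiff ℝ ∞ f) (hf0 : f 0 = 0) {m : ℕ} (ho : HasOrderAt f 0 m) :
    f =O[𝓝 0] fun x => ‖x‖ ^ m := by
  obtain ⟨P, hP, -, hfP⟩ := exists_isHomogeneous_sub_aeval_coord_mem hf fun k hk =>
    ho.inPart_eq_zero hf0 (hf.of_le (by exact_mod_cast le_top)) hk
  refine isBigO_of_smoothGerm_mem_pow (hf := hf) ?_
  simpa using add_mem (Ideal.pow_le_pow_right m.le_succ hfP)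
    (IsRegularParameterSystem.aeval_mem_pow (mem_pow_idealOfVars_of_isHomogeneous hP))

end TaylorApproximation

section Derivation

theorem derivation_apply_mem_pow {k A : Type*} [CommSemiring k] [CommSemiring A] [Algebra k A]
    (D : Derivation k A A) {I : Ideal A} {N : ℕ} {a : A} (ha : a ∈ I ^ (N + 1)) :
    D a ∈ I ^ N := by
  induction N generalizing a with
  | zero => simp
  | succ N ih =>
    rw [pow_succ] at ha
    refine Submodule.mul_induction_on ha (fun b hb c hc => ?_) fun b c hb hc => ?_
    · rw [D.leibniz, smul_eq_mul, smul_eq_mul, pow_succ, mul_comm c]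
      exact add_mem (Ideal.mul_mem_right _ _ (by rwa [← pow_succ])) (Ideal.mul_mem_mul (ih hb) hc)
    · rw [map_add]
      exact add_mem hb hc

end Derivation

section MilnorNumber

open MvPolynomial
open scoped ContDiff

variable {n : ℕ} {f : Eucl n → ℝ}

theorem contDiff_fderiv_apply (hf : ContDiff ℝ ∞ f) (v : Eucl n) :
    ContDiff ℝ ∞ fun x => fderiv ℝ f x v :=
  (hf.fderiv_right (m := ∞) (by simp)).clm_apply contDiff_const

/-- The derivation `∂_v` of `E_n` given by the derivative in the direction `v`. -/
def directionalDerivation (v : Eucl n) : Derivation ℝ (smoothGerms n) (smoothGerms n) :=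
  Derivation.mk'
    { toFun a := ⟨Germ.map' (fun f x => fderiv ℝ f x v)
          (fun _ _ h => (h.fderiv (𝕜 := ℝ)).fun_comp (· v)) a.1, by
        obtain ⟨f, hf, rfl⟩ := exists_eq_smoothGerm a
        exact ⟨_, contDiff_fderiv_apply hf v, rfl⟩⟩
      map_add' a b := by
        obtain ⟨f, hf, rfl⟩ := exists_eq_smoothGerm a
        obtain ⟨g, hg, rfl⟩ := exists_eq_smoothGerm b
        refine Subtype.ext (Germ.coe_eq.2 (.of_forall fun x => ?_))
        exact congrArg (· v)
          (fderiv_add (hf.differentiable (by simp) x) (hg.differentiable (by simp) x))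
      map_smul' c a := by
        obtain ⟨f, hf, rfl⟩ := exists_eq_smoothGerm a
        refine Subtype.ext (Germ.coe_eq.2 (.of_forall fun x => ?_))
        exact congrArg (· v) (fderiv_const_smul (hf.differentiable (by simp) x) c) }
    fun a b => by
      obtain ⟨f, hf, rfl⟩ := exists_eq_smoothGerm a
      obtain ⟨g, hg, rfl⟩ := exists_eq_smoothGerm b
      refine Subtype.ext (Germ.coe_eq.2 (.of_forall fun x => ?_))
      exact congrArg (· v)
        (fderiv_mul (hf.differentiable (by simp) x) (hg.differentiable (by simp) x))

theorem directionalDerivation_smoothGerm (hf : ContDiff ℝ ∞ f) (v : Eucl n) :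
    directionalDerivation v (smoothGerm hf) = smoothGerm (contDiff_fderiv_apply hf v) := rfl

theorem directionalDerivation_single_coord (i j : Fin n) :
    directionalDerivation (EuclideanSpace.single i 1) (coord j) =
      algebraMap ℝ _ (Pi.single (M := fun _ => ℝ) i 1 j) := by
  rw [coord, directionalDerivation_smoothGerm, algebraMap_eq_smoothGerm, smoothGerm_eq_iff]
  refine .of_forall fun x => ?_
  have hproj := (EuclideanSpace.proj j : Eucl n →L[ℝ] ℝ).hasFDerivAt (x := x)
  calc fderiv ℝ (fun x : Eucl n => x j) x (EuclideanSpace.single i 1)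
    _ = EuclideanSpace.single i (1 : ℝ) j := congrArg (· (EuclideanSpace.single i 1)) hproj.fderiv
    _ = Pi.single (M := fun _ => ℝ) i 1 j := by simp [Pi.single_apply]

theorem directionalDerivation_single_aeval_coord (i : Fin n) (q : MvPolynomial (Fin n) ℝ) :
    directionalDerivation (EuclideanSpace.single i 1) (aeval coord q) =
      aeval coord (pderiv i q) := by
  induction q using MvPolynomial.induction_on with
  | C c => simp
  | add p q hp hq => simp only [map_add, hp, hq]
  | mul_X p j hp =>
    simp only [map_mul, aeval_X, Derivation.leibniz, hp, directionalDerivation_single_coord,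
      pderiv_X, map_add, smul_eq_mul]
    congr 2
    rcases eq_or_ne i j with rfl | hij <;> simp [*]

theorem jacobianIdeal_eq_span (hf : ContDiff ℝ ∞ f) :
    jacobianIdeal n f = Ideal.span (range fun i =>
      directionalDerivation (EuclideanSpace.single i 1) (smoothGerm hf)) := by
  refine congrArg Ideal.span (Set.ext fun a => exists_congr fun i => ?_)
  exact ⟨fun h => Subtype.ext h.symm, fun h => congrArg Subtype.val h.symm⟩

theorem milnor_eq_pow_of_hasOrderAt (hf : ContDiff ℝ ∞ f) (hf0 : f 0 = 0) {m : ℕ}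
    (ho : HasOrderAt f 0 m) (hfin : milnor n (inPart f m) < Cardinal.aleph0) :
    milnor n f = ((m - 1) ^ n : ℕ) := by
  have hm : m ≠ 0 := ho.ne_zero hf0 hf.continuous.continuousAt
  obtain ⟨P, hP, hinPart, hfP⟩ := exists_isHomogeneous_sub_aeval_coord_mem hf fun k hk =>
    ho.inPart_eq_zero hf0 (hf.of_le (by exact_mod_cast le_top)) hk
  have hpartial (i : Fin n) :
      directionalDerivation (EuclideanSpace.single i 1) (smoothGerm hf) -
        aeval coord (pderiv i P) ∈ coordIdeal n ^ (m - 1 + 1) := by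
    rw [Nat.sub_add_cancel (Nat.one_le_iff_ne_zero.2 hm),
      ← directionalDerivation_single_aeval_coord, ← map_sub]
    exact derivation_apply_mem_pow _ hfP
  rw [funext hinPart, milnor, jacobianIdeal_eq_span (contDiff_eval P), ← aeval_coord,
    funext fun i => directionalDerivation_single_aeval_coord i P] at hfin
  have : Module.Finite ℝ
      (smoothGerms n ⧸ Ideal.span (range fun i => aeval coord (pderiv i P))) :=
    Module.rank_lt_aleph0_iff.1 hfin
  rw [milnor, jacobianIdeal_eq_span hf]
  simpa using isRegularParameterSystem_coord.rank_quotient_span_eq (fun i => hP.pderiv) hpartial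

end MilnorNumber

section BiLipschitzInvariance

open scoped ContDiff

variable {n : ℕ} {f g : Eucl n → ℝ} {φ : Eucl n → Eucl n}

theorem IsLipeoGermAt.isBigO_id (hφ : IsLipeoGermAt φ) : φ =O[𝓝 0] fun x => x := by
  obtain ⟨hφ0, U, V, hU, -, -, c, -, hc⟩ := hφ
  refine IsBigO.of_bound c ?_
  filter_upwards [hU] with x hx
  simpa [hφ0] using (hc x hx 0 (mem_of_mem_nhds hU)).2

theorem IsLipeoGermAt.exists_rightInverse (hφ : IsLipeoGermAt φ) :
    ∃ ψ : Eucl n → Eucl n, ψ =O[𝓝 0] (fun y => y) ∧ ∀ᶠ y in 𝓝 0, φ (ψ y) = y := by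
  obtain ⟨hφ0, U, V, hU, hV, hbij, c, hc1, hc⟩ := hφ
  choose! ψ hψU hψ using fun y (hy : y ∈ V) => hbij.surjOn hy
  refine ⟨ψ, IsBigO.of_bound c ?_, mem_of_superset hV hψ⟩
  filter_upwards [hV] with y hy
  have hlower := (hc (ψ y) (hψU y hy) 0 (mem_of_mem_nhds hU)).1
  rwa [hφ0, hψ y hy, sub_zero, sub_zero, one_div, inv_mul_le_iff₀ (by positivity)] at hlower

theorem HasOrderAt.le_of_eventuallyEq_comp (hf : ContDiff ℝ ∞ f) (hf0 : f 0 = 0) {k m : ℕ}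
    (hfk : HasOrderAt f 0 k) (hgm : HasOrderAt g 0 m) (hφ : φ =O[𝓝 0] fun x => x)
    (hgf : g =ᶠ[𝓝 0] f ∘ φ) : k ≤ m := by
  have hφ0 : Tendsto φ (𝓝 0) (𝓝 0) := hφ.trans_tendsto tendsto_id
  refine hgm.le_of_isBigO (hgf.trans_isBigO ?_)
  exact ((hfk.isBigO hf hf0).comp_tendsto hφ0).trans (hφ.norm_norm.pow k)

theorem HasOrderAt.eq_of_isLipeoGermAt (hf : ContDiff ℝ ∞ f) (hf0 : f 0 = 0)
    (hg : ContDiff ℝ ∞ g) (hg0 : g 0 = 0) {k m : ℕ} (hfk : HasOrderAt f 0 k)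
    (hgm : HasOrderAt g 0 m) (hφ : IsLipeoGermAt φ) (hgf : g =ᶠ[𝓝 0] f ∘ φ) : k = m := by
  obtain ⟨ψ, hψ, hφψ⟩ := hφ.exists_rightInverse
  refine le_antisymm (hfk.le_of_eventuallyEq_comp hf hf0 hgm hφ.isBigO_id hgf)
    (hgm.le_of_eventuallyEq_comp hg hg0 hfk hψ ?_)
  filter_upwards [hφψ, (hψ.trans_tendsto tendsto_id).eventually hgf] with y hy hgy
  rw [Function.comp_apply, hgy, Function.comp_apply, hy]

end BiLipschitzInvariance

/-- if `{f_t}` is an `R`-bi-Lipschitz trivial family of `C^∞` germs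
`(ℝ^n, 0) → (ℝ, 0)` such that each `f_t` has finite order and `μ(in(f_t)) < ∞`, then
`μ(f_t) = μ(f_0)` for all `t ∈ [0, 1]`. -/
theorem milnor_constant_of_biLipschitz_trivial {n : ℕ} (f : ℝ → Eucl n → ℝ)
    (hsm : ∀ t ∈ Icc (0 : ℝ) 1, ContDiff ℝ (⊤ : ℕ∞) (f t))
    (h0 : ∀ t ∈ Icc (0 : ℝ) 1, f t 0 = 0)
    (htriv : ∀ t ∈ Icc (0 : ℝ) 1, ∃ φ : Eucl n → Eucl n,
      IsLipeoGermAt φ ∧ ∀ᶠ x in 𝓝 (0 : Eucl n), f t x = f 0 (φ x))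
    (hiso : ∀ t ∈ Icc (0 : ℝ) 1, ∃ m : ℕ, HasOrderAt (f t) 0 (m : ℝ) ∧
      milnor n (inPart (f t) m) < Cardinal.aleph0) :
    ∀ t ∈ Icc (0 : ℝ) 1, milnor n (f t) = milnor n (f 0) := by
  intro t ht
  have h01 : (0 : ℝ) ∈ Icc (0 : ℝ) 1 := left_mem_Icc.2 zero_le_one
  obtain ⟨m, hm, hmfin⟩ := hiso t ht
  obtain ⟨k, hk, hkfin⟩ := hiso 0 h01
  obtain ⟨φ, hφ, hfφ⟩ := htriv t ht
  have hkm : k = m :=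
    hk.eq_of_isLipeoGermAt (hsm 0 h01) (h0 0 h01) (hsm t ht) (h0 t ht) hm hφ hfφ
  rw [milnor_eq_pow_of_hasOrderAt (hsm t ht) (h0 t ht) hm hmfin,
    milnor_eq_pow_of_hasOrderAt (hsm 0 h01) (h0 0 h01) hk hkfin, hkm]
end
end

section
/- Let f, g : (ℝ^n,0) → (ℝ,0) be germs of C^∞ functions such that f has finite order and its initial part in(f) has an algebraically isolated singularity at the origin, i.e. μ(in(f)) < +∞. If f and g are R-C^1 equivalent, then μ(f) = μ(g). -/
open Filter Set Metric Topology Asymptotics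

noncomputable section

set_option synthInstance.maxHeartbeats 1000000

variable {V W : Type*} [NormedAddCommGroup V] [NormedSpace ℝ V]
  [NormedAddCommGroup W] [NormedSpace ℝ W]

/-- `φ` is a germ at `0` of a `C^k` diffeomorphism `(ℝ^n, 0) → (ℝ^n, 0)`. -/
def IsCkDiffeoGermAt {n : ℕ} (k : ℕ∞) (φ : Eucl n → Eucl n) : Prop :=
  φ 0 = 0 ∧ ∃ U V : Set (Eucl n), IsOpen U ∧ IsOpen V ∧ 0 ∈ U ∧ 0 ∈ V ∧
    Set.BijOn φ U V ∧ ContDiffOn ℝ k φ U ∧ ∃ ψ : Eucl n → Eucl n,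
      ContDiffOn ℝ k ψ V ∧ (∀ x ∈ U, ψ (φ x) = x) ∧ ∀ y ∈ V, φ (ψ y) = y

/-!
Both `f` and `g` have the Milnor number of their initial parts, and differentiating the relation
`f = g ∘ φ` along rays shows that `in(f) = in(g) ∘ dφ(0)`, with `dφ(0)` a linear isomorphism.

That `μ(f) = μ(in(f))` comes from the partial derivatives of `in(f)`: their span contains a power
of the maximal ideal, so it has depth `n` in the polynomial ring and their first Koszul homology
vanishes. Relations between the leading forms of the partial derivatives of `f` are therefore
Koszul and lift to relations between the derivatives themselves, and a homogeneous complement of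
the Jacobian ideal of `in(f)` in the polynomial ring maps isomorphically onto `E_n ⧸ J(f)`.
-/

namespace MilnorNumber

section Koszul

variable {R M : Type*} [CommRing R] [AddCommGroup M] [Module R M]

lemma exists_alternatingMap_sub_mul_mem [Module.Free R M] {p : ℕ} (I : Ideal R) (y : R)
    (w : M [⋀^Fin p]→ₗ[R] R) (hw : ∀ v, w v ∈ I ⊔ Ideal.span {y}) :
    ∃ u : M [⋀^Fin p]→ₗ[R] R, ∀ v, w v - y * u v ∈ I := by
  let T : R →ₗ[R] (R ⧸ I) := I.mkQ ∘ₗ LinearMap.mulLeft R y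
  have hmem (v) : I.mkQ (w v) ∈ LinearMap.range T := by
    obtain ⟨a, ha, b, hb, hab⟩ := Submodule.mem_sup.1 (hw v)
    obtain ⟨c, rfl⟩ := Ideal.mem_span_singleton.1 hb
    refine ⟨c, (Submodule.Quotient.eq I).2 ?_⟩
    rw [← hab, LinearMap.mulLeft_apply, sub_add_cancel_right]
    exact neg_mem ha
  let w' : M [⋀^Fin p]→ₗ[R] LinearMap.range T :=
    (I.mkQ.compAlternatingMap w).codRestrict (LinearMap.range T) hmem
  -- exterior powers of a free module are projective
  obtain ⟨h, hh⟩ := Module.projective_lifting_property T.rangeRestrict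
    (exteriorPower.alternatingMapLinearEquiv w') T.surjective_rangeRestrict
  refine ⟨exteriorPower.alternatingMapLinearEquiv.symm h, fun v => ?_⟩
  have hv := congrArg Subtype.val (LinearMap.congr_fun hh (exteriorPower.ιMulti R p v))
  rw [exteriorPower.alternatingMapLinearEquiv_apply_ιMulti] at hv
  rw [exteriorPower.alternatingMapLinearEquiv_symm_apply]
  exact (Submodule.Quotient.eq I).1 hv.symm

lemma alternatingMap_eq_zero_of_lt {m n : ℕ} (hmn : n < m)
    (w : (Fin n → R) [⋀^Fin m]→ₗ[R] R) : w = 0 := by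
  refine Module.Basis.ext_alternating (Pi.basisFun R (Fin n)) fun v hv => ?_
  exact absurd (Fintype.card_le_of_injective v hv) (by simpa using hmn)

/-- The wedge product `ε ∧ z`, contracted with `P`, is `ε P • z - ε ∧ (P ⌟ z)`. -/
lemma alternatizeUncurryFin_cons_sub_mem {p : ℕ} (ε : M →ₗ[R] R) (P : M) (I : Ideal R)
    (z : M [⋀^Fin (p + 1)]→ₗ[R] R) (hz : ∀ v : Fin p → M, z (Fin.cons P v) ∈ I)
    (v : Fin (p + 1) → M) :
    AlternatingMap.alternatizeUncurryFin (ε.smulRight z) (Fin.cons P v) - ε P * z v ∈ I := by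
  rw [AlternatingMap.alternatizeUncurryFin_apply, Fin.sum_univ_succ]
  simp only [Fin.val_zero, pow_zero, one_smul, Fin.cons_zero, LinearMap.smulRight_apply,
    AlternatingMap.smul_apply, smul_eq_mul, Fin.cons_succ, Fin.val_succ]
  rw [Fin.removeNth_zero, Fin.tail_cons, add_sub_cancel_left]
  refine Ideal.sum_mem _ fun i _ => ?_
  have hcons : Fin.removeNth i.succ (Fin.cons P v : Fin (p + 2) → M)
      = Fin.cons P (Fin.removeNth i v) := by
    ext1 j
    cases j using Fin.cases <;> simp [Fin.removeNth]
  rw [hcons]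
  exact zsmul_mem (Ideal.mul_mem_left _ _ (hz _)) _

/-- The ideal generated by the first `k` members of the family `y`. -/
def partialSpan {n : ℕ} (y : Fin n → R) (k : ℕ) : Ideal R :=
  Ideal.span (y '' {j | (j : ℕ) < k})

lemma partialSpan_zero {n : ℕ} (y : Fin n → R) : partialSpan y 0 = ⊥ := by
  simp [partialSpan]

lemma partialSpan_succ {n : ℕ} (y : Fin n → R) (k : Fin n) :
    partialSpan y (k + 1) = partialSpan y k ⊔ Ideal.span {y k} := by
  rw [partialSpan, partialSpan, ← Ideal.span_union, ← image_singleton, ← image_union]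
  congr 2
  ext j
  simp only [mem_ofPred_eq, mem_union, mem_singleton_iff, Fin.ext_iff]
  omega

variable {n : ℕ} (P y : Fin n → R)

lemma exists_contraction_sub_mem_partialSpan (hy : ∀ i, y i ∈ Ideal.span (range P))
    (hreg : ∀ (k : Fin n) a, y k * a ∈ partialSpan y k → a ∈ partialSpan y k)
    (k : ℕ) (hk : k ≤ n) (z : (Fin n → R) [⋀^Fin (k + 1)]→ₗ[R] R)
    (hz : ∀ v : Fin k → Fin n → R, z (Fin.cons P v) ∈ partialSpan y k) :
    ∃ u : (Fin n → R) [⋀^Fin (k + 2)]→ₗ[R] R,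
      ∀ v : Fin (k + 1) → Fin n → R, z v - u (Fin.cons P v) ∈ partialSpan y k := by
  induction hk using Nat.decreasingInduction with
  | self => exact ⟨0, fun v => by simp [alternatingMap_eq_zero_of_lt n.lt_succ_self z]⟩
  | of_succ k hk ih =>
    have hsup : partialSpan y (k + 1) = _ := partialSpan_succ y ⟨k, hk⟩
    obtain ⟨c, hc⟩ := Ideal.mem_span_range_iff_exists_fun.1 (hy ⟨k, hk⟩)
    let ε : (Fin n → R) →ₗ[R] R := ∑ i, c i • LinearMap.proj i
    have hε : ε P = y ⟨k, hk⟩ := by simp [ε, ← hc]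
    let w := AlternatingMap.alternatizeUncurryFin (ε.smulRight z)
    have hw (v) : w (Fin.cons P v) - y ⟨k, hk⟩ * z v ∈ partialSpan y k :=
      hε ▸ alternatizeUncurryFin_cons_sub_mem ε P _ z hz v
    obtain ⟨u, hu⟩ := ih w fun v => by
      rw [hsup, ← sub_add_cancel (w _) (y ⟨k, hk⟩ * z v)]
      exact add_mem (Ideal.mem_sup_left (hw v))
        (Ideal.mem_sup_right (Ideal.mul_mem_right _ _ (Ideal.subset_span rfl)))
    obtain ⟨t, ht⟩ := exists_alternatingMap_sub_mul_mem (partialSpan y k) (y ⟨k, hk⟩)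
      (w - u.curryLeft P) fun v => hsup ▸ hu v
    refine ⟨t, fun v => hreg ⟨k, hk⟩ _ ?_⟩
    have hPP : u.curryLeft P (Fin.cons P v) = 0 :=
      congrArg (fun f => f v) (u.curryLeft_same P)
    have htv := ht (Fin.cons P v)
    rw [AlternatingMap.sub_apply, hPP, sub_zero] at htv
    convert sub_mem htv (hw v) using 1
    ring

/-- Vanishing of the first Koszul homology of `P`, as `span P` has depth at least `n`. -/
lemma exists_alternating_of_sum_mul_eq_zero (hy : ∀ i, y i ∈ Ideal.span (range P))
    (hreg : ∀ (k : Fin n) a, y k * a ∈ partialSpan y k → a ∈ partialSpan y k)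
    (a : Fin n → R) (ha : ∑ i, a i * P i = 0) :
    ∃ C : Fin n → Fin n → R, (∀ i, C i i = 0) ∧ (∀ i j, C i j = -C j i) ∧
      ∀ i, a i = ∑ j, C i j * P j := by
  let L : (Fin n → R) →ₗ[R] R := ∑ i, a i • LinearMap.proj i
  let z : (Fin n → R) [⋀^Fin 1]→ₗ[R] R := AlternatingMap.ofSubsingleton R _ _ 0 L
  have hz (v) : z v = L (v 0) := rfl
  obtain ⟨u, hu⟩ := exists_contraction_sub_mem_partialSpan P y hy hreg 0 n.zero_le z fun v => by
    simp [hz, L, ha]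
  let b := Pi.basisFun R (Fin n)
  refine ⟨fun i j => u ![b j, b i], fun i => ?_, fun i j => ?_, fun i => ?_⟩
  · exact u.map_eq_zero_of_eq _ (i := 0) (j := 1) rfl (by decide)
  · rw [← u.map_swap ![b i, b j] (show (0 : Fin 2) ≠ 1 by decide)]
    refine congrArg u (funext fun k => ?_)
    fin_cases k <;> simp
  · let ℓ : (Fin n → R) →ₗ[R] R := u.toMultilinearMap.toLinearMap ![0, b i] 0
    have hℓ (x) : ℓ x = u ![x, b i] := by
      refine congrArg u (funext fun k => ?_)
      fin_cases k <;> simp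
    have hai : a i = ℓ P := by
      have h := hu ![b i]
      rw [partialSpan_zero, Ideal.mem_bot, sub_eq_zero, hz] at h
      simpa [L, hℓ, b, Pi.single_apply] using h
    rw [hai, ← b.sum_repr P, map_sum]
    refine Finset.sum_congr rfl fun j _ => ?_
    rw [b.sum_repr P, map_smul, hℓ, smul_eq_mul, mul_comm, Pi.basisFun_repr]

end Koszul

section HomogeneousIdeals

open MvPolynomial

variable {σ K : Type*}

section CommSemiring

variable [CommSemiring K]

/-- The homogeneous component of degree `k - d`, read as `0` when `k < d`: the part of a cofactor
that contributes in degree `k` after multiplication by a form of degree `d`. -/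
def shiftedComponent (d k : ℕ) : MvPolynomial σ K →ₗ[K] MvPolynomial σ K :=
  if d ≤ k then homogeneousComponent (k - d) else 0

lemma homogeneousComponent_mul_of_isHomogeneous {d : ℕ} (c : MvPolynomial σ K)
    {p : MvPolynomial σ K} (hp : p.IsHomogeneous d) (k : ℕ) :
    homogeneousComponent k (c * p) = shiftedComponent d k c * p := by
  let _ : GradedAlgebra (homogeneousSubmodule σ K) := MvPolynomial.gradedAlgebra
  have hdecomp (q : MvPolynomial σ K) (i : ℕ) :
      (DirectSum.decompose (homogeneousSubmodule σ K) q i : MvPolynomial σ K)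
        = homogeneousComponent i q := decomposition.decompose'_apply q i
  have h := DirectSum.coe_decompose_mul_of_right_mem (𝒜 := homogeneousSubmodule σ K) (a := c) k hp
  rw [hdecomp, hdecomp] at h
  rw [h, shiftedComponent]
  split_ifs <;> simp

variable {ι : Type*} [Fintype ι] {d : ℕ} {P : ι → MvPolynomial σ K}

lemma homogeneousComponent_sum_mul (hP : ∀ i, (P i).IsHomogeneous d) (c : ι → MvPolynomial σ K)
    (k : ℕ) :
    homogeneousComponent k (∑ i, c i * P i) = ∑ i, shiftedComponent d k (c i) * P i := by
  rw [map_sum]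
  exact Finset.sum_congr rfl fun i _ => homogeneousComponent_mul_of_isHomogeneous _ (hP i) k

omit [Fintype ι] in
lemma homogeneousComponent_mem_span [Finite ι] (hP : ∀ i, (P i).IsHomogeneous d)
    {p : MvPolynomial σ K} (hp : p ∈ Ideal.span (range P)) (k : ℕ) :
    homogeneousComponent k p ∈ Ideal.span (range P) := by
  have := Fintype.ofFinite ι
  obtain ⟨c, rfl⟩ := Ideal.mem_span_range_iff_exists_fun.1 hp
  rw [homogeneousComponent_sum_mul hP]
  exact Ideal.mem_span_range_iff_exists_fun.2 ⟨_, rfl⟩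

lemma exists_eq_sum_shiftedComponent_mul (hP : ∀ i, (P i).IsHomogeneous d) {k : ℕ}
    {Q : MvPolynomial σ K} (hQ : Q.IsHomogeneous k) (hQP : Q ∈ Ideal.span (range P)) :
    ∃ c : ι → MvPolynomial σ K, Q = ∑ i, shiftedComponent d k (c i) * P i := by
  obtain ⟨c, rfl⟩ := Ideal.mem_span_range_iff_exists_fun.1 hQP
  exact ⟨c, by rw [← homogeneousComponent_sum_mul hP, homogeneousComponent_eq_self hQ]⟩

end CommSemiring

section CommRing

variable [CommRing K]

lemma mem_partialSpan_of_X_pow_mul_mem {n : ℕ} (N : ℕ) (k : Fin n) (a : MvPolynomial (Fin n) K)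
    (h : X k ^ N * a ∈ partialSpan (fun i : Fin n => (X i : MvPolynomial (Fin n) K) ^ N) k) :
    a ∈ partialSpan (fun i : Fin n => (X i : MvPolynomial (Fin n) K) ^ N) k := by
  have hmono : partialSpan (fun i : Fin n => (X i : MvPolynomial (Fin n) K) ^ N) k =
      Ideal.span ((fun s => monomial s (1 : K)) ''
        ((fun i : Fin n => Finsupp.single i N) '' {j | (j : ℕ) < k})) := by
    simp_rw [partialSpan, image_image, X_pow_eq_monomial]
  rw [hmono, mem_ideal_span_monomial_image] at h ⊢
  intro s hs
  obtain ⟨_, ⟨j, hj, rfl⟩, hle⟩ := h (Finsupp.single k N + s) (by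
    rw [mem_support_iff, X_pow_eq_monomial, coeff_monomial_mul, one_mul]
    exact mem_support_iff.1 hs)
  refine ⟨_, ⟨j, hj, rfl⟩, ?_⟩
  have hjk : j ≠ k := (Fin.lt_def.2 hj).ne
  simp only [Finsupp.single_le_iff, Finsupp.add_apply] at hle ⊢
  rwa [Finsupp.single_eq_of_ne hjk, zero_add] at hle

lemma exists_alternating_shiftedComponent_of_sum_mul_eq_zero {n d k N : ℕ}
    {P : Fin n → MvPolynomial (Fin n) K} (hP : ∀ i, (P i).IsHomogeneous d)
    (hN : ∀ Q : MvPolynomial (Fin n) K, Q.IsHomogeneous N → Q ∈ Ideal.span (range P))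
    {A : Fin n → MvPolynomial (Fin n) K} (hA : ∀ i, (A i).IsHomogeneous k)
    (hAP : ∑ i, A i * P i = 0) :
    ∃ C : Fin n → Fin n → MvPolynomial (Fin n) K, (∀ i, C i i = 0) ∧ (∀ i j, C i j = -C j i) ∧
      ∀ i, A i = ∑ j, shiftedComponent d k (C i j) * P j := by
  obtain ⟨C, hdiag, hswap, hC⟩ := exists_alternating_of_sum_mul_eq_zero P (fun i => X i ^ N)
    (fun i => hN _ (isHomogeneous_X_pow i N)) (mem_partialSpan_of_X_pow_mul_mem N) A hAP
  refine ⟨C, hdiag, hswap, fun i => ?_⟩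
  rw [← homogeneousComponent_sum_mul hP, ← hC, homogeneousComponent_eq_self (hA i)]

end CommRing

lemma exists_isCompl_of_homogeneousComponent_mem [Field K] (I : Submodule K (MvPolynomial σ K))
    (hI : ∀ p ∈ I, ∀ k, homogeneousComponent k p ∈ I) :
    ∃ B : Submodule K (MvPolynomial σ K),
      IsCompl I B ∧ ∀ b ∈ B, ∀ k, homogeneousComponent k b ∈ B := by
  let S := homogeneousSubmodule σ K
  choose C hC using fun k => (I ⊓ S k).exists_isCompl
  let B : Submodule K (MvPolynomial σ K) := ⨅ k, (C k).comap (homogeneousComponent k)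
  have hB (b) : b ∈ B ↔ ∀ k, homogeneousComponent k b ∈ C k := by simp [B]
  have mem_B {k b} (hb : b ∈ C k) (hbk : b ∈ S k) : b ∈ B := by
    refine (hB b).2 fun j => ?_
    rw [homogeneousComponent_of_mem hbk]
    split_ifs with h
    · exact h ▸ hb
    · exact zero_mem _
  refine ⟨B, ⟨Submodule.disjoint_def.2 fun b hbI hbB => ?_, codisjoint_iff_le_sup.2 fun p _ => ?_⟩,
    fun b hb k => mem_B ((hB b).1 hb k) (homogeneousComponent_isHomogeneous k b)⟩
  · rw [← sum_homogeneousComponent b]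
    exact Finset.sum_eq_zero fun k _ => Submodule.disjoint_def.1 (hC k).disjoint _
      ⟨hI b hbI k, homogeneousComponent_isHomogeneous k b⟩ ((hB b).1 hbB k)
  · rw [← sum_homogeneousComponent p]
    refine sum_mem fun k _ => ?_
    obtain ⟨q, hq, c, hc, hqc⟩ := Submodule.mem_sup.1
      ((hC k).sup_eq_top.ge (Submodule.mem_top (x := homogeneousComponent k p)))
    have hcS : c ∈ S k := by
      rw [← add_sub_cancel_left q c, hqc]
      exact sub_mem (homogeneousComponent_isHomogeneous k p) hq.2
    exact hqc ▸ Submodule.add_mem_sup hq.1 (mem_B hc hcS)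

end HomogeneousIdeals

section LocalAlgebra

open MvPolynomial

lemma sum_alternating_mul_mul_eq_zero {R ι : Type*} [CommRing R] [Fintype ι] {C : ι → ι → R}
    (hdiag : ∀ i, C i i = 0) (hswap : ∀ i j, C i j = -C j i) (F : ι → R) :
    ∑ i, (∑ j, C i j * F j) * F i = 0 := by
  simp_rw [Finset.sum_mul, ← Fintype.sum_prod_type' (f := fun i j => C i j * F j * F i)]
  refine Finset.sum_involution (fun p _ => p.swap) (fun p _ => ?_) (fun p _ hp hpp => hp ?_)
    (fun _ _ => Finset.mem_univ _) (fun p _ => p.swap_swap)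
  · rw [Prod.fst_swap, Prod.snd_swap, hswap p.1 p.2]
    ring
  · rw [show p.2 = p.1 from congrArg Prod.fst hpp, hdiag]
    ring

lemma exists_pow_le_pow_succ_sup_of_finiteDimensional {K E : Type*} [Field K] [CommRing E]
    [Algebra K E] (𝔪 J : Ideal E) [FiniteDimensional K (E ⧸ J)] :
    ∃ N, 𝔪 ^ N ≤ 𝔪 ^ (N + 1) ⊔ J := by
  let c : ℕ →o (Submodule K (E ⧸ J))ᵒᵈ :=
    ⟨fun k => OrderDual.toDual (((𝔪 ^ k).restrictScalars K).map (J.mkQ.restrictScalars K)),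
      fun _ _ h => Submodule.map_mono fun _ hx => Ideal.pow_le_pow_right h hx⟩
  obtain ⟨N, hN⟩ := IsArtinian.monotone_stabilizes c
  refine ⟨N, fun a ha => ?_⟩
  have hmap : (((𝔪 ^ N).restrictScalars K).map (J.mkQ.restrictScalars K)) =
    ((𝔪 ^ (N + 1)).restrictScalars K).map (J.mkQ.restrictScalars K) := hN (N + 1) N.le_succ
  obtain ⟨r, hr, hra⟩ := hmap.le (Submodule.mem_map_of_mem ha)
  rw [← add_sub_cancel r a]
  exact Submodule.add_mem_sup hr ((Submodule.Quotient.eq J).1 hra.symm)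

/-- A family `y` that behaves like a regular system of parameters with residue field `K`: it
generates the ideal `𝔪`, which lies in the Jacobson radical, and the associated graded ring of `𝔪`
is the polynomial ring over `K` in the classes of the `y i`. The intersection of the powers of `𝔪`
may be nonzero, as it is for germs of smooth functions. -/
structure IsCoordinateSystem (K : Type*) {E : Type*} [Field K] [CommRing E] [Algebra K E]
    (𝔪 : Ideal E) {n : ℕ} (y : Fin n → E) : Prop where
  le_jacobson : 𝔪 ≤ Ideal.jacobson ⊥
  span_range : Ideal.span (range y) = 𝔪
  exists_sub_algebraMap_mem : ∀ a, ∃ c : K, a - algebraMap K E c ∈ 𝔪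
  eq_zero_of_aeval_mem : ∀ (k : ℕ) (Q : MvPolynomial (Fin n) K), Q.IsHomogeneous k →
    aeval y Q ∈ 𝔪 ^ (k + 1) → Q = 0

namespace IsCoordinateSystem

variable {K E : Type*} [Field K] [CommRing E] [Algebra K E] {𝔪 : Ideal E} {n : ℕ} {y : Fin n → E}
  (hy : IsCoordinateSystem K 𝔪 y)

include hy

lemma aeval_mem_pow {k : ℕ} {Q : MvPolynomial (Fin n) K} (hQ : Q.IsHomogeneous k) :
    aeval y Q ∈ 𝔪 ^ k := by
  rw [← hy.span_range, Ideal.mem_span_pow_iff_exists_isHomogeneous]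
  exact ⟨map (algebraMap K E) Q, hQ.map _, by rw [eval_map, aeval_def]⟩

lemma exists_leadingForm {k : ℕ} {a : E} (ha : a ∈ 𝔪 ^ k) :
    ∃ Q : MvPolynomial (Fin n) K, Q.IsHomogeneous k ∧ a - aeval y Q ∈ 𝔪 ^ (k + 1) := by
  obtain ⟨p, hp, rfl⟩ := (Ideal.mem_span_pow_iff_exists_isHomogeneous y a).1 (hy.span_range ▸ ha)
  choose c hc using hy.exists_sub_algebraMap_mem
  have hmonomial (r : K) (s) (hs : s ∈ p.support) : (monomial s r).IsHomogeneous k :=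
    isHomogeneous_monomial _ (by_contra fun h => mem_support_iff.1 hs (hp.coeff_eq_zero h))
  refine ⟨∑ s ∈ p.support, monomial s (c (coeff s p)),
    IsHomogeneous.sum _ _ _ fun s hs => hmonomial _ s hs, ?_⟩
  rw [map_sum]
  nth_rewrite 1 [p.as_sum]
  rw [map_sum, ← Finset.sum_sub_distrib]
  refine Ideal.sum_mem _ fun s hs => ?_
  have hpow := hy.aeval_mem_pow (hmonomial 1 s hs)
  rw [aeval_monomial, map_one, one_mul] at hpow
  rw [aeval_monomial, eval_monomial, ← sub_mul, pow_succ']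
  exact Ideal.mul_mem_mul (hc _) hpow

lemma exists_sub_aeval_mem_pow (a : E) (k : ℕ) :
    ∃ A : MvPolynomial (Fin n) K, a - aeval y A ∈ 𝔪 ^ k := by
  induction k with
  | zero => exact ⟨0, by simp⟩
  | succ k ih =>
    obtain ⟨A, hA⟩ := ih
    obtain ⟨Q, -, hQ⟩ := hy.exists_leadingForm hA
    exact ⟨A + Q, by rwa [map_add, ← sub_sub]⟩

lemma homogeneousComponent_eq_zero_of_aeval_mem_pow {k : ℕ} {p : MvPolynomial (Fin n) K}
    (hp : aeval y p ∈ 𝔪 ^ k) (j : ℕ) (hj : j < k) : homogeneousComponent j p = 0 := by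
  induction j using Nat.strong_induction_on with
  | _ j ih =>
    by_cases hjp : j ∈ Finset.range (p.totalDegree + 1)
    swap
    · exact homogeneousComponent_eq_zero _ _ (by simpa using hjp)
    refine hy.eq_zero_of_aeval_mem j _ (homogeneousComponent_isHomogeneous _ _) ?_
    have hsum := sum_homogeneousComponent p
    rw [← Finset.add_sum_erase _ _ hjp] at hsum
    rw [eq_sub_of_add_eq hsum, map_sub, map_sum]
    refine sub_mem (Ideal.pow_le_pow_right hj hp) (Ideal.sum_mem _ fun i hi => ?_)
    rcases (Finset.ne_of_mem_erase hi).lt_or_gt with hij | hij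
    · simp [ih i hij (hij.trans hj)]
    · exact Ideal.pow_le_pow_right hij (hy.aeval_mem_pow (homogeneousComponent_isHomogeneous _ _))

lemma homogeneousComponent_eq_of_aeval_sub_mem {k : ℕ} {p Q : MvPolynomial (Fin n) K}
    (hQ : Q.IsHomogeneous k) (h : aeval y (p - Q) ∈ 𝔪 ^ (k + 1)) :
    homogeneousComponent k p = Q := by
  have h0 := hy.homogeneousComponent_eq_zero_of_aeval_mem_pow h k k.lt_succ_self
  rwa [map_sub, sub_eq_zero, homogeneousComponent_eq_self hQ] at h0

lemma aeval_shiftedComponent_mul_mem (d k : ℕ) (A : MvPolynomial (Fin n) K) {z : E}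
    (hz : z ∈ 𝔪 ^ (d + 1)) : aeval y (shiftedComponent d k A) * z ∈ 𝔪 ^ (k + 1) := by
  unfold shiftedComponent
  split_ifs with hdk
  · rw [show k + 1 = (k - d) + (d + 1) by omega, pow_add]
    exact Ideal.mul_mem_mul (hy.aeval_mem_pow (homogeneousComponent_isHomogeneous _ _)) hz
  · simp

variable {d : ℕ} {P : Fin n → MvPolynomial (Fin n) K} (hP : ∀ i, (P i).IsHomogeneous d)

include hP

lemma exists_forall_isHomogeneous_mem_span
    [FiniteDimensional K (E ⧸ Ideal.span (range fun i => aeval y (P i)))] :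
    ∃ N, ∀ Q : MvPolynomial (Fin n) K, Q.IsHomogeneous N → Q ∈ Ideal.span (range P) := by
  obtain ⟨N, hN⟩ := exists_pow_le_pow_succ_sup_of_finiteDimensional (K := K) 𝔪
    (Ideal.span (range fun i => aeval y (P i)))
  refine ⟨N, fun Q hQ => ?_⟩
  obtain ⟨r, hr, j, hj, hrj⟩ := Submodule.mem_sup.1 (hN (hy.aeval_mem_pow hQ))
  obtain ⟨a, rfl⟩ := Ideal.mem_span_range_iff_exists_fun.1 hj
  choose A hA using fun i => hy.exists_sub_aeval_mem_pow (a i) (N + 1)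
  have hdiff : aeval y (∑ i, A i * P i - Q) ∈ 𝔪 ^ (N + 1) := by
    have hexpand : aeval y (∑ i, A i * P i - Q) =
        -(r + ∑ i, (a i - aeval y (A i)) * aeval y (P i)) := by
      simp only [map_sub, map_sum, map_mul, sub_mul, Finset.sum_sub_distrib, ← hrj]
      ring
    rw [hexpand]
    exact neg_mem (add_mem hr (Ideal.sum_mem _ fun i _ => Ideal.mul_mem_right _ _ (hA i)))
  rw [← hy.homogeneousComponent_eq_of_aeval_sub_mem hQ hdiff]
  exact homogeneousComponent_mem_span hP (Ideal.mem_span_range_iff_exists_fun.2 ⟨_, rfl⟩) N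

variable {F : Fin n → E} (hF : ∀ i, F i - aeval y (P i) ∈ 𝔪 ^ (d + 1))

include hF

lemma exists_mem_span_aeval_sub_mem {k : ℕ} {Q : MvPolynomial (Fin n) K}
    (hQ : Q.IsHomogeneous k) (hQP : Q ∈ Ideal.span (range P)) :
    ∃ j ∈ Ideal.span (range F), aeval y Q - j ∈ 𝔪 ^ (k + 1) := by
  obtain ⟨c, hc⟩ := exists_eq_sum_shiftedComponent_mul hP hQ hQP
  refine ⟨∑ i, aeval y (shiftedComponent d k (c i)) * F i,
    Ideal.mem_span_range_iff_exists_fun.2 ⟨_, rfl⟩, ?_⟩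
  rw [hc, map_sum, ← Finset.sum_sub_distrib]
  refine Ideal.sum_mem _ fun i _ => ?_
  rw [map_mul, ← mul_sub]
  exact hy.aeval_shiftedComponent_mul_mem d k (c i) (sub_mem_comm_iff.1 (hF i))

variable {N : ℕ} (hN : ∀ Q : MvPolynomial (Fin n) K, Q.IsHomogeneous N → Q ∈ Ideal.span (range P))

include hN

lemma pow_le_span : 𝔪 ^ N ≤ Ideal.span (range F) := by
  have hfg : (𝔪 ^ N).FG := Submodule.FG.pow (hy.span_range ▸ Submodule.fg_span (finite_range y)) N
  refine Submodule.le_of_le_smul_of_le_jacobson_bot hfg hy.le_jacobson fun a ha => ?_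
  obtain ⟨Q, hQ, haQ⟩ := hy.exists_leadingForm ha
  obtain ⟨j, hj, hjQ⟩ := hy.exists_mem_span_aeval_sub_mem hP hF hQ (hN Q hQ)
  rw [smul_eq_mul, ← pow_succ', show a = j + ((a - aeval y Q) + (aeval y Q - j)) by ring]
  exact Submodule.add_mem_sup hj (add_mem haQ hjQ)

/-- A relation between leading forms is Koszul, and the Koszul relations lift to `F`. -/
lemma exists_sum_mul_eq_of_sum_leadingForm_mul_eq_zero {k : ℕ} {a : Fin n → E}
    {A : Fin n → MvPolynomial (Fin n) K} (hA : ∀ i, (A i).IsHomogeneous k)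
    (haA : ∀ i, a i - aeval y (A i) ∈ 𝔪 ^ (k + 1)) (hAP : ∑ i, A i * P i = 0) :
    ∃ a' : Fin n → E, (∀ i, a' i ∈ 𝔪 ^ (k + 1)) ∧ ∑ i, a' i * F i = ∑ i, a i * F i := by
  obtain ⟨C, hdiag, hswap, hC⟩ :=
    exists_alternating_shiftedComponent_of_sum_mul_eq_zero hP hN hA hAP
  let c (i j : Fin n) : E := aeval y (shiftedComponent d k (C i j))
  refine ⟨fun i => a i - ∑ j, c i j * F j, fun i => ?_, ?_⟩
  · have hexpand : a i - ∑ j, c i j * F j =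
        (a i - aeval y (A i)) - ∑ j, c i j * (F j - aeval y (P j)) := by
      simp only [hC i, map_sum, map_mul, mul_sub, Finset.sum_sub_distrib, c]
      ring
    beta_reduce
    rw [hexpand]
    exact sub_mem (haA i)
      (Ideal.sum_mem _ fun j _ => hy.aeval_shiftedComponent_mul_mem d k (C i j) (hF j))
  · have hKoszul : ∑ i, (∑ j, c i j * F j) * F i = 0 :=
      sum_alternating_mul_mul_eq_zero (fun i => by simp [c, hdiag])
        (fun i j => by simp [c, hswap i j]) F
    simp only [sub_mul, Finset.sum_sub_distrib, hKoszul, sub_zero]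

variable {B : Submodule K (MvPolynomial (Fin n) K)}
  (hB : IsCompl ((Ideal.span (range P)).restrictScalars K) B)
  (hBhom : ∀ b ∈ B, ∀ k, homogeneousComponent k b ∈ B)

include hB hBhom

lemma exists_mem_sub_aeval_mem_span (a : E) : ∃ b ∈ B, a - aeval y b ∈ Ideal.span (range F) := by
  suffices ∀ k ≤ N, ∀ a ∈ 𝔪 ^ k, ∃ b ∈ B, a - aeval y b ∈ Ideal.span (range F) from
    this 0 N.zero_le a (by simp)
  intro k hk
  induction hk using Nat.decreasingInduction with
  | self => exact fun a ha => ⟨0, zero_mem _, by simpa using hy.pow_le_span hP hF hN ha⟩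
  | of_succ k _ ih =>
    intro a ha
    obtain ⟨Q, hQ, haQ⟩ := hy.exists_leadingForm ha
    obtain ⟨p, hp, q, hq, rfl⟩ :=
      Submodule.mem_sup.1 (hB.sup_eq_top.ge (Submodule.mem_top (x := Q)))
    have hsplit : homogeneousComponent k p + homogeneousComponent k q = p + q := by
      rw [← map_add, homogeneousComponent_eq_self hQ]
    obtain ⟨j, hj, hjp⟩ := hy.exists_mem_span_aeval_sub_mem hP hF
      (homogeneousComponent_isHomogeneous k p) (homogeneousComponent_mem_span hP hp k)
    obtain ⟨b, hb, hab⟩ := ih _ (add_mem haQ hjp)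
    refine ⟨homogeneousComponent k q + b, add_mem (hBhom q hq k) hb, ?_⟩
    have hexpand : a - aeval y (homogeneousComponent k q + b) =
        a - aeval y (p + q) + (aeval y (homogeneousComponent k p) - j) - aeval y b + j := by
      rw [← hsplit]
      simp only [map_add]
      ring
    exact hexpand ▸ add_mem hab hj

lemma exists_mem_pow_aeval_eq_sum_mul {b : MvPolynomial (Fin n) K} (hb : b ∈ B)
    (hbF : aeval y b ∈ Ideal.span (range F)) (k : ℕ) :
    ∃ a : Fin n → E, (∀ i, a i ∈ 𝔪 ^ k) ∧ ∑ i, a i * F i = aeval y b := by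
  induction k with
  | zero =>
    obtain ⟨a, ha⟩ := Ideal.mem_span_range_iff_exists_fun.1 hbF
    exact ⟨a, by simp, ha⟩
  | succ k ih =>
    obtain ⟨a, hak, hab⟩ := ih
    choose A hA haA using fun i => hy.exists_leadingForm (hak i)
    have hdiff : aeval y (b - ∑ i, A i * P i) ∈ 𝔪 ^ (k + d + 1) := by
      rw [map_sub, map_sum, ← hab, ← Finset.sum_sub_distrib]
      refine Ideal.sum_mem _ fun i _ => ?_
      have hexpand : a i * F i - aeval y (A i * P i) =
          (a i - aeval y (A i)) * aeval y (P i) + a i * (F i - aeval y (P i)) := by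
        rw [map_mul]
        ring
      refine hexpand ▸ add_mem ?_ ?_
      · rw [add_right_comm, pow_add]
        exact Ideal.mul_mem_mul (haA i) (hy.aeval_mem_pow (hP i))
      · rw [add_assoc, pow_add]
        exact Ideal.mul_mem_mul (hak i) (hF i)
    have hcomp := hy.homogeneousComponent_eq_of_aeval_sub_mem
      (IsHomogeneous.sum _ _ _ fun i _ => (hA i).mul (hP i)) hdiff
    have hAP : ∑ i, A i * P i = 0 := Submodule.disjoint_def.1 hB.disjoint _
      (Ideal.mem_span_range_iff_exists_fun.2 ⟨_, rfl⟩) (hcomp ▸ hBhom b hb _)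
    obtain ⟨a', ha', haa'⟩ :=
      hy.exists_sum_mul_eq_of_sum_leadingForm_mul_eq_zero hP hF hN hA haA hAP
    exact ⟨a', ha', haa'.trans hab⟩

lemma eq_zero_of_aeval_mem_span {b : MvPolynomial (Fin n) K} (hb : b ∈ B)
    (hbF : aeval y b ∈ Ideal.span (range F)) : b = 0 := by
  rw [← sum_homogeneousComponent b]
  refine Finset.sum_eq_zero fun j _ => ?_
  obtain ⟨a, ha, hab⟩ := hy.exists_mem_pow_aeval_eq_sum_mul hP hF hN hB hBhom hb hbF (j + 1)
  refine hy.homogeneousComponent_eq_zero_of_aeval_mem_pow (k := j + 1) ?_ j j.lt_succ_self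
  exact hab ▸ Ideal.sum_mem _ fun i _ => Ideal.mul_mem_right _ _ (ha i)

lemma nonempty_linearEquiv_quotient_span : Nonempty (B ≃ₗ[K] E ⧸ Ideal.span (range F)) := by
  let T : B →ₗ[K] E ⧸ Ideal.span (range F) :=
    (Ideal.Quotient.mkₐ K _).toLinearMap ∘ₗ (aeval y).toLinearMap ∘ₗ B.subtype
  refine ⟨LinearEquiv.ofBijective T ⟨?_, fun q => ?_⟩⟩
  · refine LinearMap.ker_eq_bot.1 (LinearMap.ker_eq_bot'.2 fun b hb => Subtype.ext ?_)
    exact hy.eq_zero_of_aeval_mem_span hP hF hN hB hBhom b.2 (Ideal.Quotient.eq_zero_iff_mem.1 hb)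
  · obtain ⟨a, rfl⟩ := Ideal.Quotient.mk_surjective q
    obtain ⟨b, hb, hab⟩ := hy.exists_mem_sub_aeval_mem_span hP hF hN hB hBhom a
    exact ⟨⟨b, hb⟩, (Ideal.Quotient.eq.2 hab).symm⟩

omit hN hB hBhom

theorem rank_quotient_span_eq
    [FiniteDimensional K (E ⧸ Ideal.span (range fun i => aeval y (P i)))] :
    Module.rank K (E ⧸ Ideal.span (range F)) =
      Module.rank K (E ⧸ Ideal.span (range fun i => aeval y (P i))) := by
  obtain ⟨N, hN⟩ := hy.exists_forall_isHomogeneous_mem_span hP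
  obtain ⟨B, hB, hBhom⟩ := exists_isCompl_of_homogeneousComponent_mem
    ((Ideal.span (range P)).restrictScalars K) fun p hp => homogeneousComponent_mem_span hP hp
  obtain ⟨eF⟩ := hy.nonempty_linearEquiv_quotient_span hP hF hN hB hBhom
  obtain ⟨eP⟩ := hy.nonempty_linearEquiv_quotient_span hP (F := fun i => aeval y (P i))
    (fun i => by simp) hN hB hBhom
  exact (eF.symm.trans eP).rank_eq

end IsCoordinateSystem

end LocalAlgebra

section Taylor

omit [NormedSpace ℝ V] in
lemma isBigO_norm_pow_of_le {k l : ℕ} (h : k ≤ l) :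
    (fun x : V => ‖x‖ ^ l) =O[𝓝 0] fun x => ‖x‖ ^ k := by
  refine .of_bound 1 ?_
  filter_upwards [closedBall_mem_nhds (0 : V) one_pos] with x hx
  simpa using pow_le_pow_of_le_one (norm_nonneg x) (mem_closedBall_zero_iff.1 hx) h

omit [NormedSpace ℝ V] in
lemma isLittleO_norm_pow_of_lt {k l : ℕ} (h : k < l) :
    (fun x : V => ‖x‖ ^ l) =o[𝓝 0] fun x => ‖x‖ ^ k :=
  (isLittleO_pow_pow h).comp_tendsto tendsto_norm_zero

lemma isBigO_id_of_tendsto_inv_smul {γ : ℝ → V} {w : V}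
    (hγ : Tendsto (fun t => t⁻¹ • γ t) (𝓝[>] 0) (𝓝 w)) : γ =O[𝓝[>] 0] (id : ℝ → ℝ) := by
  refine ((isBigO_refl (id : ℝ → ℝ) _).smul (hγ.isBigO_one ℝ)).congr' ?_
    (.of_forall fun t => by simp)
  filter_upwards [self_mem_nhdsWithin] with t ht
  exact smul_inv_smul₀ (ne_of_gt ht) _

lemma tendsto_zero_of_tendsto_inv_smul {γ : ℝ → V} {w : V}
    (hγ : Tendsto (fun t => t⁻¹ • γ t) (𝓝[>] 0) (𝓝 w)) : Tendsto γ (𝓝[>] 0) (𝓝 0) :=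
  (isBigO_id_of_tendsto_inv_smul hγ).trans_tendsto (tendsto_id.mono_left nhdsWithin_le_nhds)

lemma tendsto_inv_pow_smul_comp_zero {h : V → W} {m : ℕ} (ho : h =o[𝓝 0] fun x => ‖x‖ ^ m)
    {γ : ℝ → V} {w : V} (hγ : Tendsto (fun t => t⁻¹ • γ t) (𝓝[>] 0) (𝓝 w)) :
    Tendsto (fun t => (t ^ m)⁻¹ • h (γ t)) (𝓝[>] 0) (𝓝 0) :=
  ((ho.comp_tendsto (tendsto_zero_of_tendsto_inv_smul hγ)).trans_isBigO
    ((isBigO_id_of_tendsto_inv_smul hγ).norm_left.pow m)).tendsto_inv_smul_nhds_zero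

lemma tendsto_inv_smul_smul (v : V) : Tendsto (fun t : ℝ => t⁻¹ • t • v) (𝓝[>] 0) (𝓝 v) := by
  refine tendsto_const_nhds.congr' ?_
  filter_upwards [self_mem_nhdsWithin] with t ht
  exact (inv_smul_smul₀ (ne_of_gt ht) v).symm

lemma eq_zero_of_isLittleO_of_map_smul {h : V → W} {m : ℕ}
    (hsmul : ∀ (t : ℝ) v, h (t • v) = t ^ m • h v) (ho : h =o[𝓝 0] fun x => ‖x‖ ^ m) : h = 0 := by
  ext v
  refine tendsto_nhds_unique (tendsto_const_nhds.congr' ?_)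
    (tendsto_inv_pow_smul_comp_zero ho (tendsto_inv_smul_smul v))
  filter_upwards [self_mem_nhdsWithin] with t ht
  rw [hsmul, inv_smul_smul₀ (pow_ne_zero m (ne_of_gt ht))]

lemma inPart_smul (f : V → ℝ) (m : ℕ) (t : ℝ) (v : V) :
    inPart f m (t • v) = t ^ m • inPart f m v := by
  have h := (iteratedFDeriv ℝ m f 0).map_smul_univ (fun _ => t) fun _ => v
  rw [Fin.prod_const] at h
  rw [inPart, inPart, smul_comm, h]

lemma contDiff_inPart (f : V → ℝ) (m : ℕ) : ContDiff ℝ (⊤ : ℕ∞) (inPart f m) :=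
  ((iteratedFDeriv ℝ m f 0).contDiff.comp (contDiff_pi.2 fun _ => contDiff_id)).const_smul _

lemma isBigO_sub_sum_inPart {f : V → ℝ} {m : ℕ} (hf : ContDiff ℝ (m + 1) f) :
    (fun x => f x - ∑ k ∈ Finset.range (m + 1), inPart f k x) =O[𝓝 0] fun x => ‖x‖ ^ (m + 1) := by
  obtain ⟨δ, hδ, hball⟩ := Metric.eventually_nhds_iff_ball.1
    (hf.continuous_iteratedFDeriv'.norm.continuousAt.eventually
      (eventually_le_nhds (lt_add_one ‖iteratedFDeriv ℝ (m + 1) f 0‖)))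
  refine .of_bound (‖iteratedFDeriv ℝ (m + 1) f 0‖ + 1) ?_
  filter_upwards [ball_mem_nhds 0 hδ] with x hx
  have hbound (t : ℝ) (ht : t ∈ Ioc 0 1) :
      ‖(1 - t) ^ m • iteratedFDeriv ℝ (m + 1) f (0 + t • x) fun _ => x‖ ≤
        (‖iteratedFDeriv ℝ (m + 1) f 0‖ + 1) * ‖x‖ ^ (m + 1) := by
    have hnorm : ‖1 - t‖ ^ m ≤ 1 := by
      refine pow_le_one₀ (norm_nonneg _) ?_
      rw [Real.norm_of_nonneg] <;> linarith [ht.1, ht.2]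
    have htx : 0 + t • x ∈ ball 0 δ := by
      rw [zero_add, mem_ball_zero_iff, norm_smul, Real.norm_of_nonneg ht.1.le]
      exact (mul_le_of_le_one_left (norm_nonneg x) ht.2).trans_lt (mem_ball_zero_iff.1 hx)
    have happly := (iteratedFDeriv ℝ (m + 1) f (0 + t • x)).le_opNorm fun _ => x
    rw [Fin.prod_const] at happly
    rw [norm_smul, norm_pow]
    exact (mul_le_of_le_one_left (norm_nonneg _) hnorm).trans
      (happly.trans (mul_le_mul_of_nonneg_right (hball _ htx) (by positivity)))
  have hTaylor := map_add_eq_sum_add_integral_iteratedFDeriv (f := f) (n := m) (x := 0) (y := x)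
    fun t _ => hf.contDiffAt
  rw [zero_add] at hTaylor
  simp only [inPart]
  rw [hTaylor, add_sub_cancel_left, norm_smul, norm_pow, norm_norm]
  refine (mul_le_of_le_one_left (norm_nonneg _) ?_).trans ?_
  · rw [norm_inv, RCLike.norm_natCast]
    exact inv_le_one_of_one_le₀ (by exact_mod_cast m.factorial_pos)
  · refine (intervalIntegral.norm_integral_le_of_norm_le_const fun t ht => ?_).trans_eq
      (by rw [sub_zero, abs_one, mul_one])
    exact hbound t (by rwa [uIoc_of_le zero_le_one] at ht)

lemma inPart_eq_zero_of_isBigO {f : V → ℝ} (hf : ContDiff ℝ (⊤ : ℕ∞) f) {m : ℕ}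
    (hO : f =O[𝓝 0] fun x => ‖x‖ ^ m) (k : ℕ) (hk : k < m) : inPart f k = 0 := by
  induction k using Nat.strong_induction_on with
  | _ k ih =>
    have hsum (x : V) : ∑ j ∈ Finset.range (k + 1), inPart f j x = inPart f k x := by
      rw [Finset.sum_range_succ, Finset.sum_eq_zero, zero_add]
      intro j hj
      rw [Finset.mem_range] at hj
      rw [ih j hj (hj.trans hk), Pi.zero_apply]
    have hTaylor := isBigO_sub_sum_inPart (m := k) (hf.of_le (by exact_mod_cast le_top))
    simp only [hsum] at hTaylor
    refine eq_zero_of_isLittleO_of_map_smul (inPart_smul f k) ?_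
    have hO' := (hO.trans (isBigO_norm_pow_of_le hk)).sub hTaylor
    simp only [sub_sub_cancel] at hO'
    exact hO'.trans_isLittleO (isLittleO_norm_pow_of_lt k.lt_succ_self)

lemma isBigO_sub_inPart {f : V → ℝ} (hf : ContDiff ℝ (⊤ : ℕ∞) f) {m : ℕ}
    (hO : f =O[𝓝 0] fun x => ‖x‖ ^ m) :
    (fun x => f x - inPart f m x) =O[𝓝 0] fun x => ‖x‖ ^ (m + 1) := by
  refine (isBigO_sub_sum_inPart (m := m) (hf.of_le (by exact_mod_cast le_top))).congr_left
    fun x => ?_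
  rw [Finset.sum_range_succ, Finset.sum_eq_zero, zero_add]
  intro k hk
  rw [inPart_eq_zero_of_isBigO hf hO k (Finset.mem_range.1 hk), Pi.zero_apply]

lemma inPart_eq_of_isBigO_sub {f h : V → ℝ} (hf : ContDiff ℝ (⊤ : ℕ∞) f) {m : ℕ}
    (hO : f =O[𝓝 0] fun x => ‖x‖ ^ m) (hsmul : ∀ (t : ℝ) v, h (t • v) = t ^ m • h v)
    (hfh : (fun x => f x - h x) =O[𝓝 0] fun x => ‖x‖ ^ (m + 1)) : inPart f m = h := by
  refine sub_eq_zero.1 (eq_zero_of_isLittleO_of_map_smul (m := m) (fun t v => ?_) ?_)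
  · simp only [Pi.sub_apply, inPart_smul, hsmul, smul_sub]
  · refine ((hfh.sub (isBigO_sub_inPart hf hO)).congr_left fun x => ?_).trans_isLittleO
      (isLittleO_norm_pow_of_lt m.lt_succ_self)
    rw [sub_sub_sub_cancel_left, Pi.sub_apply]

lemma tendsto_inv_pow_smul_comp {f : V → ℝ} (hf : ContDiff ℝ (⊤ : ℕ∞) f) {m : ℕ}
    (hO : f =O[𝓝 0] fun x => ‖x‖ ^ m) {γ : ℝ → V} {w : V}
    (hγ : Tendsto (fun t => t⁻¹ • γ t) (𝓝[>] 0) (𝓝 w)) :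
    Tendsto (fun t => (t ^ m)⁻¹ • f (γ t)) (𝓝[>] 0) (𝓝 (inPart f m w)) := by
  have hdiff := tendsto_inv_pow_smul_comp_zero
    ((isBigO_sub_inPart hf hO).trans_isLittleO (isLittleO_norm_pow_of_lt m.lt_succ_self)) hγ
  have hin : Tendsto (fun t => inPart f m (t⁻¹ • γ t)) (𝓝[>] 0) (𝓝 (inPart f m w)) :=
    ((contDiff_inPart f m).continuous.tendsto w).comp hγ
  have hsum := hdiff.add hin
  rw [zero_add] at hsum
  refine hsum.congr fun t => ?_
  rw [inPart_smul, inv_pow, ← smul_add, sub_add_cancel]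

lemma isBigO_of_forall_exists_tendsto {f : V → ℝ} (hf : ContDiff ℝ (⊤ : ℕ∞) f) {m : ℕ}
    (hcurve : ∀ w, ∃ γ : ℝ → V, Tendsto (fun t => t⁻¹ • γ t) (𝓝[>] 0) (𝓝 w) ∧
      ∃ L, Tendsto (fun t => (t ^ m)⁻¹ • f (γ t)) (𝓝[>] 0) (𝓝 L)) :
    f =O[𝓝 0] fun x => ‖x‖ ^ m := by
  suffices ∀ k ≤ m, f =O[𝓝 0] fun x => ‖x‖ ^ k from this m le_rfl
  intro k
  induction k with
  | zero => exact fun _ => by simpa using (hf.continuous.tendsto 0).isBigO_one ℝ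
  | succ k ih =>
    intro hk
    have hO := ih (k.le_succ.trans hk)
    have hzero : inPart f k = 0 := by
      ext w
      obtain ⟨γ, hγ, L, hL⟩ := hcurve w
      have hpow : Tendsto (fun t : ℝ => t ^ (m - k)) (𝓝[>] 0) (𝓝 0) := by
        refine ((continuous_pow (m - k)).tendsto' 0 0 ?_).mono_left nhdsWithin_le_nhds
        exact zero_pow (by omega)
      refine tendsto_nhds_unique (tendsto_inv_pow_smul_comp hf hO hγ)
        (((zero_smul ℝ L) ▸ hpow.smul hL).congr' ?_)
      filter_upwards [self_mem_nhdsWithin] with t ht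
      have ht : t ≠ 0 := ne_of_gt ht
      rw [smul_smul, pow_sub₀ t ht (k.le_succ.trans hk), mul_right_comm,
        mul_inv_cancel₀ (pow_ne_zero m ht), one_mul]
    simpa [hzero] using isBigO_sub_inPart hf hO

end Taylor

section Hadamard

universe u v

lemma contDiff_integral_smul_comp_smul {X : Type u} [NormedAddCommGroup X] [NormedSpace ℝ X]
    [FiniteDimensional ℝ X] (k : ℕ) : ∀ {Y : Type (max u v)} [NormedAddCommGroup Y]
      [NormedSpace ℝ Y] [CompleteSpace Y] {h : X → Y} {c : ℝ → ℝ},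
      ContDiff ℝ (⊤ : ℕ∞) h → Continuous c →
      ContDiff ℝ k fun x => ∫ t in (0 : ℝ)..1, c t • h (t • x) := by
  induction k with
  | zero =>
    intro Y _ _ _ h c hh hc
    have hcont := hh.continuous
    rw [Nat.cast_zero, contDiff_zero]
    apply intervalIntegral.continuous_parametric_intervalIntegral_of_continuous'
    fun_prop
  | succ k ih =>
    intro Y _ _ _ h c hh hc
    have hcont := hh.continuous
    have hdcont : Continuous (fderiv ℝ h) := hh.continuous_fderiv (by simp)
    rw [Nat.cast_add, Nat.cast_one, contDiff_succ_iff_hasFDerivAt]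
    refine ⟨fun x => ∫ t in (0 : ℝ)..1, (c t * t) • fderiv ℝ h (t • x),
      ih (hh.fderiv_right (by simp)) (by fun_prop), fun x => ?_⟩
    have hcont' : Continuous fun p : X × ℝ => (c p.2 * p.2) • fderiv ℝ h (p.2 • p.1) := by
      fun_prop
    obtain ⟨M, hM⟩ := ((isCompact_closedBall x 1).prod
      (isCompact_Icc (a := (0 : ℝ)) (b := 1))).exists_bound_of_continuousOn hcont'.continuousOn
    refine intervalIntegral.hasFDerivAt_integral_of_dominated_of_fderiv_le
      (F' := fun x t => (c t * t) • fderiv ℝ h (t • x)) (bound := fun _ => M)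
      (closedBall_mem_nhds x one_pos) (.of_forall fun z => ?_)
      (Continuous.intervalIntegrable (by fun_prop) _ _) ?_ (.of_forall fun t ht z hz => ?_)
      intervalIntegrable_const (.of_forall fun t _ z _ => ?_)
    · exact Continuous.aestronglyMeasurable (by fun_prop)
    · exact Continuous.aestronglyMeasurable (by fun_prop)
    · rw [uIoc_of_le zero_le_one] at ht
      exact hM (z, t) ⟨hz, Ioc_subset_Icc_self ht⟩
    · have hcomp := (hh.differentiable (by simp) (t • z)).hasFDerivAt.comp z
        ((hasFDerivAt_id z).const_smul t)
      refine (hcomp.const_smul (c t)).congr_fderiv ?_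
      ext w
      simp [mul_smul]

/-- Hadamard's lemma. -/
lemma exists_contDiff_eq_apply_self {X : Type*} [NormedAddCommGroup X] [NormedSpace ℝ X]
    [FiniteDimensional ℝ X] {f : X → ℝ} (hf : ContDiff ℝ (⊤ : ℕ∞) f) (h0 : f 0 = 0) :
    ∃ G : X → X →L[ℝ] ℝ, ContDiff ℝ (⊤ : ℕ∞) G ∧ ∀ x, f x = G x x := by
  have hdcont : Continuous (fderiv ℝ f) := hf.continuous_fderiv (by simp)
  refine ⟨fun x => ∫ t in (0 : ℝ)..1, (1 : ℝ) • fderiv ℝ f (t • x), contDiff_infty.2 fun k =>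
    contDiff_integral_smul_comp_smul k (hf.fderiv_right (by simp)) continuous_const, fun x => ?_⟩
  have hderiv (t : ℝ) : HasDerivAt (fun t : ℝ => f (t • x)) (fderiv ℝ f (t • x) x) t := by
    have hline : HasDerivAt (fun t : ℝ => t • x) x t := by
      simpa using (hasDerivAt_id t).smul_const x
    exact (hf.differentiable (by simp) _).hasFDerivAt.comp_hasDerivAt t hline
  simp only [one_smul]
  rw [ContinuousLinearMap.intervalIntegral_apply
      (Continuous.intervalIntegrable (by fun_prop) _ _),
    intervalIntegral.integral_eq_sub_of_hasDerivAt (fun t _ => hderiv t)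
      (Continuous.intervalIntegrable (by fun_prop) _ _), one_smul, zero_smul, h0, sub_zero]

end Hadamard

section HomogeneousFunctions

variable {n : ℕ} {k : ℕ} {Q : MvPolynomial (Fin n) ℝ}

lemma eval_smul_of_isHomogeneous {σ R : Type*} [CommSemiring R] {k : ℕ} {Q : MvPolynomial σ R}
    (hQ : Q.IsHomogeneous k) (t : R) (v : σ → R) :
    MvPolynomial.eval (t • v) Q = t ^ k • MvPolynomial.eval v Q := by
  rw [MvPolynomial.eval_eq, MvPolynomial.eval_eq, Finset.smul_sum]
  refine Finset.sum_congr rfl fun s hs => ?_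
  have hs : ∑ i ∈ s.support, s i = k :=
    by_contra fun h => MvPolynomial.mem_support_iff.1 hs (hQ.coeff_eq_zero h)
  simp only [Pi.smul_apply, smul_eq_mul, mul_pow, Finset.prod_mul_distrib]
  rw [Finset.prod_pow_eq_pow_sum, hs, mul_left_comm]

lemma eval_ofLp_smul (hQ : Q.IsHomogeneous k) (t : ℝ) (x : Eucl n) :
    MvPolynomial.eval (t • x).ofLp Q = t ^ k • MvPolynomial.eval x.ofLp Q :=
  eval_smul_of_isHomogeneous hQ t x.ofLp

lemma eq_zero_of_isBigO_eval (hQ : Q.IsHomogeneous k)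
    (hO : (fun x : Eucl n => MvPolynomial.eval x.ofLp Q) =O[𝓝 0] fun x => ‖x‖ ^ (k + 1)) :
    Q = 0 := by
  have hzero := eq_zero_of_isLittleO_of_map_smul (eval_ofLp_smul hQ)
    (hO.trans_isLittleO (isLittleO_norm_pow_of_lt k.lt_succ_self))
  exact MvPolynomial.funext fun v => by simpa using congrFun hzero (WithLp.toLp 2 v)

end HomogeneousFunctions

section Germs

open MvPolynomial

variable {n : ℕ}

/-- The class in `E_n` of a function that is smooth on all of `ℝ^n`. -/
def smoothGerm (f : Eucl n → ℝ) (hf : ContDiff ℝ (⊤ : ℕ∞) f) : smoothGerms n := ⟨↑f, f, hf, rfl⟩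

lemma exists_eq_smoothGerm (a : smoothGerms n) : ∃ f hf, a = smoothGerm f hf := by
  obtain ⟨a, f, hf, rfl⟩ := a
  exact ⟨f, hf, rfl⟩

lemma smoothGerm_eq_iff {f g : Eucl n → ℝ} (hf : ContDiff ℝ (⊤ : ℕ∞) f)
    (hg : ContDiff ℝ (⊤ : ℕ∞) g) : smoothGerm f hf = smoothGerm g hg ↔ f =ᶠ[𝓝 0] g :=
  Subtype.ext_iff.trans Filter.Germ.coe_eq

lemma coe_algebraMap (c : ℝ) :
    (algebraMap ℝ (smoothGerms n) c : Germ (𝓝 (0 : Eucl n)) ℝ) = ↑(fun _ : Eucl n => c) := by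
  rw [Algebra.algebraMap_eq_smul_one]
  change ((fun _ => c • (1 : ℝ) : Eucl n → ℝ) : Germ (𝓝 (0 : Eucl n)) ℝ) = _
  simp only [smul_eq_mul, mul_one]

lemma coe_sum {ι : Type*} (s : Finset ι) {a : ι → smoothGerms n} {f : ι → Eucl n → ℝ}
    (h : ∀ i ∈ s, (a i : Germ (𝓝 (0 : Eucl n)) ℝ) = ↑(f i)) :
    ((∑ i ∈ s, a i : smoothGerms n) : Germ (𝓝 (0 : Eucl n)) ℝ) = ↑(∑ i ∈ s, f i) := by
  rw [AddSubmonoidClass.coe_finsetSum, Finset.sum_congr rfl h]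
  exact (map_sum (Germ.coeAddHom (𝓝 (0 : Eucl n))) f s).symm

/-- The ideal of germs vanishing at the origin. -/
def maximalIdeal (n : ℕ) : Ideal (smoothGerms n) :=
  RingHom.ker (Germ.valueRingHom.comp (smoothGerms n).val.toRingHom)

lemma smoothGerm_mem_maximalIdeal {f : Eucl n → ℝ} (hf : ContDiff ℝ (⊤ : ℕ∞) f) :
    smoothGerm f hf ∈ maximalIdeal n ↔ f 0 = 0 :=
  Iff.rfl

lemma isUnit_smoothGerm {f : Eucl n → ℝ} (hf : ContDiff ℝ (⊤ : ℕ∞) f) (h0 : f 0 ≠ 0) :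
    IsUnit (smoothGerm f hf) := by
  -- `F` has no zeros and agrees with `f ^ 2` near the origin, so `f / F` extends `1 / f`.
  let F x := f x ^ 2 + Real.smoothTransition (f 0 ^ 2 / 2 - f x ^ 2)
  have hF : ContDiff ℝ (⊤ : ℕ∞) F :=
    (hf.pow 2).add (Real.smoothTransition.contDiff.comp (contDiff_const.sub (hf.pow 2)))
  have hpos (x) : 0 < F x := by
    by_cases hx : f x = 0
    · refine add_pos_of_nonneg_of_pos (sq_nonneg _) (Real.smoothTransition.pos_of_pos ?_)
      rw [hx, zero_pow two_ne_zero, sub_zero]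
      positivity
    · exact add_pos_of_pos_of_nonneg (by positivity) (Real.smoothTransition.nonneg _)
  refine .of_mul_eq_one (smoothGerm _ (hf.div hF fun x => (hpos x).ne')) ?_
  refine (smoothGerm_eq_iff (hf.mul (hf.div hF fun x => (hpos x).ne')) contDiff_const).2 ?_
  have hlt : f 0 ^ 2 / 2 < f 0 ^ 2 := half_lt_self (by positivity)
  filter_upwards [((hf.continuous.pow 2).tendsto 0).eventually_const_lt hlt] with x hx
  have hFx : F x = f x ^ 2 := by
    rw [add_eq_left, Real.smoothTransition.zero_iff_nonpos]
    exact sub_nonpos.2 hx.le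
  have hne : F x ≠ 0 := (hpos x).ne'
  rw [Pi.div_apply, mul_div, ← sq, ← hFx, div_self hne]

lemma maximalIdeal_le_jacobson : maximalIdeal n ≤ Ideal.jacobson ⊥ := by
  intro a ha
  rw [Ideal.mem_jacobson_bot]
  intro b
  obtain ⟨f, hf, hab⟩ := exists_eq_smoothGerm (a * b + 1)
  have hmem : smoothGerm f hf - 1 ∈ maximalIdeal n := by
    rw [← hab, add_sub_cancel_right]
    exact Ideal.mul_mem_right _ _ ha
  have h0 : f 0 = 1 := sub_eq_zero.1 ((smoothGerm_mem_maximalIdeal (hf.sub contDiff_const)).1 hmem)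
  rw [hab]
  exact isUnit_smoothGerm hf (h0 ▸ one_ne_zero)

lemma isBigO_of_mem_maximalIdeal_pow {k : ℕ} {a : smoothGerms n} (ha : a ∈ maximalIdeal n ^ k)
    {f : Eucl n → ℝ} (hfa : (a : Germ (𝓝 (0 : Eucl n)) ℝ) = ↑f) :
    f =O[𝓝 0] fun x => ‖x‖ ^ k := by
  induction k generalizing a f with
  | zero =>
    obtain ⟨g, hg, rfl⟩ := exists_eq_smoothGerm a
    simp only [pow_zero]
    exact ((hg.continuous.tendsto 0).isBigO_one ℝ).congr' (Germ.coe_eq.1 hfa) .rfl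
  | succ k ih =>
    rw [pow_succ] at ha
    induction ha using Submodule.mul_induction_on' generalizing f with
    | mem_mul_mem a ha b hb =>
      obtain ⟨p, hp, rfl⟩ := exists_eq_smoothGerm a
      obtain ⟨q, hq, rfl⟩ := exists_eq_smoothGerm b
      have hqO : q =O[𝓝 0] fun x => ‖x‖ := by
        have hsub := (hq.differentiable (by simp) 0).isBigO_sub
        simpa [(smoothGerm_mem_maximalIdeal hq).1 hb] using hsub.norm_right
      simp only [pow_succ]
      exact ((ih ha rfl).mul hqO).congr' (Germ.coe_eq.1 hfa) .rfl
    | add a _ b _ hpO hqO =>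
      obtain ⟨p, hp, rfl⟩ := exists_eq_smoothGerm a
      obtain ⟨q, hq, rfl⟩ := exists_eq_smoothGerm b
      exact ((hpO rfl).add (hqO rfl)).congr' (Germ.coe_eq.1 hfa) .rfl

/-- The germ of the `i`-th coordinate function. -/
def coordGerm (i : Fin n) : smoothGerms n := smoothGerm (fun x => x i) (by fun_prop)

lemma coe_aeval_coordGerm (Q : MvPolynomial (Fin n) ℝ) :
    (aeval coordGerm Q : Germ (𝓝 (0 : Eucl n)) ℝ) = ↑(fun x : Eucl n => eval x.ofLp Q) := by
  induction Q using MvPolynomial.induction_on with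
  | C c => simp only [aeval_C, coe_algebraMap, eval_C]
  | add p q hp hq =>
    rw [map_add, Subalgebra.coe_add, hp, hq, ← Germ.coe_add]
    simp only [map_add, Pi.add_def]
  | mul_X p i hp =>
    rw [map_mul, Subalgebra.coe_mul, hp, aeval_X, coordGerm, smoothGerm, ← Germ.coe_mul]
    simp only [map_mul, eval_X, Pi.mul_def]

lemma span_range_coordGerm : Ideal.span (range coordGerm) = maximalIdeal n := by
  refine le_antisymm (Ideal.span_le.2 ?_) fun a ha => ?_
  · rintro _ ⟨i, rfl⟩
    exact (smoothGerm_mem_maximalIdeal _).2 rfl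
  · obtain ⟨f, hf, rfl⟩ := exists_eq_smoothGerm a
    obtain ⟨G, hG, hfG⟩ := exists_contDiff_eq_apply_self hf ((smoothGerm_mem_maximalIdeal hf).1 ha)
    have hGi (i : Fin n) : ContDiff ℝ (⊤ : ℕ∞) fun x => G x (EuclideanSpace.single i 1) :=
      hG.clm_apply contDiff_const
    refine Ideal.mem_span_range_iff_exists_fun.2 ⟨fun i => smoothGerm _ (hGi i), ?_⟩
    have hsum : f = ∑ i, (fun x => G x (EuclideanSpace.single i 1)) * fun x => x i := by
      ext x
      rw [hfG]
      nth_rewrite 2 [← (EuclideanSpace.basisFun (Fin n) ℝ).sum_repr x]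
      simp [mul_comm]
    refine Subtype.ext ((coe_sum _ fun i _ => rfl).trans (congrArg _ hsum.symm))

lemma isCoordinateSystem_coordGerm :
    IsCoordinateSystem ℝ (maximalIdeal n) (coordGerm : Fin n → smoothGerms n) where
  le_jacobson := maximalIdeal_le_jacobson
  span_range := span_range_coordGerm
  exists_sub_algebraMap_mem a := by
    obtain ⟨f, hf, rfl⟩ := exists_eq_smoothGerm a
    refine ⟨f 0, ?_⟩
    have hc : algebraMap ℝ (smoothGerms n) (f 0) = smoothGerm _ contDiff_const :=
      Subtype.ext (coe_algebraMap (f 0))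
    rw [hc]
    exact (smoothGerm_mem_maximalIdeal (hf.sub contDiff_const)).2 (sub_self _)
  eq_zero_of_aeval_mem _ Q hQ h :=
    eq_zero_of_isBigO_eval hQ (isBigO_of_mem_maximalIdeal_pow h (coe_aeval_coordGerm Q))

lemma smoothGerm_mem_maximalIdeal_pow {f : Eucl n → ℝ} (hf : ContDiff ℝ (⊤ : ℕ∞) f) {k : ℕ}
    (hO : f =O[𝓝 0] fun x => ‖x‖ ^ k) : smoothGerm f hf ∈ maximalIdeal n ^ k := by
  induction k with
  | zero => simp
  | succ k ih =>
    obtain ⟨Q, hQ, hfQ⟩ := isCoordinateSystem_coordGerm.exists_leadingForm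
      (ih (hO.trans (isBigO_norm_pow_of_le k.le_succ)))
    have hsub : (fun x => f x - eval x.ofLp Q) =O[𝓝 0] fun x => ‖x‖ ^ (k + 1) := by
      refine isBigO_of_mem_maximalIdeal_pow hfQ ?_
      rw [Subalgebra.coe_sub, coe_aeval_coordGerm]
      rfl
    have hQ0 : Q = 0 := eq_zero_of_isBigO_eval hQ (by simpa using hO.sub hsub)
    rwa [hQ0, map_zero, sub_zero] at hfQ

lemma exists_inPart_eq_eval {f : Eucl n → ℝ} (hf : ContDiff ℝ (⊤ : ℕ∞) f) {m : ℕ}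
    (hO : f =O[𝓝 0] fun x => ‖x‖ ^ m) :
    ∃ Q : MvPolynomial (Fin n) ℝ, Q.IsHomogeneous m ∧ ∀ x, inPart f m x = eval x.ofLp Q := by
  obtain ⟨Q, hQ, hfQ⟩ := isCoordinateSystem_coordGerm.exists_leadingForm
    (smoothGerm_mem_maximalIdeal_pow hf hO)
  refine ⟨Q, hQ, congrFun (inPart_eq_of_isBigO_sub hf hO (eval_ofLp_smul hQ) ?_)⟩
  refine isBigO_of_mem_maximalIdeal_pow hfQ ?_
  rw [Subalgebra.coe_sub, coe_aeval_coordGerm]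
  rfl

end Germs

section Derivatives

open MvPolynomial

lemma derivation_apply_mem_pow {R A : Type*} [CommSemiring R] [CommRing A] [Algebra R A]
    (D : Derivation R A A) (I : Ideal A) {k : ℕ} {a : A} (ha : a ∈ I ^ (k + 1)) :
    D a ∈ I ^ k := by
  induction k generalizing a with
  | zero => simp
  | succ k ih =>
    rw [pow_succ] at ha
    induction ha using Submodule.mul_induction_on' with
    | mem_mul_mem a ha b hb =>
      rw [D.leibniz, smul_eq_mul, smul_eq_mul, mul_comm b, pow_succ]
      exact add_mem (Ideal.mul_mem_right _ _ (pow_succ I k ▸ ha)) (Ideal.mul_mem_mul (ih ha) hb)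
    | add a _ b _ ha hb => exact map_add D a b ▸ add_mem ha hb

lemma derivation_aeval {R A σ : Type*} [CommSemiring R] [CommSemiring A] [Algebra R A]
    [DecidableEq σ] (D : Derivation R A A) (y : σ → A) (i : σ)
    (hy : ∀ j, D (y j) = Pi.single (M := fun _ => A) i 1 j) (Q : MvPolynomial σ R) :
    D (aeval y Q) = aeval y (pderiv i Q) := by
  induction Q using MvPolynomial.induction_on with
  | C c => simp
  | add p q hp hq => simp only [map_add, hp, hq]
  | mul_X p j hp =>
    simp only [map_mul, aeval_X, Derivation.leibniz, map_add, smul_eq_mul, pderiv_X, hp, hy]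
    obtain rfl | hij := eq_or_ne j i
    · simp
    · simp [hij]

variable {n : ℕ}

/-- The derivation of `E_n` given by differentiation in the direction `w`. -/
def dirDeriv (w : Eucl n) : Derivation ℝ (smoothGerms n) (smoothGerms n) :=
  .mk'
    { toFun a := ⟨Germ.map' (fun f x => fderiv ℝ f x w)
        (fun _ _ h => h.fderiv.fun_comp fun L => L w) a.1, by
          obtain ⟨f, hf, rfl⟩ := exists_eq_smoothGerm a
          exact ⟨_, (hf.fderiv_right (by simp)).clm_apply contDiff_const, rfl⟩⟩
      map_add' a b := by
        obtain ⟨f, hf, rfl⟩ := exists_eq_smoothGerm a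
        obtain ⟨g, hg, rfl⟩ := exists_eq_smoothGerm b
        refine Subtype.ext (congrArg Germ.ofFun (funext fun x => ?_))
        change fderiv ℝ (fun y => f y + g y) x w = fderiv ℝ f x w + fderiv ℝ g x w
        rw [fderiv_fun_add (hf.differentiable (by simp) x) (hg.differentiable (by simp) x)]
        rfl
      map_smul' c a := by
        obtain ⟨f, hf, rfl⟩ := exists_eq_smoothGerm a
        refine Subtype.ext (congrArg Germ.ofFun (funext fun x => ?_))
        change fderiv ℝ (fun y => c • f y) x w = c • fderiv ℝ f x w
        rw [fderiv_fun_const_smul (hf.differentiable (by simp) x)]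
        rfl }
    fun a b => by
      obtain ⟨f, hf, rfl⟩ := exists_eq_smoothGerm a
      obtain ⟨g, hg, rfl⟩ := exists_eq_smoothGerm b
      refine Subtype.ext (congrArg Germ.ofFun (funext fun x => ?_))
      change fderiv ℝ (fun y => f y * g y) x w = f x * fderiv ℝ g x w + g x * fderiv ℝ f x w
      rw [fderiv_fun_mul (hf.differentiable (by simp) x) (hg.differentiable (by simp) x)]
      rfl

lemma coe_dirDeriv_smoothGerm {f : Eucl n → ℝ} (hf : ContDiff ℝ (⊤ : ℕ∞) f) (w : Eucl n) :
    (dirDeriv w (smoothGerm f hf) : Germ (𝓝 (0 : Eucl n)) ℝ) = ↑(fun x => fderiv ℝ f x w) :=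
  rfl

lemma dirDeriv_sum_smul {ι : Type*} (s : Finset ι) (c : ι → ℝ) (w : ι → Eucl n)
    (a : smoothGerms n) : dirDeriv (∑ i ∈ s, c i • w i) a = ∑ i ∈ s, c i • dirDeriv (w i) a := by
  obtain ⟨f, hf, rfl⟩ := exists_eq_smoothGerm a
  refine Subtype.ext (.trans ?_
    (coe_sum s (f := fun i => c i • fun x => fderiv ℝ f x (w i)) fun i _ => rfl).symm)
  rw [coe_dirDeriv_smoothGerm]
  refine congrArg Germ.ofFun (funext fun x => ?_)
  simp

lemma dirDeriv_single_coordGerm (i j : Fin n) :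
    dirDeriv (EuclideanSpace.single i 1) (coordGerm j) =
      Pi.single (M := fun _ => smoothGerms n) i 1 j := by
  have hcoord (x : Eucl n) : fderiv ℝ (fun x : Eucl n => x j) x = EuclideanSpace.proj j :=
    (EuclideanSpace.proj (𝕜 := ℝ) j).fderiv
  refine Subtype.ext ((coe_dirDeriv_smoothGerm _ _).trans ?_)
  simp only [hcoord, PiLp.proj_apply, PiLp.single_apply]
  obtain rfl | hij := eq_or_ne j i
  · rw [if_pos rfl, Pi.single_eq_same]
    rfl
  · rw [if_neg hij, Pi.single_eq_of_ne hij]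
    rfl

end Derivatives

section Milnor

open MvPolynomial

variable {n : ℕ}

lemma jacobianIdeal_eq_span_range_single {f : Eucl n → ℝ} (hf : ContDiff ℝ (⊤ : ℕ∞) f) :
    jacobianIdeal n f =
      Ideal.span (range fun i => dirDeriv (EuclideanSpace.single i 1) (smoothGerm f hf)) := by
  refine congrArg Ideal.span (ext fun a => exists_congr fun i => ?_)
  rw [Subtype.ext_iff, coe_dirDeriv_smoothGerm, eq_comm]

lemma jacobianIdeal_eq_span_range {f : Eucl n → ℝ} (hf : ContDiff ℝ (⊤ : ℕ∞) f) :
    jacobianIdeal n f = Ideal.span (range fun w => dirDeriv w (smoothGerm f hf)) := by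
  rw [jacobianIdeal_eq_span_range_single hf]
  refine le_antisymm (Ideal.span_mono (range_subset_iff.2 fun i => ⟨_, rfl⟩)) (Ideal.span_le.2 ?_)
  rintro _ ⟨w, rfl⟩
  beta_reduce
  rw [← (EuclideanSpace.basisFun (Fin n) ℝ).sum_repr w, dirDeriv_sum_smul]
  refine Ideal.sum_mem _ fun i _ => Submodule.smul_of_tower_mem _ _ (Ideal.subset_span ⟨i, ?_⟩)
  rw [EuclideanSpace.basisFun_apply]

lemma milnor_eq_milnor_inPart {f : Eucl n → ℝ} (hf : ContDiff ℝ (⊤ : ℕ∞) f) {d : ℕ}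
    (hO : f =O[𝓝 0] fun x => ‖x‖ ^ (d + 1))
    (hfin : milnor n (inPart f (d + 1)) < Cardinal.aleph0) :
    milnor n f = milnor n (inPart f (d + 1)) := by
  obtain ⟨Q, hQ, hfQ⟩ := exists_inPart_eq_eval hf hO
  have hin := contDiff_inPart f (d + 1)
  have hgerm : smoothGerm (inPart f (d + 1)) hin = aeval coordGerm Q :=
    Subtype.ext (.trans (congrArg Germ.ofFun (funext hfQ)) (coe_aeval_coordGerm Q).symm)
  have hpderiv (i : Fin n) : dirDeriv (EuclideanSpace.single i 1) (smoothGerm _ hin) =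
      aeval coordGerm (pderiv i Q) :=
    hgerm ▸ derivation_aeval _ _ i (dirDeriv_single_coordGerm i) Q
  have hJ : jacobianIdeal n (inPart f (d + 1)) =
      Ideal.span (range fun i => aeval coordGerm (pderiv i Q)) := by
    simp only [jacobianIdeal_eq_span_range_single hin, hpderiv]
  have hsub : smoothGerm f hf - smoothGerm _ hin ∈ maximalIdeal n ^ (d + 1 + 1) :=
    smoothGerm_mem_maximalIdeal_pow (hf.sub hin) (isBigO_sub_inPart hf hO)
  rw [milnor, hJ] at hfin
  have := Module.rank_lt_aleph0_iff.1 hfin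
  rw [milnor, milnor, hJ, jacobianIdeal_eq_span_range_single hf]
  refine isCoordinateSystem_coordGerm.rank_quotient_span_eq (d := d) (fun i => hQ.pderiv)
    fun i => ?_
  rw [← hpderiv, ← map_sub]
  exact derivation_apply_mem_pow _ _ hsub

/-- Precomposition of germs with a linear isomorphism, as an automorphism of `E_n`. -/
def pullback (A : Eucl n ≃L[ℝ] Eucl n) : smoothGerms n ≃ₐ[ℝ] smoothGerms n :=
  let comp (B : Eucl n ≃L[ℝ] Eucl n) (a : smoothGerms n) : smoothGerms n :=
    ⟨a.1.compTendsto B (B.continuous.tendsto' 0 0 (map_zero B)), by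
      obtain ⟨f, hf, rfl⟩ := exists_eq_smoothGerm a
      exact ⟨f ∘ B, hf.comp B.contDiff, rfl⟩⟩
  have comp_comp (B C : Eucl n ≃L[ℝ] Eucl n) (h : ∀ x, C (B x) = x) (a) :
      comp B (comp C a) = a := by
    obtain ⟨f, hf, rfl⟩ := exists_eq_smoothGerm a
    exact Subtype.ext (congrArg Germ.ofFun (funext fun x => congrArg f (h x)))
  { toFun := comp A
    invFun := comp A.symm
    left_inv := comp_comp _ _ A.apply_symm_apply
    right_inv := comp_comp _ _ A.symm_apply_apply
    map_add' a b := by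
      obtain ⟨f, hf, rfl⟩ := exists_eq_smoothGerm a
      obtain ⟨g, hg, rfl⟩ := exists_eq_smoothGerm b
      rfl
    map_mul' a b := by
      obtain ⟨f, hf, rfl⟩ := exists_eq_smoothGerm a
      obtain ⟨g, hg, rfl⟩ := exists_eq_smoothGerm b
      rfl
    commutes' c := Subtype.ext <| by
      change (algebraMap ℝ (smoothGerms n) c).1.compTendsto A
        (A.continuous.tendsto' 0 0 (map_zero A)) = _
      rw [coe_algebraMap]
      rfl }

lemma dirDeriv_smoothGerm_comp {g : Eucl n → ℝ} (hg : ContDiff ℝ (⊤ : ℕ∞) g)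
    (A : Eucl n ≃L[ℝ] Eucl n) (w : Eucl n) :
    dirDeriv w (smoothGerm (g ∘ A) (hg.comp A.contDiff)) =
      pullback A (dirDeriv (A w) (smoothGerm g hg)) := by
  refine Subtype.ext (congrArg Germ.ofFun (funext fun x => ?_))
  change fderiv ℝ (g ∘ A) x w = fderiv ℝ g (A x) (A w)
  rw [fderiv_comp x (hg.differentiable (by simp) _) A.differentiableAt, A.fderiv]
  rfl

lemma jacobianIdeal_comp {g : Eucl n → ℝ} (hg : ContDiff ℝ (⊤ : ℕ∞) g)
    (A : Eucl n ≃L[ℝ] Eucl n) :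
    jacobianIdeal n (g ∘ A) = (jacobianIdeal n g).map (pullback A : smoothGerms n →+* _) := by
  rw [jacobianIdeal_eq_span_range hg, Ideal.map_span, ← range_comp,
    jacobianIdeal_eq_span_range (hg.comp A.contDiff)]
  simp only [dirDeriv_smoothGerm_comp hg]
  exact congrArg Ideal.span (A.surjective.range_comp
    fun w => pullback A (dirDeriv w (smoothGerm g hg)))

lemma milnor_comp {g : Eucl n → ℝ} (hg : ContDiff ℝ (⊤ : ℕ∞) g) (A : Eucl n ≃L[ℝ] Eucl n) :
    milnor n (g ∘ A) = milnor n g :=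
  (Ideal.quotientEquivAlg _ _ (pullback A) (jacobianIdeal_comp hg A)).toLinearEquiv.rank_eq.symm

end Milnor

section OrderAndInitialPart

lemma isBigO_of_hasOrderAt {f : V → ℝ} (hf : ContDiff ℝ (⊤ : ℕ∞) f) (hf0 : f 0 = 0) {m : ℕ}
    (hord : HasOrderAt f 0 m) : f =O[𝓝 0] fun x => ‖x‖ ^ m := by
  refine isBigO_of_forall_exists_tendsto hf fun v => ⟨_, tendsto_inv_smul_smul v, ?_⟩
  obtain rfl | hv := eq_or_ne v 0
  · exact ⟨0, by simp [hf0]⟩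
  · simpa using hord.1 v hv

lemma pos_of_hasOrderAt {f : V → W} (hf : ContinuousAt f 0) (hf0 : f 0 = 0)
    {m : ℕ} (hord : HasOrderAt f 0 m) : 0 < m := by
  obtain ⟨-, v, -, L, hL, hlim⟩ := hord
  refine Nat.pos_of_ne_zero fun hm => hL (tendsto_nhds_unique hlim ?_)
  have hv := hf.tendsto.comp (tendsto_zero_of_tendsto_inv_smul (tendsto_inv_smul_smul v))
  simpa [hm, hf0, Function.comp_def] using hv

lemma tendsto_inv_smul_apply_smul {φ : V → W} {A : V →L[ℝ] W} (hφ0 : φ 0 = 0)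
    (hφ : HasFDerivAt φ A 0) (v : V) :
    Tendsto (fun t : ℝ => t⁻¹ • φ (t • v)) (𝓝[>] 0) (𝓝 (A v)) := by
  simpa [hφ0] using (hφ.hasLineDerivAt v).tendsto_slope_zero_right

/-- A map `φ` fixing the origin, with derivative `A` there, sends the ray `t • v` to a curve with
tangent `A v`, along which `g` takes the values of `f`. -/
lemma isBigO_and_inPart_eq_comp {f g : V → ℝ} (hf : ContDiff ℝ (⊤ : ℕ∞) f)
    (hg : ContDiff ℝ (⊤ : ℕ∞) g) {m : ℕ} (hO : f =O[𝓝 0] fun x => ‖x‖ ^ m)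
    {φ : V → V} {A : V ≃L[ℝ] V} (hφ0 : φ 0 = 0)
    (hφ : HasFDerivAt φ (A : V →L[ℝ] V) 0) (hfg : ∀ᶠ x in 𝓝 0, f x = g (φ x)) :
    g =O[𝓝 0] (fun x => ‖x‖ ^ m) ∧ inPart f m = inPart g m ∘ A := by
  have hcurve := tendsto_inv_smul_apply_smul hφ0 hφ
  have hlim (v : V) :
      Tendsto (fun t : ℝ => (t ^ m)⁻¹ • g (φ (t • v))) (𝓝[>] 0) (𝓝 (inPart f m v)) := by
    refine (tendsto_inv_pow_smul_comp hf hO (tendsto_inv_smul_smul v)).congr' ?_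
    filter_upwards [(tendsto_zero_of_tendsto_inv_smul (tendsto_inv_smul_smul v)).eventually hfg]
      with t ht
    rw [ht]
  have hgO : g =O[𝓝 0] fun x => ‖x‖ ^ m := by
    refine isBigO_of_forall_exists_tendsto hg fun w => ⟨_, ?_, _, hlim (A.symm w)⟩
    simpa using hcurve (A.symm w)
  exact ⟨hgO, funext fun v =>
    tendsto_nhds_unique (hlim v) (tendsto_inv_pow_smul_comp hg hgO (hcurve v))⟩

lemma exists_hasFDerivAt_of_isCkDiffeoGermAt {n : ℕ} {k : ℕ∞} (hk : k ≠ 0)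
    {φ : Eucl n → Eucl n} (hφ : IsCkDiffeoGermAt k φ) :
    ∃ A : Eucl n ≃L[ℝ] Eucl n, HasFDerivAt φ (A : Eucl n →L[ℝ] Eucl n) 0 := by
  obtain ⟨hφ0, U, V, hU, hV, h0U, h0V, -, hφU, ψ, hψV, hψφ, hφψ⟩ := hφ
  have hk : (k : WithTop ℕ∞) ≠ 0 := by exact_mod_cast hk
  have hψ0 : ψ 0 = 0 := by simpa only [hφ0] using hψφ 0 h0U
  have hφd : HasFDerivAt φ (fderiv ℝ φ 0) 0 :=
    ((hφU.contDiffAt (hU.mem_nhds h0U)).differentiableAt hk).hasFDerivAt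
  have hψd : HasFDerivAt ψ (fderiv ℝ ψ 0) 0 :=
    ((hψV.contDiffAt (hV.mem_nhds h0V)).differentiableAt hk).hasFDerivAt
  have hleft : (fderiv ℝ ψ 0).comp (fderiv ℝ φ 0) = .id ℝ (Eucl n) :=
    (HasFDerivAt.comp 0 (hφ0.symm ▸ hψd) hφd).unique
      ((hasFDerivAt_id 0).congr_of_eventuallyEq (mem_of_superset (hU.mem_nhds h0U) hψφ))
  have hright : (fderiv ℝ φ 0).comp (fderiv ℝ ψ 0) = .id ℝ (Eucl n) :=
    (HasFDerivAt.comp 0 (hψ0.symm ▸ hφd) hψd).unique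
      ((hasFDerivAt_id 0).congr_of_eventuallyEq (mem_of_superset (hV.mem_nhds h0V) hφψ))
  exact ⟨.equivOfInverse _ _ (DFunLike.congr_fun hleft) (DFunLike.congr_fun hright), hφd⟩

end OrderAndInitialPart

end MilnorNumber

open MilnorNumber in
theorem milnor_invariant_of_C1_equiv_general {n : ℕ} (f g : Eucl n → ℝ)
    (hf : ContDiff ℝ (⊤ : ℕ∞) f) (hg : ContDiff ℝ (⊤ : ℕ∞) g) (hf0 : f 0 = 0)
    (m : ℕ) (hord : HasOrderAt f 0 (m : ℝ))
    (hiso : milnor n (inPart f m) < Cardinal.aleph0)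
    (φ : Eucl n → Eucl n) (A : Eucl n ≃L[ℝ] Eucl n) (hφ0 : φ 0 = 0)
    (hφ : HasFDerivAt φ (A : Eucl n →L[ℝ] Eucl n) 0)
    (hfg : ∀ᶠ x in 𝓝 (0 : Eucl n), f x = g (φ x)) :
    milnor n f = milnor n g := by
  obtain ⟨d, rfl⟩ : ∃ d, m = d + 1 :=
    Nat.exists_eq_add_one.2 (pos_of_hasOrderAt hf.continuous.continuousAt hf0 hord)
  have hfO := isBigO_of_hasOrderAt hf hf0 hord
  obtain ⟨hgO, hin⟩ := isBigO_and_inPart_eq_comp hf hg hfO hφ0 hφ hfg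
  have hμ : milnor n (inPart f (d + 1)) = milnor n (inPart g (d + 1)) := by
    rw [hin, milnor_comp (contDiff_inPart g (d + 1))]
  calc milnor n f = milnor n (inPart f (d + 1)) := milnor_eq_milnor_inPart hf hfO hiso
    _ = milnor n (inPart g (d + 1)) := hμ
    _ = milnor n g := (milnor_eq_milnor_inPart hg hgO (hμ ▸ hiso)).symm

/-- if `f` is a `C^∞` germ of finite order whose initial part has an
algebraically isolated singularity at the origin and `f`, `g` are `R`-`C^1` equivalent,
then `μ(f) = μ(g)`. -/
theorem milnor_invariant_of_C1_equiv {n : ℕ} (f g : Eucl n → ℝ)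
    (hf : ContDiff ℝ (⊤ : ℕ∞) f) (hg : ContDiff ℝ (⊤ : ℕ∞) g)
    (hf0 : f 0 = 0) (hg0 : g 0 = 0)
    (m : ℕ) (hord : HasOrderAt f 0 (m : ℝ))
    (hiso : milnor n (inPart f m) < Cardinal.aleph0)
    (hequiv : ∃ φ : Eucl n → Eucl n, IsCkDiffeoGermAt 1 φ ∧
      ∀ᶠ x in 𝓝 (0 : Eucl n), f x = g (φ x)) :
    milnor n f = milnor n g := by
  obtain ⟨φ, hφ, hfg⟩ := hequiv
  obtain ⟨A, hA⟩ := MilnorNumber.exists_hasFDerivAt_of_isCkDiffeoGermAt one_ne_zero hφ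
  exact milnor_invariant_of_C1_equiv_general f g hf hg hf0 m hord hiso φ A hφ.1 hA hfg
end
end
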